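/- arXiv:0911.3810 — 2 statements merged into one kernel-verified Lean document; each statement's English description precedes it below -/
import Mathlib

section
/- Let C_ℓ denote the cycle with ℓ edges, where ℓ ≥ 3. For every function N : ℕ → ℕ with n^{1+1/ℓ} = o(N(n)) and N(n) ≤ n(n−1)/2 for all n, and for every sequence of online Painter strategies with 2 colors (one for each board size n), the probability that the board G_{N(n)} of the online C_ℓ-avoidance game with 2 colors on n vertices contains a monochromatic copy of C_ℓ tends to 1 as n → ∞. -/
open SimpleGraph Filter Asymptotics
open scoped Classical

/-- A history of the game: the sequence of edges presented so far, together with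
the colors (elements of `Fin r`, representing the colors `1,…,r`) they received. -/
abbrev EdgeHistory (V : Type) (r : ℕ) := List (Sym2 V × Fin r)

/-- A Painter strategy on vertex type `V` with `r` colors: a function assigning a color
to every pair (history, new edge). -/
abbrev PainterStrategy (V : Type) (r : ℕ) := EdgeHistory V r → Sym2 V → Fin r

/-- Auxiliary function: run a Painter strategy on a list of presented edges,
extending the given history. -/
def runPainterAux {V : Type} {r : ℕ} (π : PainterStrategy V r) :
    EdgeHistory V r → List (Sym2 V) → EdgeHistory V r
  | h, [] => h
  | h, e :: es => runPainterAux π (h ++ [(e, π h e)]) es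

/-- The colored history obtained by coloring the edges of `l` successively
according to the Painter strategy `π`. -/
def runPainter {V : Type} {r : ℕ} (π : PainterStrategy V r) (l : List (Sym2 V)) :
    EdgeHistory V r :=
  runPainterAux π [] l

/-- `G` contains a copy of `F`, i.e. a subgraph isomorphic to `F`. -/
def IsCopy {α β : Type} (F : SimpleGraph α) (G : SimpleGraph β) : Prop :=
  ∃ f : α ↪ β, ∀ u v : α, F.Adj u v → G.Adj (f u) (f v)

/-- The graph formed by the edges of color `c` in the history `h`. -/
def colorGraph {V : Type} {r : ℕ} (h : EdgeHistory V r) (c : Fin r) : SimpleGraph V :=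
  SimpleGraph.fromEdgeSet {e | (e, c) ∈ h}

/-- The history `h` contains a monochromatic copy of `F`. -/
def HasMonoCopy {α V : Type} {r : ℕ} (F : SimpleGraph α) (h : EdgeHistory V r) : Prop :=
  ∃ c : Fin r, IsCopy F (colorGraph h c)

/-- The number of edges of `G` lying entirely within the vertex set `S`. -/
noncomputable def edgesWithin {V : Type} (G : SimpleGraph V) (S : Set V) : ℕ :=
  (G.edgeSet ∩ {e | ∀ v ∈ e, v ∈ S}).ncard

/-- `m(G) ≤ d`: every subgraph `H` of `G` with at least one vertex satisfies `e_H ≤ d · v_H`. -/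
def DensityLE {V : Type} (G : SimpleGraph V) (d : ℝ) : Prop :=
  ∀ S : Finset V, S.Nonempty → (edgesWithin G (↑S : Set V) : ℝ) ≤ d * (S.card : ℝ)

/-- `G` contains no cycle and every connected component of `G` has at most `k` edges
(equivalently, `G` is acyclic and contains no connected subgraph with more than `k` edges). -/
def TreeSizeLE {V : Type} (G : SimpleGraph V) (k : ℕ) : Prop :=
  G.IsAcyclic ∧ ∀ S : Set V, (G.induce S).Connected → edgesWithin G S ≤ k

/-- A legal sequence of moves for Builder: distinct non-loop edges. -/
def ValidEdgeSeq {V : Type} (l : List (Sym2 V)) : Prop :=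
  l.Nodup ∧ ∀ e ∈ l, ¬ e.IsDiag

/-- The (uncolored) board formed by a list of edges. -/
def boardOf {V : Type} (l : List (Sym2 V)) : SimpleGraph V :=
  SimpleGraph.fromEdgeSet {e | e ∈ l}

/-- Builder has a winning strategy in the deterministic `F`-avoidance game with `r` colors
and density restriction `d`. -/
def BuilderWinsDensity {α : Type} (F : SimpleGraph α) (r : ℕ) (d : ℝ) : Prop :=
  ∃ a : ℕ, ∀ π : PainterStrategy (Fin a) r, ∃ l : List (Sym2 (Fin a)),
    ValidEdgeSeq l ∧ (∀ i : ℕ, DensityLE (boardOf (l.take i)) d) ∧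
    HasMonoCopy F (runPainter π l)

/-- Builder has a winning strategy in the deterministic `F`-avoidance game with `r` colors
and tree size restriction `k`. -/
def BuilderWinsTree {α : Type} (F : SimpleGraph α) (r k : ℕ) : Prop :=
  ∃ a : ℕ, ∀ π : PainterStrategy (Fin a) r, ∃ l : List (Sym2 (Fin a)),
    ValidEdgeSeq l ∧ (∀ i : ℕ, TreeSizeLE (boardOf (l.take i)) k) ∧
    HasMonoCopy F (runPainter π l)

/-- The Painter strategy `π` on `a` vertices never creates a monochromatic copy of `F`
against any Builder play obeying the tree size restriction `k`. -/
def PainterAvoidsTree {α : Type} (F : SimpleGraph α) (r k a : ℕ)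
    (π : PainterStrategy (Fin a) r) : Prop :=
  ∀ l : List (Sym2 (Fin a)), ValidEdgeSeq l →
    (∀ i : ℕ, TreeSizeLE (boardOf (l.take i)) k) →
    ¬ HasMonoCopy F (runPainter π l)

/-- Painter has a winning strategy in the deterministic `F`-avoidance game with `r` colors
and tree size restriction `k`. -/
def PainterWinsTree {α : Type} (F : SimpleGraph α) (r k : ℕ) : Prop :=
  ∀ a : ℕ, ∃ π : PainterStrategy (Fin a) r, PainterAvoidsTree F r k a π

/-- A sequence of `N` distinct non-loop edges on `n` vertices. -/
def ValidSeqFun {n N : ℕ} (f : Fin N → Sym2 (Fin n)) : Prop :=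
  Function.Injective f ∧ ∀ i, ¬ (f i).IsDiag

/-- The probability (with respect to the uniformly random order in which the `N` distinct
edges of the random process on `n` vertices appear) of the event `P`. -/
noncomputable def onlineProb (n N : ℕ) (P : (Fin N → Sym2 (Fin n)) → Prop) : ℝ :=
  (Set.ncard {f : Fin N → Sym2 (Fin n) | ValidSeqFun f ∧ P f} : ℝ) /
  (Set.ncard {f : Fin N → Sym2 (Fin n) | ValidSeqFun f} : ℝ)

/-- Event: playing the online strategy `π` on the random edge sequence `f` produces
a monochromatic copy of `F`. -/
def OnlineMonoCopy {α : Type} (F : SimpleGraph α) {r n N : ℕ}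
    (π : PainterStrategy (Fin n) r) (f : Fin N → Sym2 (Fin n)) : Prop :=
  HasMonoCopy F (runPainter π (List.ofFn f))

/-!
Write `ℓ = m + 1` and split the draws into `m + 2` rounds of equal length. In the first round one
colour is used on at least half of the edges, so by the spectral lower bound on closed walks of even
length it contains, up to a constant factor, as many cycles of length `(m + 1) * m` as the whole
board. Cut such a cycle into `m + 1` consecutive paths with `m` edges; the chords joining the ends
of these paths form a cycle of length `m + 1`. The remaining rounds present one chord each, and by
the second moment method some cycle has all its chords presented. If one of them gets the colour of
the cycle it closes its path to a monochromatic copy of `C_ℓ`; otherwise the chords all have the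
other colour and form such a copy themselves. In the second moment the pairs of cycles sharing a
chord are negligible because `N` is much larger than `n ^ (1 + 1 / ℓ)`. All this is done for
independent uniform draws, from which the process arises by skipping repetitions.
-/

open Finset
open scoped BigOperators

section UniformProbability

variable {Ω Ψ : Type*} [Fintype Ω] [Fintype Ψ]

/-- The probability of the event `P` under the uniform distribution on the finite type `Ω`
(it is `0` on the empty type). -/
noncomputable def uniformProb (P : Ω → Prop) : ℝ := #{ω | P ω} / Fintype.card Ω

lemma uniformProb_eq_expect (P : Ω → Prop) [DecidablePred P] :
    uniformProb P = 𝔼 ω, if P ω then 1 else 0 := by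
  rw [Fintype.expect_eq_sum_div_card, sum_boole, uniformProb]
  congr!

lemma uniformProb_nonneg (P : Ω → Prop) : 0 ≤ uniformProb P := by
  unfold uniformProb; positivity

lemma uniformProb_le_one (P : Ω → Prop) : uniformProb P ≤ 1 :=
  div_le_one_of_le₀ (mod_cast card_le_univ _) (by positivity)

lemma uniformProb_mem (s : Finset Ω) : uniformProb (· ∈ s) = #s / Fintype.card Ω := by
  simp [uniformProb]

lemma uniformProb_mono {P Q : Ω → Prop} (h : ∀ ω, P ω → Q ω) :
    uniformProb P ≤ uniformProb Q := by
  unfold uniformProb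
  gcongr with ω
  exact h ω

lemma uniformProb_exists_le {ι : Type*} [Fintype ι] (P : ι → Ω → Prop) :
    uniformProb (fun ω => ∃ i, P i ω) ≤ ∑ i, uniformProb (P i) := by
  have : ({ω | ∃ i, P i ω} : Finset Ω) = univ.biUnion fun i => {ω | P i ω} := by ext; simp
  simp only [uniformProb, this, ← sum_div]
  gcongr
  exact_mod_cast card_biUnion_le

lemma uniformProb_or_add_uniformProb_and (P Q : Ω → Prop) :
    uniformProb (fun ω => P ω ∨ Q ω) + uniformProb (fun ω => P ω ∧ Q ω) =
      uniformProb P + uniformProb Q := by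
  simp only [uniformProb, filter_or, filter_and, ← add_div]
  norm_cast
  rw [card_union_add_card_inter]

lemma uniformProb_or_le (P Q : Ω → Prop) :
    uniformProb (fun ω => P ω ∨ Q ω) ≤ uniformProb P + uniformProb Q := by
  linarith [uniformProb_or_add_uniformProb_and P Q, uniformProb_nonneg fun ω => P ω ∧ Q ω]

lemma uniformProb_not [Nonempty Ω] (P : Ω → Prop) :
    uniformProb (fun ω => ¬ P ω) = 1 - uniformProb P := by
  simp only [uniformProb, filter_not]
  rw [cast_card_sdiff (filter_subset _ _), card_univ, sub_div, div_self (by simp)]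

lemma uniformProb_congr {P Q : Ω → Prop} (h : ∀ ω, P ω ↔ Q ω) : uniformProb P = uniformProb Q :=
  congrArg uniformProb (funext fun ω => propext (h ω))

lemma uniformProb_comp_equiv (e : Ω ≃ Ψ) (P : Ψ → Prop) :
    uniformProb (fun ω => P (e ω)) = uniformProb P := by
  simp only [uniformProb_eq_expect]
  exact Fintype.expect_equiv e _ _ fun _ => rfl

lemma uniformProb_prod (P : Ω × Ψ → Prop) :
    uniformProb P = 𝔼 a, uniformProb fun b => P (a, b) := by
  simp only [uniformProb_eq_expect]
  exact expect_product univ univ fun ω => if P ω then (1 : ℝ) else 0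

lemma uniformProb_prod_le [Nonempty Ψ] {P : Ω × Ψ → Prop} {B : Ω → Prop} {f : Ω → ℝ}
    (hf : ∀ a, 0 ≤ f a) (h : ∀ a, ¬ B a → uniformProb (fun b => P (a, b)) ≤ f a) :
    uniformProb P ≤ uniformProb B + 𝔼 a, f a := by
  rw [uniformProb_prod, uniformProb_eq_expect B, ← expect_add_distrib]
  refine expect_le_expect fun a _ => ?_
  by_cases ha : B a
  · rw [if_pos ha]
    linarith [uniformProb_le_one fun b => P (a, b), hf a]
  · rw [if_neg ha, zero_add]
    exact h a ha

lemma uniformProb_pi_forall {ι : Type*} [Fintype ι] [DecidableEq ι] {α : ι → Type*}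
    [∀ i, Fintype (α i)] (P : ∀ i, α i → Prop) :
    uniformProb (fun g : ∀ i, α i => ∀ i, P i (g i)) = ∏ i, uniformProb (P i) := by
  have : (({g | ∀ i, P i (g i)} : Finset (∀ i, α i))) = Fintype.piFinset fun i => {a | P i a} := by
    ext; simp
  simp only [uniformProb, prod_div_distrib, this, Fintype.card_piFinset, Fintype.card_pi,
    Nat.cast_prod]

lemma expect_sum_filter {ι : Type*} (s : Finset ι) (w : ι → ℝ) (P : ι → Ω → Prop)
    [∀ ω, DecidablePred fun i => P i ω] :
    𝔼 ω, ∑ i ∈ s with P i ω, w i = ∑ i ∈ s, w i * uniformProb (P i) := by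
  simp only [sum_filter, expect_sum_comm, uniformProb_eq_expect, mul_expect, mul_ite, mul_one,
    mul_zero]

lemma expect_card_filter {ι : Type*} (s : Finset ι) (P : ι → Ω → Prop)
    [∀ ω, DecidablePred fun i => P i ω] :
    𝔼 ω, (#{i ∈ s | P i ω} : ℝ) = ∑ i ∈ s, uniformProb (P i) := by
  simpa using expect_sum_filter s (fun _ => 1) P

lemma expect_card_filter_sq {ι : Type*} (s : Finset ι) (P : ι → Ω → Prop)
    [∀ ω, DecidablePred fun i => P i ω] :
    𝔼 ω, (#{i ∈ s | P i ω} : ℝ) ^ 2 =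
      ∑ i ∈ s, ∑ j ∈ s, uniformProb fun ω => P i ω ∧ P j ω := by
  rw [← sum_product', ← expect_card_filter (s ×ˢ s) fun z ω => P z.1 ω ∧ P z.2 ω]
  refine expect_congr rfl fun ω _ => ?_
  rw [filter_product (fun i => P i ω) (fun i => P i ω), card_product, sq, Nat.cast_mul]

lemma markov_uniformProb {X : Ω → ℝ} (hX : ∀ ω, 0 ≤ X ω) {a : ℝ} (ha : 0 < a) :
    uniformProb (fun ω => a ≤ X ω) ≤ (𝔼 ω, X ω) / a := by
  rw [le_div_iff₀ ha, uniformProb_eq_expect, expect_mul]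
  refine expect_le_expect fun ω _ => ?_
  split_ifs with h
  · simpa using h
  · simpa using hX ω

lemma chebyshev_uniformProb [Nonempty Ω] {X : Ω → ℝ} {μ v : ℝ} (hμ : 0 < μ)
    (hmean : 𝔼 ω, X ω = μ) (hvar : 𝔼 ω, X ω ^ 2 ≤ μ ^ 2 + v) :
    uniformProb (fun ω => X ω < μ / 2) ≤ 4 * v / μ ^ 2 := by
  have hdev : 𝔼 ω, (X ω - μ) ^ 2 ≤ v := by
    have : 𝔼 ω, (X ω - μ) ^ 2 = 𝔼 ω, X ω ^ 2 - 2 * μ * 𝔼 ω, X ω + μ ^ 2 := by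
      rw [← Fintype.expect_const (ι := Ω) (μ ^ 2), mul_expect, ← expect_sub_distrib,
        ← expect_add_distrib]
      exact expect_congr rfl fun ω _ => by ring
    rw [this, hmean]
    linarith
  calc uniformProb (fun ω => X ω < μ / 2)
      ≤ uniformProb fun ω => (μ / 2) ^ 2 ≤ (X ω - μ) ^ 2 :=
        uniformProb_mono fun ω hω => by nlinarith
    _ ≤ (𝔼 ω, (X ω - μ) ^ 2) / (μ / 2) ^ 2 :=
        markov_uniformProb (fun ω => sq_nonneg _) (by positivity)
    _ ≤ v / (μ / 2) ^ 2 := by gcongr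
    _ = 4 * v / μ ^ 2 := by field_simp; norm_num

end UniformProbability

section HitProbability

/-- The probability that a prescribed element of an `M`-element set occurs among `K` independent
uniform draws. -/
noncomputable def hitProb (K M : ℕ) : ℝ := 1 - (1 - 1 / M) ^ K

lemma hitProb_nonneg (K M : ℕ) : 0 ≤ hitProb K M := by
  have hM : (M : ℝ)⁻¹ ≤ 1 := Nat.cast_inv_le_one M
  have : (0 : ℝ) ≤ (M : ℝ)⁻¹ := by positivity
  rw [hitProb, one_div]
  exact sub_nonneg.2 (pow_le_one₀ (by linarith) (by linarith))

lemma hitProb_le (K M : ℕ) : hitProb K M ≤ K / M := by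
  have hM : (1 : ℝ) / M ≤ 1 := one_div (M : ℝ) ▸ Nat.cast_inv_le_one M
  have := one_add_mul_le_pow (a := -(1 / M : ℝ)) (by linarith) K
  rw [hitProb, div_eq_mul_one_div (K : ℝ), sub_eq_add_neg 1 (1 / M : ℝ)]
  linarith

lemma le_hitProb {K M : ℕ} (hKM : K ≤ M) : (K / M : ℝ) / 2 ≤ hitProb K M := by
  have hM : (1 : ℝ) / M ≤ 1 := one_div (M : ℝ) ▸ Nat.cast_inv_le_one M
  have hp0 : (0 : ℝ) ≤ K / M := by positivity
  have hp1 : (K / M : ℝ) ≤ 1 := div_le_one_of_le₀ (mod_cast hKM) (by positivity)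
  have hexp : (1 - 1 / M : ℝ) ^ K ≤ (Real.exp (K / M))⁻¹ := by
    calc (1 - 1 / M : ℝ) ^ K ≤ Real.exp (-(1 / M)) ^ K :=
          pow_le_pow_left₀ (by linarith) (by linarith [Real.add_one_le_exp (-(1 / M : ℝ))]) K
      _ = (Real.exp (K / M))⁻¹ := by
          rw [← Real.exp_nat_mul, ← Real.exp_neg]; ring_nf
  have hinv : (Real.exp (K / M))⁻¹ ≤ (1 + K / M : ℝ)⁻¹ :=
    inv_anti₀ (by positivity) (by linarith [Real.add_one_le_exp (K / M : ℝ)])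
  have hlin : (1 + K / M : ℝ)⁻¹ ≤ 1 - (K / M : ℝ) / 2 :=
    inv_le_of_inv_le₀ (by linarith) <| by
      rw [inv_le_iff_one_le_mul₀ (by linarith)]; nlinarith
  rw [hitProb]
  linarith

variable {ι E : Type*} [Fintype ι] [DecidableEq E]

/-- The excess, over the independent case, in the bound for the probability that two families
`f`, `f'` of targets are both hit, one target per round, when each single target is hit with
probability `p`. It vanishes unless some round has the same target in both families. -/
noncomputable def overlapWeight (p : ℝ) (f f' : ι → E) : ℝ :=
  if ∃ j, f j = f' j then p ^ (Fintype.card ι + hammingDist f f') else 0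

lemma overlapWeight_nonneg {p : ℝ} (hp : 0 ≤ p) (f f' : ι → E) : 0 ≤ overlapWeight p f f' := by
  unfold overlapWeight
  positivity

lemma hitProb_pow_add_hammingDist_le (K M : ℕ) (f f' : ι → E) :
    hitProb K M ^ (Fintype.card ι + hammingDist f f') ≤
      (hitProb K M ^ Fintype.card ι) ^ 2 + overlapWeight (K / M) f f' := by
  by_cases h : ∃ j, f j = f' j
  · rw [overlapWeight, if_pos h]
    have := pow_le_pow_left₀ (hitProb_nonneg K M) (hitProb_le K M)
      (Fintype.card ι + hammingDist f f')
    linarith [sq_nonneg (hitProb K M ^ Fintype.card ι)]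
  · have hdist : hammingDist f f' = Fintype.card ι := by
      push Not at h
      simp [hammingDist, h]
    rw [overlapWeight, if_neg h, hdist, add_zero, pow_add, sq]

end HitProbability

section RandomDraws

variable {κ E : Type*} [Fintype κ] [DecidableEq κ] [Fintype E]

lemma uniformProb_eq_const (e : E) : uniformProb (fun a => a = e) = 1 / Fintype.card E := by
  simpa using uniformProb_mem {e}

lemma uniformProb_forall_apply_eq_le (T : Finset E) (φ : T → κ) :
    uniformProb (fun g : κ → E => ∀ t, g (φ t) = t) ≤ (1 / Fintype.card E : ℝ) ^ #T := by
  by_cases hφ : Function.Injective φ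
  · have hprob (t : T) : uniformProb (fun a : E => ∀ s, φ s = φ t → a = s) =
        1 / Fintype.card E := by
      rw [← uniformProb_eq_const t.1]
      exact uniformProb_congr fun a => ⟨fun h => h t rfl, fun h s hs => by rw [h, hφ hs]⟩
    calc uniformProb (fun g : κ → E => ∀ t, g (φ t) = t)
        ≤ uniformProb (fun g : κ → E => ∀ i, ∀ t, φ t = i → g i = t) :=
          uniformProb_mono fun g hg i t hi => by rw [← hi, hg t]
      _ = ∏ i, uniformProb (fun a : E => ∀ t, φ t = i → a = t) :=
          uniformProb_pi_forall fun i (a : E) => ∀ t, φ t = i → a = t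
      _ ≤ ∏ i ∈ univ.image φ, uniformProb (fun a : E => ∀ t, φ t = i → a = t) :=
          prod_le_prod_of_subset_of_le_one (subset_univ _) (fun _ _ => uniformProb_nonneg _)
            fun _ _ _ => uniformProb_le_one _
      _ = (1 / Fintype.card E : ℝ) ^ #T := by
          rw [prod_image hφ.injOn, prod_congr rfl fun t _ => hprob t]
          simp
  · have hnever : uniformProb (fun g : κ → E => ∀ t, g (φ t) = t) = 0 := by
      have (g : κ → E) : ¬ ∀ t, g (φ t) = t := fun hg =>
        hφ fun s t hst => Subtype.ext (by rw [← hg s, ← hg t, hst])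
      rw [uniformProb_congr fun g => iff_false_intro (this g)]
      simp [uniformProb]
    rw [hnever]
    positivity

lemma uniformProb_forall_mem_exists_apply_eq_le (T : Finset E) :
    uniformProb (fun g : κ → E => ∀ e ∈ T, ∃ i, g i = e) ≤
      (Fintype.card κ / Fintype.card E : ℝ) ^ #T := by
  calc uniformProb (fun g : κ → E => ∀ e ∈ T, ∃ i, g i = e)
      ≤ uniformProb (fun g : κ → E => ∃ φ : T → κ, ∀ t, g (φ t) = t) :=
        uniformProb_mono fun g hg => Classical.skolem.1 fun t : T => hg t t.2
    _ ≤ ∑ φ : T → κ, uniformProb (fun g : κ → E => ∀ t, g (φ t) = t) :=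
        uniformProb_exists_le _
    _ ≤ ∑ _φ : T → κ, (1 / Fintype.card E : ℝ) ^ #T :=
        sum_le_sum fun φ _ => uniformProb_forall_apply_eq_le T φ
    _ = (Fintype.card κ / Fintype.card E : ℝ) ^ #T := by
        simp [div_eq_mul_inv, mul_pow]

lemma uniformProb_forall_apply_notMem [Nonempty E] (s : Finset E) :
    uniformProb (fun g : κ → E => ∀ i, g i ∉ s) =
      (1 - #s / Fintype.card E : ℝ) ^ Fintype.card κ := by
  rw [uniformProb_pi_forall fun _ a => a ∉ s, prod_const, card_univ, uniformProb_not]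
  exact congrArg (fun r => (1 - r) ^ Fintype.card κ) (uniformProb_mem s)

lemma uniformProb_exists_apply_eq (e : E) :
    uniformProb (fun g : κ → E => ∃ i, g i = e) = hitProb (Fintype.card κ) (Fintype.card E) := by
  have : Nonempty E := ⟨e⟩
  have := uniformProb_forall_apply_notMem (κ := κ) {e}
  simp only [mem_singleton, card_singleton, Nat.cast_one] at this
  rw [hitProb, ← this, ← uniformProb_not]
  simp

lemma uniformProb_exists_apply_eq_and_le {e e' : E} (he : e ≠ e') :
    uniformProb (fun g : κ → E => (∃ i, g i = e) ∧ ∃ i, g i = e') ≤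
      hitProb (Fintype.card κ) (Fintype.card E) ^ 2 := by
  have : Nonempty E := ⟨e⟩
  set a : ℝ := (1 - 1 / Fintype.card E) ^ Fintype.card κ with ha
  have hmiss (e : E) : uniformProb (fun g : κ → E => ¬ ∃ i, g i = e) = a := by
    rw [uniformProb_not, uniformProb_exists_apply_eq, hitProb, sub_sub_cancel]
  have hmissBoth : uniformProb (fun g : κ → E => (¬ ∃ i, g i = e) ∧ ¬ ∃ i, g i = e') ≤ a ^ 2 := by
    have hcard : (2 : ℝ) ≤ Fintype.card E := mod_cast Fintype.one_lt_card_iff.2 ⟨e, e', he⟩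
    calc uniformProb (fun g : κ → E => (¬ ∃ i, g i = e) ∧ ¬ ∃ i, g i = e')
        = uniformProb (fun g : κ → E => ∀ i, g i ∉ ({e, e'} : Finset E)) :=
          uniformProb_congr fun g => by simp [forall_and]
      _ = (1 - 2 / Fintype.card E : ℝ) ^ Fintype.card κ := by
          rw [uniformProb_forall_apply_notMem, card_pair he, Nat.cast_two]
      _ ≤ ((1 - 1 / Fintype.card E : ℝ) ^ 2) ^ Fintype.card κ := by
          refine pow_le_pow_left₀ (sub_nonneg.2 (div_le_one_of_le₀ hcard (by positivity))) ?_ _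
          have := sq_nonneg (1 / Fintype.card E : ℝ)
          linear_combination this
      _ = a ^ 2 := by rw [ha, pow_right_comm]
  have hsplit := uniformProb_or_add_uniformProb_and
    (fun g : κ → E => ¬ ∃ i, g i = e) (fun g => ¬ ∃ i, g i = e')
  simp only [← not_and_or] at hsplit
  rw [uniformProb_not (fun g : κ → E => (∃ i, g i = e) ∧ ∃ i, g i = e'), hmiss, hmiss] at hsplit
  rw [hitProb, ← ha]
  linarith

section SecondMoment

variable {ι : Type*} [Fintype ι] [DecidableEq ι]

lemma uniformProb_forall_exists_apply_eq (f : ι → E) :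
    uniformProb (fun g : ι → κ → E => ∀ j, ∃ i, g j i = f j) =
      hitProb (Fintype.card κ) (Fintype.card E) ^ Fintype.card ι := by
  rw [uniformProb_pi_forall fun j (h : κ → E) => ∃ i, h i = f j]
  simp [uniformProb_exists_apply_eq]

variable [DecidableEq E]

lemma uniformProb_forall_exists_apply_eq_and_le (f f' : ι → E) :
    uniformProb (fun g : ι → κ → E => (∀ j, ∃ i, g j i = f j) ∧ ∀ j, ∃ i, g j i = f' j) ≤
      hitProb (Fintype.card κ) (Fintype.card E) ^ (Fintype.card ι + hammingDist f f') := by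
  set q := hitProb (Fintype.card κ) (Fintype.card E)
  calc uniformProb (fun g : ι → κ → E => (∀ j, ∃ i, g j i = f j) ∧ ∀ j, ∃ i, g j i = f' j)
      = uniformProb (fun g : ι → κ → E => ∀ j, (∃ i, g j i = f j) ∧ ∃ i, g j i = f' j) := by
        simp only [forall_and]
    _ = ∏ j, uniformProb (fun h : κ → E => (∃ i, h i = f j) ∧ ∃ i, h i = f' j) :=
        uniformProb_pi_forall fun j (h : κ → E) => (∃ i, h i = f j) ∧ ∃ i, h i = f' j
    _ ≤ ∏ j, q * (if f j ≠ f' j then q else 1) := by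
        refine prod_le_prod (fun _ _ => uniformProb_nonneg _) fun j _ => ?_
        split_ifs with hj
        · exact (uniformProb_exists_apply_eq_and_le hj).trans_eq (sq q)
        · rw [not_not.1 hj]
          simp [uniformProb_exists_apply_eq, q]
    _ = q ^ (Fintype.card ι + hammingDist f f') := by
        rw [prod_mul_distrib, prod_ite, hammingDist, pow_add]
        simp

variable {X : Type*} (C : Finset X) (ε : X → ι → E)

lemma expect_card_hit :
    𝔼 g : ι → κ → E, (#{x ∈ C | ∀ j, ∃ i, g j i = ε x j} : ℝ) =
      #C * hitProb (Fintype.card κ) (Fintype.card E) ^ Fintype.card ι := by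
  rw [expect_card_filter C fun x (g : ι → κ → E) => ∀ j, ∃ i, g j i = ε x j]
  simp [uniformProb_forall_exists_apply_eq]

lemma expect_card_hit_sq_le :
    𝔼 g : ι → κ → E, (#{x ∈ C | ∀ j, ∃ i, g j i = ε x j} : ℝ) ^ 2 ≤
      (#C * hitProb (Fintype.card κ) (Fintype.card E) ^ Fintype.card ι) ^ 2 +
        ∑ x ∈ C, ∑ x' ∈ C,
          overlapWeight (Fintype.card κ / Fintype.card E) (ε x) (ε x') := by
  set q := hitProb (Fintype.card κ) (Fintype.card E)
  calc 𝔼 g : ι → κ → E, (#{x ∈ C | ∀ j, ∃ i, g j i = ε x j} : ℝ) ^ 2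
      = ∑ x ∈ C, ∑ x' ∈ C, uniformProb fun g : ι → κ → E =>
          (∀ j, ∃ i, g j i = ε x j) ∧ ∀ j, ∃ i, g j i = ε x' j :=
        expect_card_filter_sq C fun x (g : ι → κ → E) => ∀ j, ∃ i, g j i = ε x j
    _ ≤ ∑ x ∈ C, ∑ x' ∈ C, ((q ^ Fintype.card ι) ^ 2 +
          overlapWeight (Fintype.card κ / Fintype.card E) (ε x) (ε x')) := by
        gcongr with x _ x'
        exact (uniformProb_forall_exists_apply_eq_and_le _ _).trans
          (hitProb_pow_add_hammingDist_le _ _ _ _)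
    _ = _ := by
        simp only [sum_add_distrib, sum_const, nsmul_eq_mul]
        ring

lemma uniformProb_card_hit_lt_le (hC : C.Nonempty) (hκ : 0 < Fintype.card κ)
    (hE : Fintype.card κ ≤ Fintype.card E) {p : ℝ} (hp : p = Fintype.card κ / Fintype.card E) :
    uniformProb (fun g : ι → κ → E =>
        (#{x ∈ C | ∀ j, ∃ i, g j i = ε x j} : ℝ) < #C * (p / 2) ^ Fintype.card ι / 2) ≤
      4 * (∑ x ∈ C, ∑ x' ∈ C, overlapWeight p (ε x) (ε x')) /
        (#C * (p / 2) ^ Fintype.card ι) ^ 2 := by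
  set q := hitProb (Fintype.card κ) (Fintype.card E)
  have hE0 : 0 < Fintype.card E := hκ.trans_le hE
  have : Nonempty E := Fintype.card_pos_iff.1 hE0
  have : (0 : ℝ) < #C := mod_cast hC.card_pos
  have hp0 : 0 < p := by rw [hp]; positivity
  have hpq : p / 2 ≤ q := hp ▸ le_hitProb hE
  have hμ : (0 : ℝ) < #C * (p / 2) ^ Fintype.card ι := by positivity
  have hμq : (#C * (p / 2) ^ Fintype.card ι : ℝ) ≤ #C * q ^ Fintype.card ι := by gcongr
  have hweight : 0 ≤ ∑ x ∈ C, ∑ x' ∈ C, overlapWeight p (ε x) (ε x') :=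
    sum_nonneg fun _ _ => sum_nonneg fun _ _ => overlapWeight_nonneg hp0.le _ _
  calc uniformProb (fun g : ι → κ → E =>
        (#{x ∈ C | ∀ j, ∃ i, g j i = ε x j} : ℝ) < #C * (p / 2) ^ Fintype.card ι / 2)
      ≤ uniformProb (fun g : ι → κ → E =>
        (#{x ∈ C | ∀ j, ∃ i, g j i = ε x j} : ℝ) < #C * q ^ Fintype.card ι / 2) :=
        uniformProb_mono fun g hg => hg.trans_le (by linarith)
    _ ≤ 4 * (∑ x ∈ C, ∑ x' ∈ C, overlapWeight p (ε x) (ε x')) / (#C * q ^ Fintype.card ι) ^ 2 :=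
        chebyshev_uniformProb (hμ.trans_le hμq) (expect_card_hit C ε)
          (hp ▸ expect_card_hit_sq_le C ε)
    _ ≤ _ := by gcongr

lemma uniformProb_card_range_lt_le (hκ : 0 < Fintype.card κ)
    (hE : Fintype.card κ ≤ Fintype.card E) :
    uniformProb (fun g : κ → E => (#{e | ∃ i, g i = e} : ℝ) < Fintype.card κ / 4) ≤
      16 / Fintype.card κ := by
  set p : ℝ := Fintype.card κ / Fintype.card E with hp
  have hE0 : 0 < Fintype.card E := hκ.trans_le hE
  have : Nonempty E := Fintype.card_pos_iff.1 hE0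
  have hweight (e : E) : ∑ e', overlapWeight p (fun _ : Unit => e) (fun _ => e') = p := by
    have (e' : E) : overlapWeight p (fun _ : Unit => e) (fun _ => e') =
        if e = e' then p else 0 := by
      by_cases h : e = e' <;> simp [overlapWeight, h, hammingDist]
    simp [this]
  have hpE : Fintype.card E * p = Fintype.card κ := by rw [hp]; field_simp
  have := uniformProb_card_hit_lt_le (κ := κ) univ (fun e (_ : Unit) => e) univ_nonempty hκ hE hp
  simp only [hweight, sum_const, nsmul_eq_mul, card_univ, Fintype.card_unit, pow_one, hpE,
    mul_div_assoc', Unique.forall_iff] at this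
  calc uniformProb (fun g : κ → E => (#{e | ∃ i, g i = e} : ℝ) < Fintype.card κ / 4)
      = uniformProb fun g : Unit → κ → E =>
          (#{e | ∃ i, g default i = e} : ℝ) < Fintype.card κ / 2 / 2 := by
        rw [div_div, show (2 : ℝ) * 2 = 4 by norm_num]
        exact (uniformProb_comp_equiv (Equiv.funUnique Unit (κ → E)) fun g =>
          (#{e | ∃ i, g i = e} : ℝ) < Fintype.card κ / 4).symm
    _ ≤ 4 * Fintype.card κ / (Fintype.card κ / 2) ^ 2 := this
    _ = 16 / Fintype.card κ := by field_simp; norm_num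

end SecondMoment

end RandomDraws

lemma uniformProb_eq_expect_smul (G : Type*) {Ω : Type*} [Fintype Ω] [Group G] [Fintype G]
    [MulAction G Ω] (P : Ω → Prop) :
    uniformProb P = 𝔼 ω, uniformProb fun σ : G => P (σ • ω) := by
  simp only [uniformProb_eq_expect]
  rw [expect_comm]
  have (σ : G) : (𝔼 ω, if P (σ • ω) then (1 : ℝ) else 0) = 𝔼 ω, if P ω then 1 else 0 :=
    Fintype.expect_equiv (MulAction.toPerm σ) _ _ fun _ => rfl
  simp only [this, Fintype.expect_const]

section FirstOccurrences

variable {α : Type*} [DecidableEq α]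

/-- The list obtained from `l` by keeping only the first occurrence of every entry. -/
def firstOccurrences (l : List α) : List α := l.reverse.dedup.reverse

lemma mem_firstOccurrences {l : List α} {a : α} : a ∈ firstOccurrences l ↔ a ∈ l := by
  simp [firstOccurrences]

lemma nodup_firstOccurrences (l : List α) : (firstOccurrences l).Nodup :=
  List.nodup_reverse.2 (List.nodup_dedup _)

lemma length_firstOccurrences_le (l : List α) : (firstOccurrences l).length ≤ l.length := by
  simpa [firstOccurrences] using (List.dedup_sublist l.reverse).length_le

lemma firstOccurrences_prefix_append (l₁ l₂ : List α) :
    firstOccurrences l₁ <+: firstOccurrences (l₁ ++ l₂) := by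
  rw [firstOccurrences, firstOccurrences, List.reverse_append, List.dedup_append,
    List.reverse_prefix]
  exact List.suffix_union_right _ _

lemma firstOccurrences_map {β : Type*} [DecidableEq β] {σ : α → β} (hσ : Function.Injective σ)
    (l : List α) : firstOccurrences (l.map σ) = (firstOccurrences l).map σ := by
  simp [firstOccurrences, ← List.map_reverse, List.dedup_map_of_injective hσ]

end FirstOccurrences

section Coupling

lemma exists_perm_prefix_ofFn {E : Type*} {N : ℕ} (f : Fin N ↪ E) {l : List E} (hl : l.Nodup)
    (hlN : l.length ≤ N) : ∃ τ : Equiv.Perm E, l <+: List.ofFn (τ • f) := by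
  have := Equiv.Perm.isMultiplyPretransitive E l.length
  obtain ⟨τ, hτ⟩ := MulAction.exists_smul_eq (Equiv.Perm E) ((Fin.castLEEmb hlN).trans f)
    ⟨l.get, List.nodup_iff_injective_get.1 hl⟩
  refine ⟨τ, List.prefix_iff_getElem.2 ⟨by simpa using hlN, fun i hi => ?_⟩⟩
  simpa using (DFunLike.congr_fun hτ ⟨i, hi⟩).symm

variable {E : Type*} [Fintype E] [DecidableEq E] {Q : List E → Prop}

lemma uniformProb_perm_ofFn_le (hQ : ∀ l r, Q (l ++ r) → Q l) {N : ℕ} (f : Fin N ↪ E)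
    {l : List E} (hl : l.Nodup) (hlN : l.length ≤ N) :
    uniformProb (fun σ : Equiv.Perm E => Q (List.ofFn (σ • f))) ≤
      uniformProb fun σ : Equiv.Perm E => Q (l.map σ) := by
  obtain ⟨τ, r, hr⟩ := exists_perm_prefix_ofFn f hl hlN
  rw [← uniformProb_comp_equiv (Equiv.mulRight τ)]
  refine uniformProb_mono fun σ hσ => hQ _ (r.map σ) ?_
  rw [← List.map_append, hr, List.map_ofFn]
  exact hσ

/-- Repeated draws may be discarded: by symmetry under permutations of `E`, the distinct values
of independent draws, in order of first appearance, are an initial segment of a uniformly random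
injective sequence. -/
lemma uniformProb_ofFn_embedding_le [Nonempty E] (hQ : ∀ l r, Q (l ++ r) → Q l)
    {κ : Type*} [Fintype κ] [DecidableEq κ] {N : ℕ} (o : List κ) (ho : o.length ≤ N) :
    uniformProb (fun f : Fin N ↪ E => Q (List.ofFn f)) ≤
      uniformProb fun g : κ → E => Q (firstOccurrences (o.map g)) := by
  rcases isEmpty_or_nonempty (Fin N ↪ E) with hN | hN
  · exact (by simp [uniformProb] : _ = (0 : ℝ)).trans_le (uniformProb_nonneg _)
  · rw [uniformProb_eq_expect_smul (Equiv.Perm E), uniformProb_eq_expect_smul (Equiv.Perm E)]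
    refine le_expect univ_nonempty fun g _ => expect_le univ_nonempty fun f _ => ?_
    have hmap (σ : Equiv.Perm E) :
        firstOccurrences (o.map (σ • g)) = (firstOccurrences (o.map g)).map σ := by
      rw [← firstOccurrences_map σ.injective, List.map_map]
      rfl
    simp only [hmap]
    exact uniformProb_perm_ofFn_le hQ f (nodup_firstOccurrences _)
      ((length_firstOccurrences_le _).trans (by simpa using ho))

end Coupling

section Game

/-- The vertex pairs of `V` that can be presented as edges in the game. -/
abbrev Edge (V : Type*) := {e : Sym2 V // ¬ e.IsDiag}

lemma onlineProb_eq_uniformProb {n N : ℕ} (P : (Fin N → Sym2 (Fin n)) → Prop) :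
    onlineProb n N P = uniformProb fun f : Fin N ↪ Edge (Fin n) => P fun i => f i := by
  have hinj : Function.Injective
      fun (f : Fin N ↪ Edge (Fin n)) (i : Fin N) => (f i : Sym2 (Fin n)) :=
    fun f g h => DFunLike.ext _ _ fun i => Subtype.ext (congrFun h i)
  have hcount (R : (Fin N → Sym2 (Fin n)) → Prop) : Set.ncard {f | ValidSeqFun f ∧ R f} =
      #{f : Fin N ↪ Edge (Fin n) | R fun i => f i} := by
    rw [← Set.ncard_coe_finset, ← Set.ncard_image_of_injective _ hinj]
    congr 1
    ext f
    simp only [Set.mem_ofPred_eq, Set.mem_image, coe_filter, mem_univ, true_and]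
    constructor
    · rintro ⟨⟨hf, hdiag⟩, hR⟩
      exact ⟨⟨fun i => ⟨f i, hdiag i⟩, fun i j h => hf (congrArg Subtype.val h)⟩, hR, rfl⟩
    · rintro ⟨f, hR, rfl⟩
      exact ⟨⟨Subtype.val_injective.comp f.injective, fun i => (f i).2⟩, hR⟩
  have htotal := hcount fun _ => True
  simp only [and_true, filter_true, card_univ] at htotal
  rw [onlineProb, uniformProb, hcount, htotal]

variable {α V : Type} {r : ℕ}

lemma runPainterAux_append (π : PainterStrategy V r) (h : EdgeHistory V r) (l₁ l₂ : List (Sym2 V)) :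
    runPainterAux π h (l₁ ++ l₂) = runPainterAux π (runPainterAux π h l₁) l₂ := by
  induction l₁ generalizing h with
  | nil => rfl
  | cons _ _ ih => exact ih _

lemma prefix_runPainterAux (π : PainterStrategy V r) (h : EdgeHistory V r) (l : List (Sym2 V)) :
    h <+: runPainterAux π h l := by
  induction l generalizing h with
  | nil => exact List.prefix_rfl
  | cons _ _ ih => exact (List.prefix_append _ _).trans (ih _)

lemma map_fst_runPainterAux (π : PainterStrategy V r) (h : EdgeHistory V r) (l : List (Sym2 V)) :
    (runPainterAux π h l).map Prod.fst = h.map Prod.fst ++ l := by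
  induction l generalizing h with
  | nil => simp [runPainterAux]
  | cons e l ih => simp [runPainterAux, ih]

lemma runPainter_prefix_append (π : PainterStrategy V r) (l₁ l₂ : List (Sym2 V)) :
    runPainter π l₁ <+: runPainter π (l₁ ++ l₂) := by
  rw [runPainter, runPainter, runPainterAux_append]
  exact prefix_runPainterAux _ _ _

lemma exists_mem_runPainter_iff (π : PainterStrategy V r) (l : List (Sym2 V)) (e : Sym2 V) :
    (∃ c, (e, c) ∈ runPainter π l) ↔ e ∈ l := by
  have hl : (runPainter π l).map Prod.fst = l := by simp [runPainter, map_fst_runPainterAux]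
  conv_rhs => rw [← hl]
  simp

lemma colorGraph_mono {h h' : EdgeHistory V r} (hh : h ⊆ h') (c : Fin r) :
    colorGraph h c ≤ colorGraph h' c :=
  fromEdgeSet_mono fun _ he => hh he

lemma HasMonoCopy.mono {F : SimpleGraph α} {h h' : EdgeHistory V r} (hh : h ⊆ h')
    (hc : HasMonoCopy F h) : HasMonoCopy F h' := by
  obtain ⟨c, f, hf⟩ := hc
  exact ⟨c, f, fun u v huv => colorGraph_mono hh c (hf u v huv)⟩

end Game

section SpectralLowerBound

variable {V : Type*} [Fintype V] [DecidableEq V]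

open Matrix in
lemma trace_pow_eq_sum_eigenvalues_pow {A : Matrix V V ℝ} (hA : A.IsHermitian) (k : ℕ) :
    (A ^ k).trace = ∑ i, hA.eigenvalues i ^ k := by
  conv_lhs => rw [hA.spectral_theorem, ← map_pow, diagonal_pow, Unitary.conjStarAlgAut_apply,
    trace_mul_cycle, Unitary.coe_star_mul_self, one_mul, trace_diagonal]
  rfl

open Matrix in
lemma dotProduct_mulVec_eq_sum_eigenvalues {A : Matrix V V ℝ} (hA : A.IsHermitian)
    (x : EuclideanSpace ℝ V) :
    x.ofLp ⬝ᵥ A *ᵥ x.ofLp = ∑ i, inner ℝ (hA.eigenvectorBasis i) x ^ 2 * hA.eigenvalues i := by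
  have hcoord (i : V) : inner ℝ (hA.eigenvectorBasis i) (WithLp.toLp 2 (A *ᵥ x.ofLp)) =
      hA.eigenvalues i * inner ℝ (hA.eigenvectorBasis i) x := by
    rw [EuclideanSpace.inner_eq_star_dotProduct, EuclideanSpace.inner_eq_star_dotProduct,
      star_trivial, dotProduct_comm, dotProduct_mulVec, ← mulVec_transpose,
      ← conjTranspose_eq_transpose_of_trivial, hA.eq, hA.mulVec_eigenvectorBasis, smul_dotProduct,
      smul_eq_mul, dotProduct_comm]
  calc x.ofLp ⬝ᵥ A *ᵥ x.ofLp = inner ℝ x (WithLp.toLp 2 (A *ᵥ x.ofLp)) := by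
        rw [EuclideanSpace.inner_eq_star_dotProduct, star_trivial, dotProduct_comm]
    _ = _ := by
        rw [← hA.eigenvectorBasis.sum_inner_mul_inner]
        refine sum_congr rfl fun i _ => ?_
        rw [hcoord, real_inner_comm]
        ring

open Matrix in
lemma mean_pow_le_trace_pow [Nonempty V] {A : Matrix V V ℝ} (hA : A.IsHermitian) {k : ℕ}
    (hk : Even k) : ((∑ u, ∑ v, A u v) / Fintype.card V) ^ k ≤ (A ^ k).trace := by
  set x : EuclideanSpace ℝ V := WithLp.toLp 2 1 with hx
  set w : V → ℝ := fun i => inner ℝ (hA.eigenvectorBasis i) x ^ 2 / Fintype.card V with hw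
  have hw_nonneg (i : V) : 0 ≤ w i := by positivity
  have hw_sum : ∑ i, w i = 1 := by
    rw [hw, ← sum_div, hA.eigenvectorBasis.sum_sq_inner_right x]
    simp [hx, EuclideanSpace.norm_sq_eq]
  have hmean : (∑ u, ∑ v, A u v) / Fintype.card V = ∑ i, w i * hA.eigenvalues i := by
    have hquad := dotProduct_mulVec_eq_sum_eigenvalues hA x
    simp only [hx, dotProduct, mulVec, Pi.one_apply, one_mul, mul_one] at hquad
    rw [hquad, sum_div]
    exact sum_congr rfl fun i _ => by rw [hw]; ring
  calc ((∑ u, ∑ v, A u v) / Fintype.card V) ^ k ≤ ∑ i, w i * hA.eigenvalues i ^ k :=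
        hmean ▸ Real.pow_arith_mean_le_arith_mean_pow_of_even _ _ _ (fun i _ => hw_nonneg i)
          hw_sum hk
    _ ≤ ∑ i, hA.eigenvalues i ^ k :=
        sum_le_sum fun i _ => mul_le_of_le_one_left (hk.pow_nonneg _)
          (hw_sum ▸ single_le_sum (fun j _ => hw_nonneg j) (mem_univ i))
    _ = (A ^ k).trace := (trace_pow_eq_sum_eigenvalues_pow hA k).symm

end SpectralLowerBound

section ClosedWalks

/-- `x` lists the vertices of a closed walk of length `L` in `G`, possibly with repetitions;
equivalently, `x` is a homomorphism from the cycle `C_L` to `G`. -/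
def IsClosedWalk {V : Type*} (G : SimpleGraph V) {L : ℕ} (x : ZMod L → V) : Prop :=
  ∀ i, G.Adj (x i) (x (i + 1))

variable {V : Type*} {G : SimpleGraph V} {L : ℕ} [NeZero L]

lemma getVert_val_add_one {u : V} {p : G.Walk u u} (hp : p.length = L) (i : ZMod L) :
    p.getVert (i + 1).val = p.getVert (i.val + 1) := by
  rw [ZMod.val_add, ZMod.val_one_eq_one_mod, Nat.add_mod_mod]
  rcases (show i.val + 1 ≤ L from i.val_lt).lt_or_eq with hi | hi
  · rw [Nat.mod_eq_of_lt hi]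
  · rw [hi, Nat.mod_self, p.getVert_zero, ← hp, p.getVert_length]

lemma isClosedWalk_getVert {u : V} {p : G.Walk u u} (hp : p.length = L) :
    IsClosedWalk G fun i : ZMod L => p.getVert i.val := by
  intro i
  simpa only [getVert_val_add_one hp] using p.adj_getVert_succ (hp ▸ i.val_lt)

lemma trace_adjMatrix_pow_le [Fintype V] :
    (G.adjMatrix ℝ ^ L).trace ≤ #{x : ZMod L → V | IsClosedWalk G x} := by
  simp only [Matrix.trace, Matrix.diag_apply, adjMatrix_pow_apply_eq_card_walk]
  rw [← Nat.cast_sum, ← Fintype.card_sigma, ← Fintype.card_coe, Nat.cast_le]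
  refine Fintype.card_le_of_injective
    (fun q => ⟨fun i => q.2.1.getVert i.val, by simpa using isClosedWalk_getVert q.2.2⟩) ?_
  rintro ⟨u, p, hp⟩ ⟨u', p', hp'⟩ h
  have hvert (i : ZMod L) : p.getVert i.val = p'.getVert i.val :=
    congrFun (congrArg Subtype.val h) i
  have hvert_lt (k : ℕ) (hk : k < L) : p.getVert k = p'.getVert k := by
    simpa [ZMod.val_cast_of_lt hk] using hvert k
  obtain rfl : u = u' := by simpa using hvert_lt 0 (NeZero.pos L)
  have : p = p' := Walk.ext_getVert_le_length (hp.trans hp'.symm) fun k hk => by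
    rcases hk.lt_or_eq with hk | rfl
    · exact hvert_lt k (hp ▸ hk)
    · rw [p.getVert_length, show p.length = p'.length from hp.trans hp'.symm, p'.getVert_length]
  subst this
  rfl

lemma pow_le_card_isClosedWalk [Fintype V] [Nonempty V] (hL : Even L) :
    (2 * #G.edgeFinset / Fintype.card V : ℝ) ^ L ≤ #{x : ZMod L → V | IsClosedWalk G x} := by
  have hsum : ∑ u, ∑ v, G.adjMatrix ℝ u v = 2 * #G.edgeFinset := by
    rw [← Nat.cast_ofNat, ← Nat.cast_mul, ← G.sum_degrees_eq_twice_card_edges]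
    simp [adjMatrix_apply, degree, neighborFinset_eq_filter]
  exact hsum ▸ (mean_pow_le_trace_pow (G.isHermitian_adjMatrix ℝ) hL).trans trace_adjMatrix_pow_le

end ClosedWalks

section ClosedWalkEdges

variable {V : Type*} {G : SimpleGraph V} {L : ℕ} [NeZero L]

/-- The set of edges traversed by the closed walk with vertices `x`. -/
noncomputable def cycleEdges (x : ZMod L → V) : Finset (Sym2 V) :=
  univ.image fun i => s(x i, x (i + 1))

lemma mem_cycleEdges (x : ZMod L → V) (i : ZMod L) : s(x i, x (i + 1)) ∈ cycleEdges x :=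
  mem_image_of_mem _ (mem_univ i)

lemma isClosedWalk_iff {x : ZMod L → V} :
    IsClosedWalk G x ↔ ∀ e ∈ cycleEdges x, e ∈ G.edgeSet := by
  simp [IsClosedWalk, cycleEdges]

lemma reachable_of_forall_ne {x : ZMod L → V} {i : ZMod L}
    (h : ∀ j ≠ i, G.Adj (x j) (x (j + 1))) : G.Reachable (x i) (x (i + 1)) := by
  have hstep (k : ℕ) (hk : k < L) : G.Reachable (x (i + 1)) (x (i + 1 + k)) := by
    induction k with
    | zero => simp
    | succ k ih =>
      have hne : i + 1 + k ≠ i := fun heq => by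
        have hzero : ((k + 1 : ℕ) : ZMod L) = 0 := by
          push_cast
          linear_combination heq
        exact (Nat.not_dvd_of_pos_of_lt k.succ_pos hk) ((ZMod.natCast_eq_zero_iff _ _).1 hzero)
      simpa [add_assoc] using (ih (by lia)).trans (h _ hne).reachable
  have hL := hstep (L - 1) (Nat.sub_lt (NeZero.pos L) one_pos)
  rw [Nat.cast_sub (show 1 ≤ L from NeZero.pos L)] at hL
  simpa using hL.symm

lemma two_mul_card_cycleEdges_le {x : ZMod L → V} (hx : IsClosedWalk G x) (hG : G.IsAcyclic) :
    2 * #(cycleEdges x) ≤ L := by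
  suffices ∀ e ∈ cycleEdges x, 2 ≤ #{i | s(x i, x (i + 1)) = e} by
    simpa [cycleEdges] using mul_card_image_le_card univ 2 this
  intro e he
  obtain ⟨i, -, rfl⟩ := mem_image.1 he
  by_contra! hlt
  have hunique (j : ZMod L) (hj : j ≠ i) : s(x j, x (j + 1)) ≠ s(x i, x (i + 1)) := fun heq =>
    hj (card_le_one.1 (Nat.le_of_lt_succ hlt) j (by simpa using heq) i (by simp))
  refine isBridge_iff.1 (isAcyclic_iff_forall_adj_isBridge.1 hG (hx i)) (reachable_of_forall_ne ?_)
  exact fun j hj => (deleteEdges_adj ..).2 ⟨hx j, hunique j hj⟩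

lemma card_le_card_cycleEdges_of_surjective [Fintype V] {x : ZMod L → V} (hx : IsClosedWalk ⊤ x)
    (hsurj : Function.Surjective x) :
    Fintype.card V ≤ #(cycleEdges x) ∨
      Fintype.card V ≤ #(cycleEdges x) + 1 ∧ 2 * Fintype.card V ≤ L + 2 := by
  set H : SimpleGraph V := fromEdgeSet (cycleEdges x) with hH
  have hwalk : IsClosedWalk H x := fun i => (fromEdgeSet_adj _).2 ⟨mem_cycleEdges x i, (hx i).ne⟩
  have hreach (i : ZMod L) : H.Reachable (x 0) (x i) := by
    have hnat (k : ℕ) : H.Reachable (x 0) (x k) := by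
      induction k with
      | zero => simp
      | succ k ih => exact_mod_cast ih.trans (hwalk k).reachable
    simpa using hnat i.val
  have hconn : H.Connected := (connected_iff_exists_forall_reachable H).2
    ⟨x 0, fun v => (hsurj v).elim fun i hi => hi ▸ hreach i⟩
  have hedges : H.edgeSet = cycleEdges x := by
    refine Set.Subset.antisymm (by simp [hH]) fun e he => ?_
    exact isClosedWalk_iff.1 hwalk e he
  have hcard : Nat.card H.edgeSet = #(cycleEdges x) := by simp [hedges]
  have hle := hconn.card_vert_le_card_edgeSet_add_one
  rw [hcard, Nat.card_eq_fintype_card] at hle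
  refine or_iff_not_imp_left.2 fun hlt => ⟨hle, ?_⟩
  have htree : H.IsTree := isTree_iff_connected_and_card.2
    ⟨hconn, by rw [hcard, Nat.card_eq_fintype_card]; lia⟩
  have := two_mul_card_cycleEdges_le hwalk htree.isAcyclic
  lia

lemma card_image_le_card_cycleEdges {x : ZMod L → V} (hx : IsClosedWalk ⊤ x) :
    #(univ.image x) ≤ #(cycleEdges x) ∨
      #(univ.image x) ≤ #(cycleEdges x) + 1 ∧ 2 * #(univ.image x) ≤ L + 2 := by
  set x' : ZMod L → univ.image x := fun i => ⟨x i, mem_image_of_mem x (mem_univ i)⟩ with hx'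
  have hedges : cycleEdges x = (cycleEdges x').image (Sym2.map Subtype.val) := by
    simp [cycleEdges, image_image, Function.comp_def, hx']
  rw [hedges, card_image_of_injective _ (Sym2.map.injective Subtype.val_injective),
    ← Fintype.card_coe (univ.image x)]
  refine card_le_card_cycleEdges_of_surjective (fun i => ?_) fun ⟨v, hv⟩ => ?_
  · simpa [hx'] using (hx i).ne
  · obtain ⟨i, -, rfl⟩ := mem_image.1 hv
    exact ⟨i, rfl⟩

lemma card_cycleEdges_of_injective {x : ZMod L → V} (hx : Function.Injective x) (hL : 3 ≤ L) :
    #(cycleEdges x) = L := by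
  have htwo : (2 : ZMod L) ≠ 0 := fun h =>
    Nat.not_dvd_of_pos_of_lt two_pos hL ((ZMod.natCast_eq_zero_iff 2 L).1 (mod_cast h))
  rw [cycleEdges, card_image_of_injective, card_univ, ZMod.card]
  intro i j hij
  rcases Sym2.eq_iff.1 hij with ⟨h, -⟩ | ⟨h, h'⟩
  · exact hx h
  · exact absurd (by linear_combination hx h' - hx h) htwo

end ClosedWalkEdges

section ImageSize

variable {ι V : Type*} [Fintype ι] [DecidableEq ι] [Fintype V]

lemma card_forall_apply_comp_le (f : ι → ι) :
    #{y : ι → V | ∀ i, y (f i) = y i} ≤ Fintype.card V ^ #(univ.image f) := by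
  calc #{y : ι → V | ∀ i, y (f i) = y i} ≤ Fintype.card (univ.image f → V) := by
        rw [← Fintype.card_coe]
        refine Fintype.card_le_of_injective (fun y j => y.1 j) fun y y' h => ?_
        refine Subtype.ext (funext fun i => ?_)
        have : y.1 (f i) = y'.1 (f i) := congrFun h ⟨f i, mem_image_of_mem f (mem_univ i)⟩
        rwa [(mem_filter.1 y.2).2 i, (mem_filter.1 y'.2).2 i] at this
    _ = Fintype.card V ^ #(univ.image f) := by rw [Fintype.card_fun, Fintype.card_coe]

/-- Fibre over the map sending `i` to a chosen representative of its class `y ⁻¹' {y i}`. -/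
lemma sum_inv_pow_card_image_le [Nonempty ι] [Nonempty V] :
    ∑ y : ι → V, ((Fintype.card V : ℝ) ^ #(univ.image y))⁻¹ ≤ Fintype.card ι ^ Fintype.card ι := by
  set rep : (ι → V) → ι → ι := fun y : ι → V => Function.invFun y ∘ y with hrep
  have apply_rep (y : ι → V) (i : ι) : y (rep y i) = y i := Function.invFun_eq ⟨i, rfl⟩
  have card_image_rep (y : ι → V) : #(univ.image (rep y)) = #(univ.image y) := by
    rw [hrep, ← image_image, card_image_of_injOn]
    intro v hv w hw h
    obtain ⟨i, -, rfl⟩ := mem_image.1 (mem_coe.1 hv)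
    obtain ⟨j, -, rfl⟩ := mem_image.1 (mem_coe.1 hw)
    rw [← apply_rep y i, ← apply_rep y j]
    exact congrArg y h
  have hfiber (f : ι → ι) :
      ∑ y with rep y = f, ((Fintype.card V : ℝ) ^ #(univ.image y))⁻¹ ≤ 1 := by
    have hsub : ({y | rep y = f} : Finset (ι → V)) ⊆
        ({y | ∀ i, y (f i) = y i} : Finset (ι → V)) := fun y hy => by
      obtain rfl := (mem_filter.1 hy).2
      exact mem_filter.2 ⟨mem_univ _, apply_rep y⟩
    rw [sum_congr rfl fun y hy => by rw [← card_image_rep, (mem_filter.1 hy).2], sum_const,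
      nsmul_eq_mul, ← div_eq_mul_inv, div_le_one (by positivity)]
    exact_mod_cast (card_le_card hsub).trans (card_forall_apply_comp_le f)
  calc ∑ y : ι → V, ((Fintype.card V : ℝ) ^ #(univ.image y))⁻¹
      = ∑ f : ι → ι, ∑ y with rep y = f, ((Fintype.card V : ℝ) ^ #(univ.image y))⁻¹ :=
        (sum_fiberwise univ rep _).symm
    _ ≤ ∑ _f : ι → ι, 1 := sum_le_sum fun f _ => hfiber f
    _ = Fintype.card ι ^ Fintype.card ι := by simp

end ImageSize

section BlockCount

variable {b m : ℕ}

/-- The residue of the `a`-th position in the `j`-th of `b` consecutive blocks of length `m` in the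
cyclic order of `ZMod (b * m)`; the block ends at `a = m`, where the next one starts. -/
def blockPos (b m : ℕ) (j a : ℕ) : ZMod (b * m) := (j * m + a : ℕ)

lemma blockPos_add_one (j a : ℕ) : blockPos b m j (a + 1) = blockPos b m j a + 1 := by
  simp [blockPos, add_assoc]

lemma blockPos_injective :
    Function.Injective fun ja : Fin b × Fin m => blockPos b m ja.1 ja.2 := by
  intro ja ja' h
  have hval (ja : Fin b × Fin m) : ja.1 * m + ja.2 = (finProdFinEquiv ja : ℕ) := by
    simp [finProdFinEquiv, mul_comm, add_comm]
  simp only [blockPos, hval] at h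
  refine finProdFinEquiv.injective (Fin.ext ?_)
  rwa [ZMod.natCast_eq_natCast_iff', Nat.mod_eq_of_lt (Fin.is_lt _),
    Nat.mod_eq_of_lt (Fin.is_lt _)] at h

lemma mul_card_full_blocks_le (S : Finset (ZMod (b * m))) :
    m * #{j : Fin b | ∀ a ≤ m, blockPos b m j a ∈ S} ≤ #S := by
  calc m * #{j : Fin b | ∀ a ≤ m, blockPos b m j a ∈ S}
      = #(({j | ∀ a ≤ m, blockPos b m j a ∈ S} : Finset (Fin b)) ×ˢ (univ : Finset (Fin m))) := by
        simp [mul_comm]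
    _ ≤ #S := card_le_card_of_injOn (fun ja : Fin b × Fin m => blockPos b m ja.1 ja.2)
        (fun ja hja => (mem_filter.1 (mem_product.1 hja).1).2 _ ja.2.2.le) blockPos_injective.injOn

lemma card_broken_blocks_le (S : Finset (ZMod (b * m))) :
    #{j : Fin b | (blockPos b m j 0 ∈ S ∧ blockPos b m j m ∈ S) ∧
      ¬ ∀ a ≤ m, blockPos b m j a ∈ S} ≤ #{i ∈ S | i + 1 ∉ S} := by
  have hexit (j : Fin b) (h0 : blockPos b m j 0 ∈ S) (h : ¬ ∀ a ≤ m, blockPos b m j a ∈ S) :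
      ∃ a < m, blockPos b m j a ∈ S ∧ blockPos b m j a + 1 ∉ S := by
    contrapose! h
    intro a
    induction a with
    | zero => exact fun _ => h0
    | succ a ih => exact fun ha => blockPos_add_one (j : ℕ) a ▸ h a ha (ih (by lia))
  choose! exit hlt hmem hnotMem using hexit
  refine card_le_card_of_injOn (fun j => blockPos b m j (exit j)) (fun j hj => ?_)
    fun j hj j' hj' h => ?_
  · obtain ⟨⟨h0, -⟩, hnot⟩ := (mem_filter.1 hj).2
    exact mem_filter.2 ⟨hmem j h0 hnot, hnotMem j h0 hnot⟩
  · obtain ⟨⟨h0, -⟩, hnot⟩ := (mem_filter.1 hj).2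
    obtain ⟨⟨hstart, -⟩, hleave⟩ := (mem_filter.1 hj').2
    exact congrArg Prod.fst
      (@blockPos_injective b m (j, ⟨exit j, hlt j h0 hnot⟩) (j', ⟨exit j', hlt j' hstart hleave⟩) h)

/-- Cutting the cyclic order into blocks, a set cannot contain many consecutive pairs and many
pairs of block ends at once: a block with both ends in `S` is either full or is left by `S`. -/
lemma mul_card_pairs_le (S : Finset (ZMod (b * m))) :
    m * (#{i ∈ S | i + 1 ∈ S} + #{j : Fin b | blockPos b m j 0 ∈ S ∧ blockPos b m j m ∈ S}) ≤
      (m + 1) * #S := by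
  have hsplit := card_filter_add_card_filter_not (s := S) (fun i => i + 1 ∈ S)
  have hends := card_filter_add_card_filter_not
    (s := ({j : Fin b | blockPos b m j 0 ∈ S ∧ blockPos b m j m ∈ S}))
    (fun j => ∀ a ≤ m, blockPos b m j a ∈ S)
  have hfull : #{j : Fin b | (blockPos b m j 0 ∈ S ∧ blockPos b m j m ∈ S) ∧
      ∀ a ≤ m, blockPos b m j a ∈ S} ≤ #{j : Fin b | ∀ a ≤ m, blockPos b m j a ∈ S} :=
    card_le_card (monotone_filter_right _ fun _ _ h => h.2)
  have hbroken := card_broken_blocks_le S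
  have hmul := mul_card_full_blocks_le S
  rw [filter_filter, filter_filter] at hends
  nlinarith

end BlockCount

section Overlap

variable {V : Type*} {m : ℕ} [NeZero m]

/-- The chord of the cycle `x` of length `(m + 1) * m` that joins the ends of its `j`-th block: it
closes that block to a cycle of length `m + 1`, and so do the `m + 1` chords together. -/
def chord (x : ZMod ((m + 1) * m) ↪ V) (j : Fin (m + 1)) : Edge V :=
  ⟨s(x (blockPos (m + 1) m j 0), x (blockPos (m + 1) m j m)), fun h => by
    have hm := NeZero.pos m
    have hzero : ((m : ℕ) : ZMod ((m + 1) * m)) = 0 := by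
      simpa [blockPos] using (x.injective (Sym2.mk_isDiag_iff.1 h)).symm
    exact Nat.not_dvd_of_pos_of_lt hm (by nlinarith) ((ZMod.natCast_eq_zero_iff _ _).1 hzero)⟩

lemma card_image_sumElim_add_le {ι : Type*} [Fintype ι] (x x' : ι → V) :
    #(univ.image (Sum.elim x x')) + #{i | x i ∈ Set.range x'} ≤ 2 * Fintype.card ι := by
  have hsub : univ.image (Sum.elim x x') ⊆
      univ.image x' ∪ ({i | x i ∉ Set.range x'} : Finset ι).image x := by
    intro v hv
    obtain ⟨i | i, -, rfl⟩ := mem_image.1 hv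
    · by_cases hi : x i ∈ Set.range x'
      · exact mem_union_left _ (by simpa using hi)
      · exact mem_union_right _ (mem_image_of_mem x (by simpa using hi))
    · exact mem_union_left _ (mem_image_of_mem x' (mem_univ i))
  have himage := (card_le_card hsub).trans (card_union_le _ _)
  have hx' : #(univ.image x') ≤ Fintype.card ι := card_image_le
  have hx : #(({i | x i ∉ Set.range x'} : Finset ι).image x) ≤ #{i | x i ∉ Set.range x'} :=
    card_image_le
  have hsplit := card_filter_add_card_filter_not (s := (univ : Finset ι)) (x · ∈ Set.range x')
  rw [card_univ] at hsplit
  lia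

lemma mem_of_sym2_eq {u v u' v' : V} {s : Set V} (h : s(u, v) = s(u', v')) (hu : u' ∈ s)
    (hv : v' ∈ s) : u ∈ s ∧ v ∈ s := by
  rcases Sym2.eq_iff.1 h with ⟨rfl, rfl⟩ | ⟨rfl, rfl⟩
  exacts [⟨hu, hv⟩, ⟨hv, hu⟩]

lemma card_cycleEdges_inter_le {L : ℕ} [NeZero L] {x x' : ZMod L → V} {S : Finset (ZMod L)}
    (hS : ∀ i, x i ∈ Set.range x' → i ∈ S) :
    #(cycleEdges x ∩ cycleEdges x') ≤ #{i ∈ S | i + 1 ∈ S} := by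
  refine (card_le_card fun e he => ?_).trans (card_image_le (f := fun i => s(x i, x (i + 1))))
  obtain ⟨⟨i, -, rfl⟩, i', -, h⟩ := (mem_inter.1 he).imp mem_image.1 mem_image.1
  have hmem := mem_of_sym2_eq h.symm (Set.mem_range_self i') (Set.mem_range_self (i' + 1))
  exact mem_image_of_mem _ (mem_filter.2 (hmem.imp (hS _) (hS _)))

lemma exists_overlap (hm : 2 ≤ m) {x x' : ZMod ((m + 1) * m) ↪ V}
    (hshare : ∃ j, chord x j = chord x' j) :
    ∃ s t : ℕ, #(univ.image (Sum.elim x x')) + s ≤ 2 * ((m + 1) * m) ∧ t ≠ 0 ∧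
      m * t ≤ (m + 1) * s ∧ 2 * ((m + 1) * m) + 2 * (m + 1) ≤
        #(cycleEdges x ∪ cycleEdges x') + (m + 1 + hammingDist (chord x) (chord x')) + t := by
  set S : Finset (ZMod ((m + 1) * m)) := {i | x i ∈ Set.range x'} with hS
  have himage := card_image_sumElim_add_le x x'
  rw [ZMod.card, ← hS] at himage
  have hchords : #{j | chord x j = chord x' j} ≤
      #{j : Fin (m + 1) | blockPos (m + 1) m j 0 ∈ S ∧ blockPos (m + 1) m j m ∈ S} :=
    card_le_card (monotone_filter_right _ fun j _ h => by
      simpa [hS] using mem_of_sym2_eq (congrArg Subtype.val h) (Set.mem_range_self (f := x') _)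
        (Set.mem_range_self (f := x') _))
  have hdist : #{j | chord x j = chord x' j} + hammingDist (chord x) (chord x') = m + 1 := by
    simpa [hammingDist] using
      card_filter_add_card_filter_not (s := univ) fun j => chord x j = chord x' j
  have hpos : 0 < #{j | chord x j = chord x' j} :=
    card_pos.2 (hshare.imp fun j hj => by simpa using hj)
  have hunion := card_union_add_card_inter (cycleEdges x) (cycleEdges x')
  rw [card_cycleEdges_of_injective x.injective (by nlinarith),
    card_cycleEdges_of_injective x'.injective (by nlinarith)] at hunion
  have hinter := card_cycleEdges_inter_le (x := x) (x' := x') (S := S) fun i hi =>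
    mem_filter.2 ⟨mem_univ i, hi⟩
  exact ⟨#S, _, himage, by lia, mul_card_pairs_le S, by lia⟩

end Overlap

section Sums

variable {V : Type*} [Fintype V] [Nonempty V] {p θ : ℝ}

lemma pow_card_cycleEdges_le {L k : ℕ} [NeZero L] (hL : L = 2 * k) (hp : 0 < p) (hp₁ : p ≤ 1)
    (hθ : 1 ≤ θ) (hθ₁ : θ ≤ Fintype.card V * p)
    (hθ₂ : Fintype.card V * θ ≤ (Fintype.card V * p) ^ k) {x : ZMod L → V}
    (hx : IsClosedWalk ⊤ x) (hinj : ¬ Function.Injective x) :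
    p ^ #(cycleEdges x) ≤
      (Fintype.card V * p) ^ L / θ * ((Fintype.card V : ℝ) ^ #(univ.image x))⁻¹ := by
  have hlt : #(univ.image x) < L := by
    refine lt_of_le_of_ne (card_image_le.trans_eq (ZMod.card L)) fun h => hinj ?_
    exact Set.injOn_univ.1 (by simpa using card_image_iff.1 (h.trans (ZMod.card L).symm))
  have hpos : 0 < #(univ.image x) := card_pos.2 (univ_nonempty.image x)
  have hn : (0 : ℝ) < Fintype.card V := by exact_mod_cast Fintype.card_pos
  have hnp : 1 ≤ Fintype.card V * p := hθ.trans hθ₁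
  rw [← div_eq_mul_inv, le_div_iff₀ (by positivity), le_div_iff₀ (by positivity)]
  set n : ℝ := (Fintype.card V : ℝ)
  set e := #(cycleEdges x)
  set v := #(univ.image x)
  rcases card_image_le_card_cycleEdges hx with hve | ⟨hve, hvL⟩
  · calc p ^ e * n ^ v * θ ≤ p ^ v * n ^ v * (n * p) := by
          gcongr ?_ * _ * ?_
          exact pow_le_pow_of_le_one hp.le hp₁ hve
      _ = (n * p) ^ (v + 1) := by ring
      _ ≤ (n * p) ^ L := pow_le_pow_right₀ hnp hlt
  · obtain ⟨w, hw⟩ : ∃ w, v = w + 1 := Nat.exists_eq_succ_of_ne_zero hpos.ne'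
    rw [hw]
    calc p ^ e * n ^ (w + 1) * θ ≤ p ^ w * n ^ (w + 1) * θ := by
          gcongr ?_ * _ * _
          exact pow_le_pow_of_le_one hp.le hp₁ (by lia)
      _ = (n * p) ^ w * (n * θ) := by ring
      _ ≤ (n * p) ^ k * (n * p) ^ k := by
          gcongr
          lia
      _ = (n * p) ^ L := by rw [← pow_add, hL, two_mul]

lemma sum_pow_card_cycleEdges_le {L k : ℕ} [NeZero L] (hL : L = 2 * k) (hp : 0 < p) (hp₁ : p ≤ 1)
    (hθ : 1 ≤ θ) (hθ₁ : θ ≤ Fintype.card V * p)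
    (hθ₂ : Fintype.card V * θ ≤ (Fintype.card V * p) ^ k) :
    ∑ x : ZMod L → V with IsClosedWalk ⊤ x ∧ ¬ Function.Injective x, p ^ #(cycleEdges x) ≤
      (Fintype.card V * p) ^ L / θ * L ^ L := by
  calc ∑ x : ZMod L → V with IsClosedWalk ⊤ x ∧ ¬ Function.Injective x, p ^ #(cycleEdges x)
      ≤ ∑ x : ZMod L → V with IsClosedWalk ⊤ x ∧ ¬ Function.Injective x,
          (Fintype.card V * p) ^ L / θ * ((Fintype.card V : ℝ) ^ #(univ.image x))⁻¹ :=
        sum_le_sum fun x hx => pow_card_cycleEdges_le hL hp hp₁ hθ hθ₁ hθ₂ (mem_filter.1 hx).2.1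
          (mem_filter.1 hx).2.2
    _ ≤ ∑ x : ZMod L → V,
          (Fintype.card V * p) ^ L / θ * ((Fintype.card V : ℝ) ^ #(univ.image x))⁻¹ :=
        sum_le_univ_sum_of_nonneg fun x => by positivity
    _ ≤ (Fintype.card V * p) ^ L / θ * L ^ L := by
        rw [← mul_sum]
        gcongr
        simpa using sum_inv_pow_card_image_le (ι := ZMod L) (V := V)

variable {m : ℕ} [NeZero m]

lemma pow_mul_overlapWeight_le (hm : 2 ≤ m) (hp : 0 < p) (hp₁ : p ≤ 1) (hθ : 1 ≤ θ)
    (hθp : θ ^ (m + 1) ≤ Fintype.card V ^ m * p ^ (m + 1)) (x x' : ZMod ((m + 1) * m) ↪ V) :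
    p ^ #(cycleEdges x ∪ cycleEdges x') * overlapWeight p (chord x) (chord x') ≤
      (Fintype.card V : ℝ) ^ (2 * ((m + 1) * m)) * p ^ (2 * ((m + 1) * m) + 2 * (m + 1)) / θ *
        ((Fintype.card V : ℝ) ^ #(univ.image (Sum.elim x x')))⁻¹ := by
  rw [overlapWeight]
  split_ifs with hshare
  swap
  · rw [mul_zero]
    positivity
  obtain ⟨s, t, hs, ht, hst, hexp⟩ := exists_overlap hm hshare
  have hn : (1 : ℝ) ≤ Fintype.card V := by exact_mod_cast Fintype.card_pos
  rw [Fintype.card_fin, ← pow_add, ← div_eq_mul_inv, le_div_iff₀ (by positivity),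
    le_div_iff₀ (by positivity)]
  set n : ℝ := (Fintype.card V : ℝ)
  set e := #(cycleEdges x ∪ cycleEdges x') + (m + 1 + hammingDist (chord x) (chord x'))
  set v := #(univ.image (Sum.elim x x'))
  have hθst : θ ≤ n ^ s * p ^ t := by
    refine le_of_pow_le_pow_left₀ m.succ_ne_zero (by positivity) ?_
    calc θ ^ (m + 1) ≤ (θ ^ (m + 1)) ^ t := le_self_pow₀ (one_le_pow₀ hθ) ht
      _ ≤ (n ^ m * p ^ (m + 1)) ^ t := by gcongr
      _ = n ^ (m * t) * p ^ (t * (m + 1)) := by ring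
      _ ≤ n ^ ((m + 1) * s) * p ^ (t * (m + 1)) := by gcongr
      _ = (n ^ s * p ^ t) ^ (m + 1) := by ring
  calc p ^ e * n ^ v * θ ≤ p ^ e * n ^ v * (n ^ s * p ^ t) := by gcongr
    _ = n ^ (v + s) * p ^ (e + t) := by ring
    _ ≤ n ^ (2 * ((m + 1) * m)) * p ^ (2 * ((m + 1) * m) + 2 * (m + 1)) := by
        gcongr ?_ * ?_
        · exact pow_le_pow_right₀ hn hs
        · exact pow_le_pow_of_le_one hp.le hp₁ hexp

lemma sum_pow_mul_overlapWeight_le (hm : 2 ≤ m) (hp : 0 < p) (hp₁ : p ≤ 1) (hθ : 1 ≤ θ)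
    (hθp : θ ^ (m + 1) ≤ Fintype.card V ^ m * p ^ (m + 1)) :
    ∑ x : ZMod ((m + 1) * m) ↪ V, ∑ x' : ZMod ((m + 1) * m) ↪ V,
        p ^ #(cycleEdges x ∪ cycleEdges x') * overlapWeight p (chord x) (chord x') ≤
      (Fintype.card V : ℝ) ^ (2 * ((m + 1) * m)) * p ^ (2 * ((m + 1) * m) + 2 * (m + 1)) / θ *
        (2 * ((m + 1) * m) : ℕ) ^ (2 * ((m + 1) * m)) := by
  set A : ℝ := (Fintype.card V : ℝ) ^ (2 * ((m + 1) * m)) *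
    p ^ (2 * ((m + 1) * m) + 2 * (m + 1)) / θ
  set F : (ZMod ((m + 1) * m) ⊕ ZMod ((m + 1) * m) → V) → ℝ := fun y =>
    ((Fintype.card V : ℝ) ^ #(univ.image y))⁻¹
  set elim : (ZMod ((m + 1) * m) ↪ V) × (ZMod ((m + 1) * m) ↪ V) ↪
      (ZMod ((m + 1) * m) ⊕ ZMod ((m + 1) * m) → V) :=
    (Function.Embedding.prodMap ⟨(⇑), DFunLike.coe_injective⟩ ⟨(⇑), DFunLike.coe_injective⟩).trans
      (Equiv.sumArrowEquivProdArrow _ _ _).symm.toEmbedding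
  rw [← Fintype.sum_prod_type']
  calc _ ≤ ∑ x, A * F (elim x) :=
        sum_le_sum fun x _ => pow_mul_overlapWeight_le hm hp hp₁ hθ hθp x.1 x.2
    _ = A * ∑ y ∈ univ.map elim, F y := by rw [← mul_sum, sum_map]
    _ ≤ A * ∑ y, F y := by
        refine mul_le_mul_of_nonneg_left (sum_le_univ_sum_of_nonneg fun y => ?_) ?_ <;> positivity
    _ ≤ A * (2 * ((m + 1) * m) : ℕ) ^ (2 * ((m + 1) * m)) := by
        gcongr
        simpa [ZMod.card, two_mul] using
          sum_inv_pow_card_image_le (ι := ZMod ((m + 1) * m) ⊕ ZMod ((m + 1) * m)) (V := V)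

end Sums

section DrawnGraph

variable {V κ : Type*}

/-- The graph formed by the edges that occur among the draws `g`. -/
def drawnGraph (g : κ → Edge V) : SimpleGraph V := fromEdgeSet (Set.range fun i => (g i : Sym2 V))

lemma mem_edgeSet_drawnGraph {g : κ → Edge V} {e : Sym2 V} :
    e ∈ (drawnGraph g).edgeSet ↔ ∃ i, (g i : Sym2 V) = e := by
  rw [drawnGraph, edgeSet_fromEdgeSet]
  exact and_iff_left_of_imp fun ⟨i, hi⟩ => hi ▸ (g i).2

variable [Fintype V] [Fintype κ] [DecidableEq κ]

lemma uniformProb_forall_mem_edgeSet_drawnGraph_le (T : Finset (Sym2 V)) :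
    uniformProb (fun g : κ → Edge V => ∀ e ∈ T, e ∈ (drawnGraph g).edgeSet) ≤
      (Fintype.card κ / Fintype.card (Edge V) : ℝ) ^ #T := by
  by_cases hT : ∀ e ∈ T, ¬ e.IsDiag
  · obtain ⟨T, rfl⟩ : ∃ T' : Finset (Edge V), T'.map (.subtype _) = T :=
      ⟨T.subtype _, T.subtype_map_of_mem hT⟩
    have hmem (g : κ → Edge V) : (∀ e ∈ T.map (.subtype _), e ∈ (drawnGraph g).edgeSet) ↔
        ∀ e ∈ T, ∃ i, g i = e := by
      simp only [forall_mem_map, mem_edgeSet_drawnGraph, Function.Embedding.subtype_apply,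
        Subtype.val_inj]
    rw [uniformProb_congr hmem, card_map]
    exact uniformProb_forall_mem_exists_apply_eq_le T
  · push Not at hT
    obtain ⟨e, he, hdiag⟩ := hT
    have hnever (g : κ → Edge V) : ¬ ∀ e ∈ T, e ∈ (drawnGraph g).edgeSet := fun hg =>
      not_isDiag_of_mem_edgeSet _ (hg e he) hdiag
    simp only [uniformProb, hnever, filter_false, card_empty, Nat.cast_zero, zero_div]
    positivity

variable [Nonempty V] {L k : ℕ} [NeZero L] {p θ : ℝ}

lemma expect_card_degenerate_closedWalks_le (hL : L = 2 * k)
    (hpκ : p = Fintype.card κ / Fintype.card (Edge V)) (hp : 0 < p) (hp₁ : p ≤ 1)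
    (hθ : 1 ≤ θ) (hθ₁ : θ ≤ Fintype.card V * p)
    (hθ₂ : Fintype.card V * θ ≤ (Fintype.card V * p) ^ k) :
    𝔼 g : κ → Edge V,
        (#{x : ZMod L → V | IsClosedWalk (drawnGraph g) x ∧ ¬ Function.Injective x} : ℝ) ≤
      (Fintype.card V * p) ^ L / θ * L ^ L := by
  calc 𝔼 g : κ → Edge V,
        (#{x : ZMod L → V | IsClosedWalk (drawnGraph g) x ∧ ¬ Function.Injective x} : ℝ)
      = 𝔼 g : κ → Edge V, (#{x ∈ ({x : ZMod L → V | IsClosedWalk ⊤ x ∧ ¬ Function.Injective x} :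
          Finset (ZMod L → V)) | IsClosedWalk (drawnGraph g) x} : ℝ) := by
        refine expect_congr rfl fun g _ => ?_
        rw [filter_filter]
        exact congrArg _ (congrArg _ (filter_congr fun x _ =>
          ⟨fun h => ⟨⟨fun i => (h.1 i).ne, h.2⟩, h.1⟩, fun h => ⟨h.2, h.1.2⟩⟩))
    _ = ∑ x : ZMod L → V with IsClosedWalk ⊤ x ∧ ¬ Function.Injective x,
          uniformProb fun g : κ → Edge V => IsClosedWalk (drawnGraph g) x :=
        expect_card_filter _ _
    _ ≤ ∑ x : ZMod L → V with IsClosedWalk ⊤ x ∧ ¬ Function.Injective x, p ^ #(cycleEdges x) :=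
        sum_le_sum fun x _ => by
          simp only [isClosedWalk_iff, hpκ]
          exact uniformProb_forall_mem_edgeSet_drawnGraph_le _
    _ ≤ _ := sum_pow_card_cycleEdges_le hL hp hp₁ hθ hθ₁ hθ₂

end DrawnGraph

section ForcedCopy

variable {V : Type} {G : SimpleGraph V} {m : ℕ}

lemma isCopy_cycleGraph_of_adj (f : Fin (m + 1) ↪ V)
    (hstep : ∀ i : Fin m, G.Adj (f i.castSucc) (f i.succ)) (hlast : G.Adj (f (Fin.last m)) (f 0)) :
    IsCopy (cycleGraph (m + 1)) G := by
  have hnext (u v : Fin (m + 1)) (h : (v - u).val = 1) : G.Adj (f u) (f v) := by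
    obtain ⟨m, rfl⟩ : ∃ n, m = n + 1 := ⟨m - 1, by lia⟩
    obtain rfl : v = u + 1 := by rw [← sub_eq_iff_eq_add', Fin.ext_iff, h, Fin.val_one]
    induction u using Fin.lastCases with
    | last => simpa using hlast
    | cast i => simpa using hstep i
  refine ⟨f, fun u v huv => ?_⟩
  rw [cycleGraph_adj'] at huv
  exact huv.elim (fun h => (hnext v u h).symm) (hnext u v)

lemma blockPos_self (b m j : ℕ) : blockPos b m j m = blockPos b m (j + 1) 0 := by
  simp [blockPos, add_mul]

variable [NeZero m] {x : ZMod ((m + 1) * m) ↪ V}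

lemma isCopy_cycleGraph_of_chord (hx : IsClosedWalk G x) {j : Fin (m + 1)}
    (hj : (chord x j : Sym2 V) ∈ G.edgeSet) : IsCopy (cycleGraph (m + 1)) G := by
  have hinj : Function.Injective fun i : Fin (m + 1) => blockPos (m + 1) m j i := by
    have hm := NeZero.pos m
    have hlt (i : Fin (m + 1)) : (i : ℕ) < (m + 1) * m := by nlinarith [i.is_lt]
    intro i i' h
    simp only [blockPos, Nat.cast_add, add_right_inj, ZMod.natCast_eq_natCast_iff',
      Nat.mod_eq_of_lt (hlt _)] at h
    exact Fin.ext h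
  refine isCopy_cycleGraph_of_adj ((⟨_, hinj⟩ : Fin (m + 1) ↪ _).trans x) (fun i => ?_)
    (by simpa using hj.symm)
  simpa [blockPos_add_one] using hx (blockPos (m + 1) m j i)

lemma isCopy_cycleGraph_of_forall_chord (h : ∀ j, (chord x j : Sym2 V) ∈ G.edgeSet) :
    IsCopy (cycleGraph (m + 1)) G := by
  have hinj : Function.Injective fun i : Fin (m + 1) => blockPos (m + 1) m i 0 := 
    fun i i' h => (Prod.ext_iff.1 (blockPos_injective (a₁ := (i, 0)) (a₂ := (i', 0)) h)).1
  have hwrap : blockPos (m + 1) m m m = blockPos (m + 1) m 0 0 := by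
    rw [blockPos_self]
    simp [blockPos]
  refine isCopy_cycleGraph_of_adj ((⟨_, hinj⟩ : Fin (m + 1) ↪ _).trans x) (fun i => ?_) ?_
  · simpa [chord, blockPos_self] using h i.castSucc
  · simpa [chord, hwrap] using h (Fin.last m)

lemma mem_edgeSet_colorGraph {r : ℕ} {h : EdgeHistory V r} {c : Fin r} {e : Edge V} :
    (e : Sym2 V) ∈ (colorGraph h c).edgeSet ↔ ((e : Sym2 V), c) ∈ h := by
  rw [colorGraph, edgeSet_fromEdgeSet]
  exact and_iff_left e.2

/-- Either some chord gets the colour of the cycle, or all chords get the other one. -/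
lemma hasMonoCopy_cycleGraph_of_chords {h : EdgeHistory V 2} {c : Fin 2}
    (hx : IsClosedWalk (colorGraph h c) x) (hchord : ∀ j, ∃ c', ((chord x j : Sym2 V), c') ∈ h) :
    HasMonoCopy (cycleGraph (m + 1)) h := by
  simp only [← mem_edgeSet_colorGraph] at hchord
  by_cases hc : ∃ j, (chord x j : Sym2 V) ∈ (colorGraph h c).edgeSet
  · obtain ⟨j, hj⟩ := hc
    exact ⟨c, isCopy_cycleGraph_of_chord hx hj⟩
  · refine ⟨1 - c, isCopy_cycleGraph_of_forall_chord (x := x) fun j => ?_⟩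
    obtain ⟨c', hc'⟩ := hchord j
    obtain rfl : c' = 1 - c := by
      have hne : c' ≠ c := fun heq => hc ⟨j, heq ▸ hc'⟩
      lia
    exact hc'

end ForcedCopy

section RandomDrawsGame

variable {V : Type} {r : ℕ}

/-- The history of the game in which the edges of `l` are presented in order, repetitions being
skipped. -/
noncomputable def playDraws (π : PainterStrategy V r) (l : List (Edge V)) : EdgeHistory V r :=
  runPainter π ((firstOccurrences l).map Subtype.val)

lemma exists_mem_playDraws_iff {π : PainterStrategy V r} {l : List (Edge V)} {e : Sym2 V} :
    (∃ c, (e, c) ∈ playDraws π l) ↔ ∃ e' ∈ l, (e' : Sym2 V) = e := by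
  simp only [playDraws, exists_mem_runPainter_iff, List.mem_map, mem_firstOccurrences]

lemma playDraws_subset_append (π : PainterStrategy V r) (l₁ l₂ : List (Edge V)) :
    playDraws π l₁ ⊆ playDraws π (l₁ ++ l₂) := by
  obtain ⟨l, hl⟩ := firstOccurrences_prefix_append l₁ l₂
  rw [playDraws, playDraws, ← hl, List.map_append]
  exact (runPainter_prefix_append π _ _).subset

lemma colorGraph_playDraws_le_drawnGraph (π : PainterStrategy V r) {K : ℕ} (g : Fin K → Edge V)
    (c : Fin r) : colorGraph (playDraws π (List.ofFn g)) c ≤ drawnGraph g := by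
  refine fromEdgeSet_mono fun e he => ?_
  obtain ⟨e', he', rfl⟩ := exists_mem_playDraws_iff.1 ⟨c, he⟩
  exact (List.mem_ofFn.1 he').imp fun _ => congrArg _

variable [Fintype V]

lemma card_range_le_sum_card_edgeFinset (π : PainterStrategy V r) {K : ℕ} (g : Fin K → Edge V) :
    #{e | ∃ i, g i = e} ≤ ∑ c, #(colorGraph (playDraws π (List.ofFn g)) c).edgeFinset := by
  refine (card_le_card_of_injOn Subtype.val (fun e he => ?_) Subtype.val_injective.injOn).trans
    card_biUnion_le
  obtain ⟨i, rfl⟩ := (mem_filter.1 he).2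
  obtain ⟨c, hc⟩ := exists_mem_playDraws_iff.2 ⟨g i, List.mem_ofFn.2 ⟨i, rfl⟩, rfl⟩
  exact mem_biUnion.2 ⟨c, mem_univ c, mem_edgeFinset.2 (mem_edgeSet_colorGraph.2 hc)⟩

variable [Nonempty V]

lemma exists_many_monochromatic_cycles {K L : ℕ} [NeZero L] (hL : Even L)
    (π : PainterStrategy V 2) {g : Fin K → Edge V} {q : ℝ} (hq : 0 ≤ q)
    (hqK : q ≤ K / (4 * Fintype.card V)) (hrange : (K / 4 : ℝ) ≤ #{e | ∃ i, g i = e})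
    (hdeg : #{x : ZMod L → V | IsClosedWalk (drawnGraph g) x ∧ ¬ Function.Injective x} ≤
      q ^ L / 2) :
    ∃ c, q ^ L / 2 ≤
      #{x : ZMod L ↪ V | IsClosedWalk (colorGraph (playDraws π (List.ofFn g)) c) x} := by
  set G : Fin 2 → SimpleGraph V := colorGraph (playDraws π (List.ofFn g))
  obtain ⟨c, hc⟩ : ∃ c, (K / 8 : ℝ) ≤ #(G c).edgeFinset := by
    by_contra! h
    have hsum : (#{e | ∃ i, g i = e} : ℝ) ≤ ∑ c, (#(G c).edgeFinset : ℝ) :=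
      mod_cast card_range_le_sum_card_edgeFinset π g
    rw [Fin.sum_univ_two] at hsum
    linarith [h 0, h 1]
  have hwalks : q ^ L ≤ #{x : ZMod L → V | IsClosedWalk (G c) x} := by
    refine le_trans (pow_le_pow_left₀ hq (hqK.trans ?_) L) (pow_le_card_isClosedWalk hL)
    rw [← div_div]
    gcongr
    linarith
  have hinj : #{x : ZMod L → V | IsClosedWalk (G c) x ∧ Function.Injective x} ≤
      #{x : ZMod L ↪ V | IsClosedWalk (G c) x} := by
    rw [← card_map ⟨fun x : ZMod L ↪ V => ⇑x, DFunLike.coe_injective⟩]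
    refine card_le_card fun x hx => ?_
    obtain ⟨hwalk, hx⟩ := (mem_filter.1 hx).2
    exact mem_map.2 ⟨⟨x, hx⟩, mem_filter.2 ⟨mem_univ _, hwalk⟩, rfl⟩
  have hninj : #{x : ZMod L → V | IsClosedWalk (G c) x ∧ ¬ Function.Injective x} ≤
      #{x : ZMod L → V | IsClosedWalk (drawnGraph g) x ∧ ¬ Function.Injective x} :=
    card_le_card (monotone_filter_right _ fun x _ h =>
      ⟨fun i => colorGraph_playDraws_le_drawnGraph π g c (h.1 i), h.2⟩)
  have hsplit := card_filter_add_card_filter_not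
    (s := ({x : ZMod L → V | IsClosedWalk (G c) x} : Finset (ZMod L → V))) Function.Injective
  rw [filter_filter, filter_filter] at hsplit
  refine ⟨c, ?_⟩
  rify at hinj hninj hsplit
  linarith

end RandomDrawsGame

section Overlaps

variable {V : Type} [Fintype V] {m : ℕ} [NeZero m] {p θ : ℝ}

/-- The sum of the overlap weights of the chords over all pairs of cycles of length `(m + 1) * m`
in `G`; it controls the variance of the number of cycles whose chords are all presented. -/
noncomputable def overlapSum (m : ℕ) [NeZero m] (p : ℝ) (G : SimpleGraph V) : ℝ :=
  ∑ z : (ZMod ((m + 1) * m) ↪ V) × (ZMod ((m + 1) * m) ↪ V)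
    with IsClosedWalk G z.1 ∧ IsClosedWalk G z.2, overlapWeight p (chord z.1) (chord z.2)

lemma overlapSum_nonneg (hp : 0 ≤ p) (G : SimpleGraph V) : 0 ≤ overlapSum m p G :=
  sum_nonneg fun _ _ => overlapWeight_nonneg hp _ _

lemma overlapSum_mono (hp : 0 ≤ p) {G G' : SimpleGraph V} (h : G ≤ G') :
    overlapSum m p G ≤ overlapSum m p G' :=
  sum_le_sum_of_subset_of_nonneg
    (monotone_filter_right _ fun _ _ hz => ⟨fun i => h (hz.1 i), fun i => h (hz.2 i)⟩)
    fun _ _ _ => overlapWeight_nonneg hp _ _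

lemma sum_overlapWeight_eq_overlapSum (G : SimpleGraph V) :
    ∑ x ∈ ({x | IsClosedWalk G x} : Finset (ZMod ((m + 1) * m) ↪ V)),
      ∑ x' ∈ ({x | IsClosedWalk G x} : Finset (ZMod ((m + 1) * m) ↪ V)),
        overlapWeight p (chord x) (chord x') = overlapSum m p G := by
  rw [overlapSum, ← sum_product', ← filter_product, univ_product_univ]

lemma expect_overlapSum_le [Nonempty V] {κ : Type*} [Fintype κ] [DecidableEq κ] (hm : 2 ≤ m)
    (hpκ : p = Fintype.card κ / Fintype.card (Edge V)) (hp : 0 < p) (hp₁ : p ≤ 1) (hθ : 1 ≤ θ)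
    (hθp : θ ^ (m + 1) ≤ Fintype.card V ^ m * p ^ (m + 1)) :
    𝔼 g : κ → Edge V, overlapSum m p (drawnGraph g) ≤
      (Fintype.card V : ℝ) ^ (2 * ((m + 1) * m)) * p ^ (2 * ((m + 1) * m) + 2 * (m + 1)) / θ *
        (2 * ((m + 1) * m) : ℕ) ^ (2 * ((m + 1) * m)) := by
  refine le_trans ?_ (sum_pow_mul_overlapWeight_le hm hp hp₁ hθ hθp)
  rw [← Fintype.sum_prod_type', ← univ_product_univ]
  simp only [overlapSum]
  rw [expect_sum_filter]
  refine sum_le_sum fun z _ => ?_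
  rw [mul_comm]
  refine mul_le_mul_of_nonneg_right ?_ (overlapWeight_nonneg hp.le _ _)
  have hunion (g : κ → Edge V) : (IsClosedWalk (drawnGraph g) z.1 ∧ IsClosedWalk (drawnGraph g) z.2)
      ↔ ∀ e ∈ cycleEdges z.1 ∪ cycleEdges z.2, e ∈ (drawnGraph g).edgeSet := by
    simp only [isClosedWalk_iff, mem_union, or_imp, forall_and]
  rw [uniformProb_congr hunion, hpκ]
  exact uniformProb_forall_mem_edgeSet_drawnGraph_le _

end Overlaps

lemma le_mul_of_pow_le {n p θ : ℝ} {m : ℕ} (hn : 1 ≤ n) (hp : 0 < p) (hθ : 1 ≤ θ)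
    (hθp : θ ^ (m + 1) ≤ n ^ m * p ^ (m + 1)) : θ ≤ n * p ∧ n * θ ≤ (n * p) ^ (m + 1) := by
  have hmul : n * θ ^ (m + 1) ≤ (n * p) ^ (m + 1) :=
    calc n * θ ^ (m + 1) ≤ n * (n ^ m * p ^ (m + 1)) := by gcongr
      _ = (n * p) ^ (m + 1) := by ring
  refine ⟨le_of_pow_le_pow_left₀ m.succ_ne_zero (by positivity) ?_, le_trans ?_ hmul⟩
  · exact (le_mul_of_one_le_left (by positivity) hn).trans hmul
  · gcongr
    exact le_self_pow₀ hθ m.succ_ne_zero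

section Rounds

variable {V : Type} [Fintype V] {K m : ℕ} [NeZero m] {p θ : ℝ}

lemma uniformProb_not_hasMonoCopy_le (hK : 0 < K) (hKE : K ≤ Fintype.card (Edge V))
    (hpK : p = K / Fintype.card (Edge V)) {h : EdgeHistory V 2} {c : Fin 2}
    (hC : ({x : ZMod ((m + 1) * m) ↪ V | IsClosedWalk (colorGraph h c) x} : Finset _).Nonempty)
    {H : (Fin (m + 1) → Fin K → Edge V) → EdgeHistory V 2} (hH : ∀ g, h ⊆ H g)
    (hdraws : ∀ g j i, ∃ c', ((g j i : Sym2 V), c') ∈ H g) :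
    uniformProb (fun g => ¬ HasMonoCopy (cycleGraph (m + 1)) (H g)) ≤
      4 * overlapSum m p (colorGraph h c) /
        (#{x : ZMod ((m + 1) * m) ↪ V | IsClosedWalk (colorGraph h c) x} *
          (p / 2) ^ (m + 1)) ^ 2 := by
  set C : Finset (ZMod ((m + 1) * m) ↪ V) := {x | IsClosedWalk (colorGraph h c) x}
  have hp : 0 < p := by
    rw [hpK]
    have := hK.trans_le hKE
    positivity
  have hhit := uniformProb_card_hit_lt_le (κ := Fin K) (ι := Fin (m + 1)) C chord hC
    (by simpa using hK) (by simpa using hKE) (by simpa using hpK)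
  rw [Fintype.card_fin, sum_overlapWeight_eq_overlapSum] at hhit
  refine (uniformProb_mono fun g hg => ?_).trans hhit
  have hnone : ∀ x ∈ C, ¬ ∀ j, ∃ i, g j i = chord x j := fun x hx hall => by
    refine hg (hasMonoCopy_cycleGraph_of_chords (x := x) (c := c)
      (fun i => colorGraph_mono (hH g) c ((mem_filter.1 hx).2 i)) fun j => ?_)
    obtain ⟨i, hi⟩ := hall j
    exact hi ▸ hdraws g j i
  have := hC.card_pos
  refine lt_of_eq_of_lt ?_ (by positivity : (0 : ℝ) < #C * (p / 2) ^ (m + 1) / 2)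
  simpa [filter_eq_empty_iff] using hnone

lemma uniformProb_few_monochromatic_cycles_le [Nonempty V] {L k : ℕ} [NeZero L] (hL : L = 2 * k)
    (hK : 0 < K) (hKE : K ≤ Fintype.card (Edge V)) (hpK : p = K / Fintype.card (Edge V))
    (hV : (Fintype.card V : ℝ) ^ 2 / 4 ≤ Fintype.card (Edge V)) (hθ : 1 ≤ θ)
    (hθ₁ : θ ≤ Fintype.card V * p)
    (hθ₂ : Fintype.card V * θ ≤ (Fintype.card V * p) ^ k) (π : PainterStrategy V 2) :
    uniformProb (fun g : Fin K → Edge V => ¬ ∃ c, (Fintype.card V * p / 16) ^ L / 2 ≤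
      #{x : ZMod L ↪ V | IsClosedWalk (colorGraph (playDraws π (List.ofFn g)) c) x}) ≤
      16 / K + 2 * 16 ^ L * L ^ L / θ := by
  have hE : (0 : ℝ) < Fintype.card (Edge V) := mod_cast hK.trans_le hKE
  have hp : 0 < p := by rw [hpK]; positivity
  have hp₁ : p ≤ 1 := by rw [hpK]; exact div_le_one_of_le₀ (mod_cast hKE) hE.le
  set q : ℝ := Fintype.card V * p / 16 with hq
  have hq₀ : 0 < q := by positivity
  have hqK : q ≤ K / (4 * Fintype.card V) := by
    rw [hq, hpK, le_div_iff₀ (by positivity), mul_div_assoc', div_div, div_mul_eq_mul_div,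
      div_le_iff₀ (by positivity)]
    nlinarith [mul_le_mul_of_nonneg_left hV (Nat.cast_nonneg (α := ℝ) K)]
  have hdeg : uniformProb (fun g : Fin K → Edge V => q ^ L / 2 ≤
      #{x : ZMod L → V | IsClosedWalk (drawnGraph g) x ∧ ¬ Function.Injective x}) ≤
      2 * 16 ^ L * L ^ L / θ := by
    refine (markov_uniformProb (fun _ => Nat.cast_nonneg _) (by positivity)).trans ?_
    rw [div_le_iff₀ (by positivity)]
    refine (expect_card_degenerate_closedWalks_le hL (by simpa using hpK) hp hp₁ hθ hθ₁
      hθ₂).trans_eq ?_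
    rw [hq, div_pow]
    field_simp
  have hrange := uniformProb_card_range_lt_le (κ := Fin K) (E := Edge V) (by simpa using hK)
    (by simpa using hKE)
  rw [Fintype.card_fin] at hrange
  refine le_trans ?_ ((uniformProb_or_le _ _).trans (add_le_add hrange hdeg))
  refine uniformProb_mono fun g hg => ?_
  contrapose! hg
  exact exists_many_monochromatic_cycles (hL ▸ even_two_mul k) π hq₀.le hqK (by simpa using hg.1)
    hg.2.le

lemma sq_card_div_four_le_card_edge (hV : 2 ≤ Fintype.card V) :
    (Fintype.card V : ℝ) ^ 2 / 4 ≤ Fintype.card (Edge V) := by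
  rw [Sym2.card_subtype_not_diag, Nat.cast_choose_two]
  have : (2 : ℝ) ≤ Fintype.card V := mod_cast hV
  nlinarith

end Rounds

section RandomDrawsBound

/-- The constant in the failure probability for cycles of length `m + 1`: the first summand comes
from the degenerate closed walks of the first round, the second from the variance of the number of
cycles of length `(m + 1) * m` whose chords are all presented. -/
noncomputable def failureConst (m : ℕ) : ℝ :=
  2 * 16 ^ ((m + 1) * m) * ((m + 1) * m : ℕ) ^ ((m + 1) * m) +
    4 * (2 * 16 ^ ((m + 1) * m) * 2 ^ (m + 1)) ^ 2 *
      (2 * ((m + 1) * m) : ℕ) ^ (2 * ((m + 1) * m))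

variable {V : Type} [Fintype V] {K m : ℕ} {p θ : ℝ}

lemma expect_four_mul_overlapSum_div_le [Nonempty V] [NeZero m] {κ : Type*} [Fintype κ]
    [DecidableEq κ] (hm : 2 ≤ m) (hpκ : p = Fintype.card κ / Fintype.card (Edge V))
    (hp : 0 < p) (hp₁ : p ≤ 1) (hθ : 1 ≤ θ)
    (hθp : θ ^ (m + 1) ≤ Fintype.card V ^ m * p ^ (m + 1)) :
    𝔼 g : κ → Edge V, 4 * overlapSum m p (drawnGraph g) /
      ((Fintype.card V * p / 16) ^ ((m + 1) * m) / 2 * (p / 2) ^ (m + 1)) ^ 2 ≤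
      4 * (2 * 16 ^ ((m + 1) * m) * 2 ^ (m + 1)) ^ 2 *
        (2 * ((m + 1) * m) : ℕ) ^ (2 * ((m + 1) * m)) / θ := by
  rw [← expect_div, ← mul_expect, div_le_iff₀ (by positivity)]
  refine (mul_le_mul_of_nonneg_left (expect_overlapSum_le hm hpκ hp hp₁ hθ hθp)
    zero_le_four).trans_eq ?_
  generalize (m + 1) * m = L
  rw [← mul_add, pow_mul', pow_mul' p, div_pow, div_pow, pow_add, mul_pow]
  field_simp
  ring

lemma uniformProb_not_hasMonoCopy_playDraws_le (hm : 2 ≤ m) (hV : 2 ≤ Fintype.card V) (hK : 0 < K)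
    (hKE : K ≤ Fintype.card (Edge V)) (hpK : p = K / Fintype.card (Edge V)) (hθ : 1 ≤ θ)
    (hθp : θ ^ (m + 1) ≤ Fintype.card V ^ m * p ^ (m + 1)) (π : PainterStrategy V 2)
    {l : (Fin (m + 1) → Fin K → Edge V) → List (Edge V)} (hl : ∀ g j i, g j i ∈ l g) :
    uniformProb (fun g : (Fin K → Edge V) × (Fin (m + 1) → Fin K → Edge V) =>
      ¬ HasMonoCopy (cycleGraph (m + 1)) (playDraws π (List.ofFn g.1 ++ l g.2))) ≤
      16 / K + failureConst m / θ := by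
  have : NeZero m := ⟨by lia⟩
  have : Nonempty V := Fintype.card_pos_iff.1 (by lia)
  have hE : (0 : ℝ) < Fintype.card (Edge V) := mod_cast hK.trans_le hKE
  have : Nonempty (Edge V) := Fintype.card_pos_iff.1 (hK.trans_le hKE)
  have hp : 0 < p := by rw [hpK]; positivity
  have hp₁ : p ≤ 1 := by rw [hpK]; exact div_le_one_of_le₀ (mod_cast hKE) hE.le
  obtain ⟨k, hk⟩ : ∃ k, (m + 1) * m = 2 * k :=
    (mul_comm m _ ▸ Nat.even_mul_succ_self m).exists_two_nsmul
  obtain ⟨hθ₁, hθ₂⟩ := le_mul_of_pow_le (n := Fintype.card V) (mod_cast hV.trans' one_le_two)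
    hp hθ hθp
  have hmk : m + 1 ≤ k := by nlinarith
  have hfew := uniformProb_few_monochromatic_cycles_le hk hK hKE hpK
    (sq_card_div_four_le_card_edge hV) hθ hθ₁
    (hθ₂.trans (pow_le_pow_right₀ (hθ.trans hθ₁) hmk)) π
  have hoverlap := expect_four_mul_overlapSum_div_le (κ := Fin K) hm (by simpa using hpK) hp hp₁ hθ
    hθp
  rw [failureConst, add_div, ← add_assoc]
  refine le_trans (uniformProb_prod_le (fun g => ?_) fun g hg => ?_) (add_le_add hfew hoverlap)
  · exact div_nonneg (mul_nonneg zero_le_four (overlapSum_nonneg hp.le _)) (sq_nonneg _)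
  obtain ⟨c, hc⟩ := not_not.1 hg
  refine (uniformProb_not_hasMonoCopy_le hK hKE hpK (card_pos.1 (Nat.cast_pos.1
    (hc.trans_lt' (by positivity)))) (fun g' => playDraws_subset_append π _ (l g'))
    fun g' j i => exists_mem_playDraws_iff.2 ⟨g' j i, by simp [hl], rfl⟩).trans ?_
  have hnonneg := overlapSum_nonneg (m := m) hp.le (drawnGraph g)
  have hmono := overlapSum_mono (m := m) hp.le (colorGraph_playDraws_le_drawnGraph π g c)
  gcongr

end RandomDrawsBound

section GameBound

variable {α V : Type} [Fintype V] {r : ℕ}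

lemma uniformProb_not_hasMonoCopy_runPainter_le [Nonempty (Edge V)] (F : SimpleGraph α)
    (π : PainterStrategy V r) {K b N : ℕ} (hN : K + b * K ≤ N) :
    uniformProb (fun f : Fin N ↪ Edge V =>
        ¬ HasMonoCopy F (runPainter π ((List.ofFn f).map Subtype.val))) ≤
      uniformProb fun g : (Fin K → Edge V) × (Fin b → Fin K → Edge V) =>
        ¬ HasMonoCopy F (playDraws π
          (List.ofFn g.1 ++ univ.toList.map (Function.uncurry g.2))) := by
  set o : List (Fin K ⊕ Fin b × Fin K) := (List.finRange K).map Sum.inl ++ univ.toList.map Sum.inr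
    with ho
  have hlength : o.length ≤ N := by simpa [ho] using hN
  refine (uniformProb_ofFn_embedding_le
    (Q := fun l => ¬ HasMonoCopy F (runPainter π (l.map Subtype.val))) (fun l l' h h' => h ?_)
    o hlength).trans_eq ?_
  · rw [List.map_append]
    exact h'.mono (runPainter_prefix_append π _ _).subset
  · rw [← uniformProb_comp_equiv ((Equiv.sumArrowEquivProdArrow _ _ _).trans
      ((Equiv.refl _).prodCongr (Equiv.curry _ _ _)))]
    refine uniformProb_congr fun g => ?_
    rw [playDraws, ho, List.map_append, List.map_map, List.map_map, List.ofFn_eq_map]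
    rfl

lemma one_sub_le_uniformProb_hasMonoCopy_runPainter {K m N : ℕ} {p θ : ℝ} (hm : 2 ≤ m)
    (hV : 2 ≤ Fintype.card V) (hK : 0 < K) (hKN : (m + 2) * K ≤ N)
    (hN : N ≤ Fintype.card (Edge V)) (hpK : p = K / Fintype.card (Edge V)) (hθ : 1 ≤ θ)
    (hθp : θ ^ (m + 1) ≤ Fintype.card V ^ m * p ^ (m + 1)) (π : PainterStrategy V 2) :
    1 - (16 / K + failureConst m / θ) ≤ uniformProb fun f : Fin N ↪ Edge V =>
      HasMonoCopy (cycleGraph (m + 1)) (runPainter π ((List.ofFn f).map Subtype.val)) := by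
  have hKE : K ≤ Fintype.card (Edge V) := by nlinarith
  have : Nonempty (Edge V) := Fintype.card_pos_iff.1 (hK.trans_le hKE)
  have : Nonempty (Fin N ↪ Edge V) := Function.Embedding.nonempty_of_card_le (by simpa using hN)
  have hcouple := uniformProb_not_hasMonoCopy_runPainter_le (cycleGraph (m + 1)) π (K := K)
    (b := m + 1) (N := N) (by linarith)
  have hdraws := uniformProb_not_hasMonoCopy_playDraws_le hm hV hK hKE hpK hθ hθp π
    (l := fun g => univ.toList.map (Function.uncurry g))
      fun g j i => List.mem_map.2 ⟨(j, i), mem_toList.2 (mem_univ _), rfl⟩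
  rw [uniformProb_not] at hcouple
  linarith

lemma one_sub_le_onlineProb_onlineMonoCopy {K m n N : ℕ} {p θ : ℝ} (hm : 2 ≤ m) (hn : 2 ≤ n)
    (hK : 0 < K) (hKN : (m + 2) * K ≤ N) (hN : N ≤ n.choose 2) (hpK : p = K / n.choose 2)
    (hθ : 1 ≤ θ) (hθp : θ ^ (m + 1) ≤ n ^ m * p ^ (m + 1)) (π : PainterStrategy (Fin n) 2) :
    1 - (16 / K + failureConst m / θ) ≤
      onlineProb n N (OnlineMonoCopy (cycleGraph (m + 1)) π) := by
  have hcard : Fintype.card (Edge (Fin n)) = n.choose 2 := by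
    rw [Sym2.card_subtype_not_diag, Fintype.card_fin]
  have hbound := one_sub_le_uniformProb_hasMonoCopy_runPainter (V := Fin n) (N := N) (p := p) hm
    (by simpa using hn) hK hKN (by convert hN; convert hcard)
    (by rw [hpK]; convert rfl; convert hcard) hθ (by simpa using hθp) π
  rw [onlineProb_eq_uniformProb]
  convert hbound using 4
  simp only [OnlineMonoCopy, List.map_ofFn, Function.comp_def]

end GameBound

section Threshold

variable {m n N : ℕ}

lemma rpow_one_add_one_div_pow (n : ℝ) (hn : 0 ≤ n) (m : ℕ) :
    (n ^ (1 + 1 / (m + 1 : ℝ))) ^ (m + 1) = n ^ (m + 2) := by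
  rw [← Real.rpow_natCast, ← Real.rpow_mul hn, ← Real.rpow_natCast]
  congr 1
  push_cast
  field_simp
  ring

lemma div_pow_le_pow_mul_div_choose_pow {K : ℕ} (hn : 2 ≤ n) :
    (2 * K / (n : ℝ) ^ (1 + 1 / (m + 1 : ℝ))) ^ (m + 1) ≤ n ^ m * (K / n.choose 2) ^ (m + 1) := by
  have hn₂ : (2 : ℝ) ≤ n := mod_cast hn
  calc (2 * K / (n : ℝ) ^ (1 + 1 / (m + 1 : ℝ))) ^ (m + 1)
      = (n : ℝ) ^ m * (K / (n ^ 2 / 2)) ^ (m + 1) := by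
        rw [div_pow, rpow_one_add_one_div_pow _ n.cast_nonneg, div_pow, mul_pow, div_pow]
        field_simp
        ring
    _ ≤ n ^ m * (K / n.choose 2) ^ (m + 1) := by
        rw [Nat.cast_choose_two]
        have : (0 : ℝ) < n * (n - 1) / 2 := by nlinarith
        gcongr
        nlinarith

lemma one_sub_mul_div_le_onlineProb_onlineMonoCopy (hm : 2 ≤ m) (hn : 2 ≤ n)
    (hN : (m + 2) * (n : ℝ) ^ (1 + 1 / (m + 1 : ℝ)) ≤ N) (hNle : N ≤ n.choose 2)
    (π : PainterStrategy (Fin n) 2) :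
    1 - (32 + failureConst m) * (m + 2) * ((n : ℝ) ^ (1 + 1 / (m + 1 : ℝ)) / N) ≤
      onlineProb n N (OnlineMonoCopy (cycleGraph (m + 1)) π) := by
  set r : ℝ := (n : ℝ) ^ (1 + 1 / (m + 1 : ℝ))
  have hr₁ : 1 ≤ r := Real.one_le_rpow (mod_cast hn.trans' one_le_two) (by positivity)
  have hmN : m + 2 ≤ N := by
    have : (m + 2 : ℝ) ≤ N := hN.trans' (le_mul_of_one_le_right (by positivity) hr₁)
    exact_mod_cast this
  have hN₀ : (0 : ℝ) < N := mod_cast hmN.trans_lt' (by lia)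
  set K : ℕ := N / (m + 2)
  have hK₁ : 1 ≤ K := (Nat.one_le_div_iff (by lia)).2 hmN
  have hNK : (N : ℝ) ≤ 2 * K * (m + 2) := by
    have : N < (m + 2) * (K + 1) := Nat.lt_mul_div_succ N (by lia)
    have : N ≤ 2 * K * (m + 2) := by nlinarith
    exact_mod_cast this
  set θ : ℝ := N / ((m + 2) * r) with hθ
  have hθ₁ : 1 ≤ θ := (one_le_div (by positivity)).2 hN
  have hθK : θ ≤ 2 * K / r := by
    rw [hθ, div_le_div_iff₀ (by positivity) (by positivity)]
    nlinarith
  refine le_trans (sub_le_sub_left ?_ 1) (one_sub_le_onlineProb_onlineMonoCopy hm hn hK₁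
    (Nat.mul_div_le N _) hNle rfl hθ₁ ((pow_le_pow_left₀ (by positivity) hθK _).trans
      (div_pow_le_pow_mul_div_choose_pow hn)) π)
  have hKr : 16 / (K : ℝ) ≤ 32 * (m + 2) * (r / N) := by
    rw [mul_div_assoc', div_le_div_iff₀ (by positivity) hN₀]
    have : 2 * K * (m + 2 : ℝ) ≤ 2 * K * (m + 2) * r := le_mul_of_one_le_right (by positivity) hr₁
    linarith
  calc 16 / K + failureConst m / θ
      ≤ 32 * (m + 2) * (r / N) + failureConst m / θ := by gcongr
    _ = (32 + failureConst m) * (m + 2) * (r / N) := by rw [hθ]; field_simp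

end Threshold

/-- upper bound of Theorem 3. For every `ℓ ≥ 3` and `N(n)` with
`n^(1+1/ℓ) = o(N(n))` and `N(n) ≤ n(n-1)/2`, for every sequence of online Painter strategies
with 2 colors, a.a.s. the board after `N(n)` steps contains a monochromatic copy of `C_ℓ`. -/
theorem statement9 (ℓ : ℕ) (hℓ : 3 ≤ ℓ)
    (N : ℕ → ℕ)
    (hN : (fun n : ℕ => (n : ℝ) ^ ((1 : ℝ) + 1 / (ℓ : ℝ))) =o[atTop] (fun n : ℕ => (N n : ℝ)))
    (hNle : ∀ n : ℕ, N n ≤ n * (n - 1) / 2)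
    (π : (n : ℕ) → PainterStrategy (Fin n) 2) :
    Tendsto (fun n : ℕ =>
        onlineProb n (N n) (OnlineMonoCopy (SimpleGraph.cycleGraph ℓ) (π n)))
      atTop (nhds 1) := by
  obtain ⟨m, rfl⟩ : ∃ m, ℓ = m + 1 := ⟨ℓ - 1, by lia⟩
  push_cast at hN
  have hlower : Tendsto (fun n : ℕ => 1 - (32 + failureConst m) * (m + 2) *
      ((n : ℝ) ^ (1 + 1 / (m + 1 : ℝ)) / N n)) atTop (nhds 1) := by
    simpa using (hN.tendsto_div_nhds_zero.const_mul _).const_sub 1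
  have hlarge : ∀ᶠ n : ℕ in atTop, (m + 2) * (n : ℝ) ^ (1 + 1 / (m + 1 : ℝ)) ≤ N n := by
    filter_upwards [hN.def (c := 1 / (m + 2)) (by positivity)] with n hn
    rwa [Real.norm_of_nonneg (by positivity), Real.norm_of_nonneg (by positivity),
      one_div_mul_eq_div, le_div_iff₀' (by positivity)] at hn
  refine tendsto_of_tendsto_of_tendsto_of_le_of_le' hlower tendsto_const_nhds ?_ ?_
  · filter_upwards [hlarge, eventually_ge_atTop 2] with n hn hn₂
    exact one_sub_mul_div_le_onlineProb_onlineMonoCopy (by lia) hn₂ hn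
      (Nat.choose_two_right n ▸ hNle n) (π n)
  · exact .of_forall fun n => onlineProb_eq_uniformProb (OnlineMonoCopy _ (π n)) ▸
      uniformProb_le_one _
end

section
/- Let F be the bowtie graph (two triangles joined by an edge: vertex set {1,...,6}, edges {1,2},{1,3},{2,3},{4,5},{4,6},{5,6},{1,4}). There exists a sequence of online Painter strategies with 2 colors (one for each board size n) such that for every function N : ℕ → ℕ with N(n) = o(n^{60/43}), the probability that the board G_{N(n)} of the online F-avoidance game with 2 colors on n vertices contains a monochromatic copy of F tends to 0 as n → ∞. -/
open SimpleGraph Filter Asymptotics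
open scoped Classical

/-- The bowtie graph: two triangles `{0,1,2}` and `{3,4,5}` joined by the edge `{0,3}`
(vertices `1,…,6` of the informal statement correspond to `0,…,5` here). -/
def bowtie : SimpleGraph (Fin 6) :=
  SimpleGraph.fromEdgeSet
    {s(0, 1), s(0, 2), s(1, 2), s(3, 4), s(3, 5), s(4, 5), s(0, 3)}

/-!
Put `p = N / n ^ 2`, so that `p = o(n ^ (-26 / 43))`. By the first moment method the board a.a.s.
contains no set of boundedly many vertices whose weight `43 v - 26 e` is nonpositive, and Painter
only has to ensure that a monochromatic bowtie forces such a set.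

Painter plays red (color `0`) by default and blue (color `1`) only if red would close a red
triangle, and then only if blue does not complete a blue bowtie. Hence there is never a blue bowtie,
and the last edge `e` of a red triangle would have completed a bowtie with six older blue edges.
Those edges are blue because each of them closed a red triangle, so every edge of this bowtie,
including `e`, has an apex: a common neighbor of its ends along older red edges. When the apexes are
distinct, this structure has `6 + 7` vertices and `7 + 14` edges, hence weight `43 * 13 - 26 * 21 =
13`, and coincidences only lower the weight.

A red bowtie contains two red triangles joined by a red edge, hence two such structures. Close the
earlier one under adding vertices with two neighbors in it, each of which lowers the weight by at
least `2 * 26 - 43 = 9`. If the bowtie of the later structure avoids the resulting set, then this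
structure adds at most `13` to the weight, while the joining edge lowers it by `26`. If the bowtie
meets the set, then adding the structure lowers the weight by at least `13`, except for overlaps
where it only lowers it by at least `11`; then the joining edge forces a coincidence that pays for
the difference.
-/

namespace OnlineAvoidance

open Finset

section Potential

variable {V : Type*}

/-- The weight `43 v - 26 e` of the subgraph of `G` spanned by `S`, where `v` and `e` are its
numbers of vertices and edges: `n ^ v * p ^ e` is small for `p ≪ n ^ (-26 / 43)` when the
weight is nonpositive. The set `G.interedges S S` consists of ordered pairs, hence the factor
`13`. -/
noncomputable def potential (G : SimpleGraph V) (S : Finset V) : ℤ :=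
  43 * #S - 13 * #(G.interedges S S)

lemma potential_anti {G H : SimpleGraph V} (h : G ≤ H) (S : Finset V) :
    potential H S ≤ potential G S := by
  have hcard : #(G.interedges S S) ≤ #(H.interedges S S) :=
    card_le_card fun x hx ↦ by
      rw [mem_interedges_iff] at hx ⊢
      exact ⟨hx.1, hx.2.1, h hx.2.2⟩
  unfold potential
  omega

lemma potential_union {G : SimpleGraph V} {Q Z : Finset V} (hd : Disjoint Q Z) :
    potential G (Q ∪ Z) = potential G Q + potential G Z - 26 * #(G.interedges Z Q) := by
  have hsplit : G.interedges (Q ∪ Z) (Q ∪ Z) =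
      (G.interedges Q Q ∪ G.interedges Z Z) ∪ (G.interedges Z Q ∪ G.interedges Q Z) := by
    ext ⟨x, y⟩
    simp only [mk_mem_interedges_iff, mem_union]
    tauto
  have hd' : ∀ v, v ∈ Q → v ∉ Z := fun _ ↦ (Finset.disjoint_left.1 hd ·)
  have hcard : #(G.interedges (Q ∪ Z) (Q ∪ Z)) =
      #(G.interedges Q Q) + #(G.interedges Z Z) + 2 * #(G.interedges Z Q) := by
    have hcomm : #(G.interedges Q Z) = #(G.interedges Z Q) :=
      have := G.symm
      Rel.card_interedges_comm Q Z
    rw [hsplit, card_union_of_disjoint, card_union_of_disjoint, card_union_of_disjoint, hcomm,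
      two_mul]
    all_goals
      rw [Finset.disjoint_left]
      rintro ⟨x, y⟩
      simp only [mk_mem_interedges_iff, mem_union]
      grind
  unfold potential
  rw [hcard, card_union_of_disjoint hd]
  push_cast
  ring

lemma potential_insert_le {G : SimpleGraph V} {P : Finset V} {x y z : V} (hx : x ∉ P)
    (hy : y ∈ P) (hz : z ∈ P) (hyz : y ≠ z) (hxy : G.Adj x y) (hxz : G.Adj x z) :
    potential G (insert x P) ≤ potential G P - 9 := by
  have hsub : ({(x, y), (x, z)} : Finset (V × V)) ⊆ G.interedges {x} P := by
    simp only [insert_subset_iff, singleton_subset_iff, mk_mem_interedges_iff, mem_singleton]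
    exact ⟨⟨trivial, hy, hxy⟩, trivial, hz, hxz⟩
  have hpair : #({(x, y), (x, z)} : Finset (V × V)) = 2 := card_pair (by simp [hyz])
  have htwo := card_le_card hsub
  have hunion := potential_union (G := G) (disjoint_singleton_right.2 hx)
  have hsingle : potential G {x} ≤ 43 := by
    unfold potential
    rw [card_singleton]
    omega
  rw [union_comm, ← insert_eq] at hunion
  omega

lemma potential_le_sub_of_adj {G H : SimpleGraph V} {S : Finset V} {x y : V} (hle : H ≤ G)
    (hx : x ∈ S) (hy : y ∈ S) (hG : G.Adj x y) (hH : ¬ H.Adj x y) :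
    potential G S ≤ potential H S - 26 := by
  have hsub : H.interedges S S ∪ {(x, y), (y, x)} ⊆ G.interedges S S := by
    rintro ⟨u, v⟩
    simp only [mem_union, mk_mem_interedges_iff, mem_insert, mem_singleton, Prod.mk.injEq]
    rintro (h | ⟨rfl, rfl⟩ | ⟨rfl, rfl⟩)
    exacts [⟨h.1, h.2.1, hle h.2.2⟩, ⟨hx, hy, hG⟩, ⟨hy, hx, hG.symm⟩]
  have hdisj : Disjoint (H.interedges S S) {(x, y), (y, x)} := by
    simp [mk_mem_interedges_iff, hH, H.adj_comm y x]
  have hpair : #({(x, y), (y, x)} : Finset (V × V)) = 2 := card_pair (by simp [hG.ne])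
  have hcard := card_le_card hsub
  rw [card_union_of_disjoint hdisj, hpair] at hcard
  unfold potential
  omega

lemma card_interedges_self (G : SimpleGraph V) (S : Finset V) :
    #(G.interedges S S) = 2 * #{e ∈ S.sym2 | e ∈ G.edgeSet} := by
  have hmaps : ∀ p ∈ G.interedges S S,
      s(p.1, p.2) ∈ ({e ∈ S.sym2 | e ∈ G.edgeSet} : Finset (Sym2 V)) := by
    rintro ⟨x, y⟩ h
    rw [mk_mem_interedges_iff] at h
    simpa [and_assoc] using h
  have hfiber : ∀ e ∈ ({e ∈ S.sym2 | e ∈ G.edgeSet} : Finset (Sym2 V)),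
      #{p ∈ G.interedges S S | s(p.1, p.2) = e} = 2 := by
    intro e he
    induction e with | _ x y =>
    have hxy : (x ∈ S ∧ y ∈ S) ∧ G.Adj x y := by simpa using he
    have : ({p ∈ G.interedges S S | s(p.1, p.2) = s(x, y)} : Finset (V × V)) =
        {(x, y), (y, x)} := by
      ext ⟨u, v⟩
      simp only [mem_filter, mk_mem_interedges_iff, Sym2.eq_iff, mem_insert, mem_singleton,
        Prod.mk.injEq, and_iff_right_iff_imp]
      rintro (⟨rfl, rfl⟩ | ⟨rfl, rfl⟩)
      exacts [⟨hxy.1.1, hxy.1.2, hxy.2⟩, ⟨hxy.1.2, hxy.1.1, hxy.2.symm⟩]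
    rw [this]
    exact card_pair (by simp [hxy.2.ne])
  rw [card_eq_sum_card_fiberwise hmaps, sum_const_nat hfiber, mul_comm]

end Potential

section ApexCopy

variable {α V : Type*}

/-- A copy of `F` in `G` in which every edge `f` has an apex, a vertex joined to both ends of `f`.
The apex may belong to the copy, but then its edges to the ends of `f` do not. The function `apex`
is arbitrary outside the edges of `F`. -/
structure ApexCopy (F : SimpleGraph α) (G : SimpleGraph V) where
  vert : α ↪ V
  apex : Sym2 α → V
  adj_vert {i j : α} : F.Adj i j → G.Adj (vert i) (vert j)
  adj_apex {i j : α} : F.Adj i j → G.Adj (apex s(i, j)) (vert i)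
  not_adj_of_apex_eq {i j k : α} : F.Adj i j → apex s(i, j) = vert k → ¬ F.Adj k i

namespace ApexCopy

variable {F : SimpleGraph α} {G : SimpleGraph V}

lemma adj_apex_right {C : ApexCopy F G} {i j : α} (hij : F.Adj i j) :
    G.Adj (C.apex s(i, j)) (C.vert j) :=
  Sym2.eq_swap ▸ C.adj_apex hij.symm

/-- If an edge `f ≠ e₀` of the copy has one end and its apex in `P`, its other end is in `P`. -/
def IsClosedExcept (C : ApexCopy F G) (P : Finset V) (e₀ : Sym2 α) : Prop :=
  ∀ ⦃i j⦄, F.Adj i j → s(i, j) ≠ e₀ → C.apex s(i, j) ∈ P → C.vert i ∈ P → C.vert j ∈ P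

lemma isClosedExcept_empty (C : ApexCopy F G) (e₀ : Sym2 α) : C.IsClosedExcept ∅ e₀ :=
  fun _ _ _ _ _ h ↦ (notMem_empty _ h).elim

variable [Fintype α]

section Core

variable (C : ApexCopy F G) (P : Finset V)

/-- The vertices of `F` that the copy `C` places in `P`. -/
noncomputable def inside : Finset α := {i | C.vert i ∈ P}

/-- The set `P` together with the vertices of the copy `C`, but not yet the apexes. -/
noncomputable def core : Finset V := P ∪ univ.map C.vert

/-- The adjacent ordered pairs in the core that neither lie in `P` nor are edges of the copy. -/
noncomputable def extraPairs : Finset (V × V) :=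
  {p ∈ G.interedges (C.core P) (C.core P) | ¬ (F.map C.vert).Adj p.1 p.2 ∧
    ¬ (p.1 ∈ P ∧ p.2 ∈ P)}

/-- The vertices of the copy to which `w` is joined by an extra pair. -/
noncomputable def extraNbrs (w : V) : Finset α := {l | (w, C.vert l) ∈ C.extraPairs P}

/-- The neighbors of `z` in the core. -/
noncomputable def coreNbrs (z : V) : Finset V := {x ∈ C.core P | G.Adj z x}

variable {C P}

lemma mem_inside {i : α} : i ∈ C.inside P ↔ C.vert i ∈ P := by simp [inside]

lemma mem_core {x : V} : x ∈ C.core P ↔ x ∈ P ∨ ∃ i, C.vert i = x := by simp [core]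

lemma vert_mem_core (i : α) : C.vert i ∈ C.core P := mem_core.2 (.inr ⟨i, rfl⟩)

lemma subset_core : P ⊆ C.core P := subset_union_left

lemma mem_extraPairs {x y : V} : (x, y) ∈ C.extraPairs P ↔
    x ∈ C.core P ∧ y ∈ C.core P ∧ G.Adj x y ∧ ¬ (F.map C.vert).Adj x y ∧ ¬ (x ∈ P ∧ y ∈ P) := by
  simp [extraPairs, mk_mem_interedges_iff, and_assoc]

lemma swap_mem_extraPairs {x y : V} (h : (x, y) ∈ C.extraPairs P) : (y, x) ∈ C.extraPairs P := by
  rw [mem_extraPairs] at h ⊢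
  rw [G.adj_comm, SimpleGraph.adj_comm]
  tauto

lemma mem_extraNbrs {w : V} {l : α} : l ∈ C.extraNbrs P w ↔ (w, C.vert l) ∈ C.extraPairs P := by
  simp [extraNbrs]

lemma card_core : #(C.core P) + #(C.inside P) = #P + Fintype.card α := by
  have hinter : P ∩ univ.map C.vert = (C.inside P).map C.vert := by
    ext x
    simp only [mem_inter, Finset.mem_map, mem_univ, true_and, mem_inside]
    grind
  rw [core, ← card_map C.vert (s := C.inside P), ← hinter, card_union_add_card_inter, card_map,
    card_univ]

lemma card_extraPairs : #(C.extraPairs P) =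
    ∑ w ∈ C.core P, #(C.extraNbrs P w) + ∑ p ∈ P \ univ.map C.vert, #(C.extraNbrs P p) := by
  set X : Finset V := univ.map C.vert with hX
  have hrow (w : V) : #(C.extraNbrs P w) = #{p ∈ C.extraPairs P | p.1 = w ∧ p.2 ∈ X} := by
    rw [← card_image_of_injective _ (f := fun l ↦ (w, C.vert l)) (by intro; simp)]
    congr 1
    ext ⟨x, y⟩
    simp only [mem_image, mem_extraNbrs, Prod.mk.injEq, hX, mem_filter, Finset.mem_map, mem_univ,
      true_and]
    grind
  have hcol (w : V) : #(C.extraNbrs P w) = #{p ∈ C.extraPairs P | p.2 = w ∧ p.1 ∈ X} := by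
    rw [hrow]
    refine card_equiv (Equiv.prodComm V V) fun p ↦ ?_
    simp only [mem_filter, Equiv.prodComm_apply, Prod.fst_swap, Prod.snd_swap]
    exact and_congr_left fun _ ↦ ⟨swap_mem_extraPairs, swap_mem_extraPairs⟩
  have hin : #{p ∈ C.extraPairs P | p.2 ∈ X} = ∑ w ∈ C.core P, #(C.extraNbrs P w) := by
    rw [card_eq_sum_card_fiberwise (f := Prod.fst) (t := C.core P)]
    · refine sum_congr rfl fun w _ ↦ ?_
      rw [hrow, filter_filter]
      simp only [and_comm]
    · exact fun p hp ↦ (mem_extraPairs.1 (mem_filter.1 hp).1).1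
  have hout : #{p ∈ C.extraPairs P | ¬ p.2 ∈ X} = ∑ p ∈ P \ X, #(C.extraNbrs P p) := by
    rw [card_eq_sum_card_fiberwise (f := Prod.snd) (t := P \ X)]
    · refine sum_congr rfl fun w hw ↦ ?_
      rw [hcol, filter_filter]
      congr 1
      ext ⟨x, y⟩
      simp only [mem_filter, mem_extraPairs, mem_core, hX, Finset.mem_map, mem_univ, true_and,
        Finset.mem_sdiff] at hw ⊢
      grind
    · rintro ⟨x, y⟩ hp
      simp only [mem_coe, mem_filter, mem_extraPairs, mem_core, hX, Finset.mem_map, mem_univ,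
        true_and, Finset.mem_sdiff] at hp ⊢
      tauto
  rw [← card_filter_add_card_filter_not (s := C.extraPairs P) (fun p ↦ p.2 ∈ X), hin, hout]

end Core

section Extension

variable [DecidableEq α] [DecidableRel F.Adj] (C : ApexCopy F G) (P : Finset V)

/-- The edges of `F` that the copy `C` does not place inside `P`. -/
noncomputable def newEdges : Finset (Sym2 α) := F.edgeFinset \ (C.inside P).sym2

/-- The vertex set obtained from `P` by adding the copy `C` and the apexes of its new edges. -/
noncomputable def extension : Finset V := C.core P ∪ (C.newEdges P).image C.apex

/-- The vertices of the extension of `P` that only serve as apexes. -/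
noncomputable def outer : Finset V := C.extension P \ C.core P

/-- The number of new edges whose apex is `w`. -/
noncomputable def load (w : V) : ℕ := #{f ∈ C.newEdges P | C.apex f = w}

variable {C P}

lemma mem_newEdges {i j : α} :
    s(i, j) ∈ C.newEdges P ↔ F.Adj i j ∧ ¬ (C.vert i ∈ P ∧ C.vert j ∈ P) := by
  simp [newEdges, mem_inside]

lemma core_subset_extension : C.core P ⊆ C.extension P := subset_union_left

lemma apex_mem_extension {f : Sym2 α} (hf : f ∈ C.newEdges P) : C.apex f ∈ C.extension P :=
  mem_union_right _ (mem_image_of_mem _ hf)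

lemma exists_apex_eq {z : V} (hz : z ∈ C.outer P) : ∃ f ∈ C.newEdges P, C.apex f = z := by
  rw [outer, Finset.mem_sdiff, extension, mem_union] at hz
  exact mem_image.1 (hz.1.resolve_left hz.2)

lemma card_extension_le : #(C.extension P) ≤ #P + Fintype.card α + #F.edgeFinset := by
  have hcore : #(C.core P) ≤ #P + Fintype.card α := card_core (C := C) ▸ Nat.le_add_right _ _
  have himage : #((C.newEdges P).image C.apex) ≤ #F.edgeFinset :=
    card_image_le.trans (card_le_card sdiff_subset)
  exact (card_union_le _ _).trans (by omega)

lemma card_orientedNewEdges :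
    #{p : α × α | F.Adj p.1 p.2 ∧ ¬ (C.vert p.1 ∈ P ∧ C.vert p.2 ∈ P)} = 2 * #(C.newEdges P) := by
  have h := two_mul_card_edgeFinset (F.deleteEdges ((C.inside P).sym2 : Set (Sym2 α)))
  rw [edgeFinset_deleteEdges] at h
  rw [newEdges, h]
  congr 1
  ext ⟨i, j⟩
  simp [mem_inside]

lemma card_interedges_core : #(G.interedges (C.core P) (C.core P)) =
    #(G.interedges P P) + 2 * #(C.newEdges P) + #(C.extraPairs P) := by
  obtain ⟨N, hN⟩ : ∃ N : Finset (α × α),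
    N = ({p | F.Adj p.1 p.2 ∧ ¬ (C.vert p.1 ∈ P ∧ C.vert p.2 ∈ P)} : Finset (α × α)) := ⟨_, rfl⟩
  have hmap (x y : V) : (x, y) ∈ N.map (C.vert.prodMap C.vert) ↔
      (F.map C.vert).Adj x y ∧ ¬ (x ∈ P ∧ y ∈ P) := by
    simp only [Finset.mem_map, hN, mem_filter, mem_univ, true_and, Prod.exists, Prod.mk.injEq,
      Function.Embedding.coe_prodMap, Prod.map_apply, map_adj]
    grind
  have hadj (x y : V) : (F.map C.vert).Adj x y → x ∈ C.core P ∧ y ∈ C.core P ∧ G.Adj x y := by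
    rw [map_adj]
    rintro ⟨i, j, hij, rfl, rfl⟩
    exact ⟨vert_mem_core i, vert_mem_core j, C.adj_vert hij⟩
  have hsplit : G.interedges (C.core P) (C.core P) =
      (G.interedges P P ∪ N.map (C.vert.prodMap C.vert)) ∪ C.extraPairs P := by
    ext ⟨x, y⟩
    have := @subset_core _ _ _ _ _ C P
    simp only [mem_union, mk_mem_interedges_iff, mem_extraPairs, hmap]
    grind
  rw [hsplit, card_union_of_disjoint, card_union_of_disjoint, card_map, hN,
    card_orientedNewEdges]
  all_goals
    rw [Finset.disjoint_left]
    rintro ⟨x, y⟩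
    simp only [mem_union, mk_mem_interedges_iff, mem_extraPairs, hmap]
    grind

lemma potential_core : potential G (C.core P) = potential G P +
    43 * (Fintype.card α - #(C.inside P)) - 26 * #(C.newEdges P) - 13 * #(C.extraPairs P) := by
  have hcard := card_core (C := C) (P := P)
  unfold potential
  rw [card_interedges_core]
  push_cast
  linarith

lemma sum_load : ∑ w ∈ C.core P, C.load P w + ∑ z ∈ C.outer P, C.load P z = #(C.newEdges P) := by
  rw [outer, add_comm, sum_sdiff core_subset_extension, card_eq_sum_card_fiberwise (f := C.apex)]
  · rfl
  · exact fun f hf ↦ apex_mem_extension hf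

lemma card_interedges_outer_core :
    #(G.interedges (C.outer P) (C.core P)) = ∑ z ∈ C.outer P, #(C.coreNbrs P z) := by
  rw [interedges_def, card_filter, sum_product]
  simp only [coreNbrs, card_filter]

/-- A new edge with a fresh apex changes the weight by `43 - 3 * 26 = -35`. A new edge whose apex is
in use already needs no vertex of weight `43`, which leaves `2 * 26 - 43 = 9` to its load. -/
lemma potential_extension_add_slack : potential G (C.extension P) +
      (∑ w ∈ C.core P, (13 * #(C.extraNbrs P w) - 9 * C.load P w : ℤ) +
        ∑ p ∈ P \ univ.map C.vert, (13 * #(C.extraNbrs P p) : ℤ) +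
        ∑ z ∈ C.outer P, (26 * #(C.coreNbrs P z) - 43 - 9 * C.load P z : ℤ) +
        13 * #(G.interedges (C.outer P) (C.outer P))) =
    potential G P + 43 * (Fintype.card α - #(C.inside P)) - 35 * #(C.newEdges P) := by
  have hext : C.extension P = C.core P ∪ C.outer P :=
    (union_sdiff_of_subset core_subset_extension).symm
  have hdisj : Disjoint (C.core P) (C.outer P) := disjoint_sdiff
  rw [hext, potential_union hdisj, potential_core, card_extraPairs,
    card_interedges_outer_core, ← sum_load]
  simp only [sum_sub_distrib, ← mul_sum, sum_const, potential]
  push_cast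
  ring

end Extension

end ApexCopy

end ApexCopy

section LoadBounds

variable {α V : Type*} [Fintype α] {F : SimpleGraph α} {G : SimpleGraph V}

/-- The edges of `F` with both ends in `M`. -/
def spannedEdges (F : SimpleGraph α) [DecidableEq α] [DecidableRel F.Adj] (M : Finset α) :
    Finset (Sym2 α) :=
  F.edgeFinset ∩ M.sym2

lemma mk_mem_spannedEdges [DecidableEq α] [DecidableRel F.Adj] {M : Finset α} {i j : α} :
    s(i, j) ∈ spannedEdges F M ↔ F.Adj i j ∧ i ∈ M ∧ j ∈ M := by
  simp [spannedEdges]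

namespace ApexCopy

variable {C : ApexCopy F G} {P : Finset V} {e₀ : Sym2 α} {w z : V} {i j : α}

/-- The vertices of the copy that are mapped to neighbors of `z`. -/
noncomputable def copyNbrs (C : ApexCopy F G) (z : V) : Finset α := {l | G.Adj z (C.vert l)}

lemma map_copyNbrs_subset_coreNbrs : (C.copyNbrs z).map C.vert ⊆ C.coreNbrs P z := by
  simp only [map_subset_iff_subset_preimage, copyNbrs, coreNbrs]
  intro l hl
  simpa [vert_mem_core] using hl

lemma mem_extraNbrs_apex (hij : F.Adj i j) (hcore : C.apex s(i, j) ∈ C.core P)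
    (hP : ¬ (C.apex s(i, j) ∈ P ∧ C.vert i ∈ P)) : i ∈ C.extraNbrs P (C.apex s(i, j)) := by
  rw [mem_extraNbrs, mem_extraPairs]
  refine ⟨hcore, vert_mem_core i, C.adj_apex hij, ?_, hP⟩
  rw [map_adj]
  rintro ⟨k, l, hkl, hk, hl⟩
  exact C.not_adj_of_apex_eq hij hk.symm (C.vert.injective hl ▸ hkl)

variable [DecidableEq α] [DecidableRel F.Adj]

lemma mk_mem_spannedEdges_extraNbrs_apex (hij : F.Adj i j) (hcore : C.apex s(i, j) ∈ C.core P)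
    (hP : C.apex s(i, j) ∈ P → C.vert i ∉ P ∧ C.vert j ∉ P) :
    s(i, j) ∈ spannedEdges F (C.extraNbrs P (C.apex s(i, j))) := by
  have hi := mem_extraNbrs_apex hij hcore fun h ↦ (hP h.1).1 h.2
  rw [Sym2.eq_swap] at hcore hP
  have hj := mem_extraNbrs_apex hij.symm hcore fun h ↦ (hP h.1).2 h.2
  rw [Sym2.eq_swap] at hj
  exact mk_mem_spannedEdges.2 ⟨hij, hi, hj⟩

lemma load_le_card_spannedEdges_extraNbrs (h : C.inside P = ∅) (hw : w ∈ C.core P) :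
    C.load P w ≤ #(spannedEdges F (C.extraNbrs P w)) := by
  have hP (i : α) : C.vert i ∉ P := by simp [← mem_inside, h]
  refine card_le_card fun f hf ↦ ?_
  induction f with | _ i j =>
  rw [mem_filter, mem_newEdges] at hf
  obtain ⟨⟨hij, -⟩, rfl⟩ := hf
  exact mk_mem_spannedEdges_extraNbrs_apex hij hw fun _ ↦ ⟨hP i, hP j⟩

lemma load_le_card_spannedEdges_extraNbrs_add_one (h : C.IsClosedExcept P e₀)
    (hw : w ∈ C.core P) : C.load P w ≤ #(spannedEdges F (C.extraNbrs P w)) + 1 := by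
  refine (card_le_card fun f hf ↦ ?_).trans (card_insert_le e₀ _)
  induction f with | _ i j =>
  rw [mem_filter, mem_newEdges] at hf
  obtain ⟨⟨hij, hP⟩, rfl⟩ := hf
  rw [mem_insert]
  refine or_iff_not_imp_left.2 fun hne ↦ mk_mem_spannedEdges_extraNbrs_apex hij hw fun ha ↦ ?_
  have hi := h hij hne ha
  rw [Sym2.eq_swap] at ha hne
  have hj := h hij.symm hne ha
  tauto

lemma load_eq_zero_of_extraNbrs_eq_empty (h : C.extraNbrs P w = ∅) (hw : w ∈ C.core P) :
    C.load P w = 0 := by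
  rw [load, card_eq_zero, filter_eq_empty_iff]
  rintro f hf rfl
  induction f with | _ i j =>
  obtain ⟨hij, hP⟩ := mem_newEdges.1 hf
  have hi : C.vert i ∈ P := by
    by_contra hi
    exact notMem_empty i (h ▸ mem_extraNbrs_apex hij hw fun hP ↦ hi hP.2)
  rw [Sym2.eq_swap] at h hw
  exact notMem_empty j (h ▸ mem_extraNbrs_apex hij.symm hw fun hj ↦ hP ⟨hi, hj.2⟩)

lemma load_le_card_spannedEdges_copyNbrs : C.load P z ≤ #(spannedEdges F (C.copyNbrs z)) := by
  refine card_le_card fun f hf ↦ ?_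
  induction f with | _ i j =>
  rw [mem_filter, mem_newEdges] at hf
  obtain ⟨⟨hij, -⟩, rfl⟩ := hf
  simp [mk_mem_spannedEdges, copyNbrs, hij, C.adj_apex hij, adj_apex_right hij]

lemma load_apex_pos {f : Sym2 α} (hf : f ∈ C.newEdges P) : 0 < C.load P (C.apex f) :=
  card_pos.2 ⟨f, mem_filter.2 ⟨hf, rfl⟩⟩

end ApexCopy

end LoadBounds

section Bowtie

instance : DecidableRel bowtie.Adj :=
  inferInstanceAs (DecidableRel (SimpleGraph.fromEdgeSet (V := Fin 6)
    {s(0, 1), s(0, 2), s(1, 2), s(3, 4), s(3, 5), s(4, 5), s(0, 3)}).Adj)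

lemma card_edgeFinset_bowtie : #bowtie.edgeFinset = 7 := by decide +kernel

lemma spannedEdges_bowtie_bounds_of_pos (M : Finset (Fin 6)) :
    0 < #(spannedEdges bowtie M) →
      43 + 9 * #(spannedEdges bowtie M) ≤ 26 * #M ∧
      (#M ≠ 2 → 43 + 9 * #(spannedEdges bowtie M) + 8 ≤ 26 * #M) := by
  decide +kernel +revert

lemma spannedEdges_bowtie_bounds_of_nonempty (M : Finset (Fin 6)) :
    M.Nonempty → 9 * (#(spannedEdges bowtie M) + 1) + 3 ≤ 13 * #M ∧
      9 * #(spannedEdges bowtie M) + 26 ≤ 26 * #M := by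
  decide +kernel +revert

lemma bowtie_attachment_cases (m : Finset (Fin 6)) :
    (43 * (6 - #m) - 35 * #(bowtie.edgeFinset \ m.sym2) : ℤ) ≤ -13 ∨ m = ∅ ∨ m = univ ∨
      (43 * (6 - #m) - 35 * #(bowtie.edgeFinset \ m.sym2) : ℤ) ≤ -11 ∧
        ∀ i ∈ m, ∃ j ∈ m, bowtie.Adj i j := by
  decide +kernel +revert

variable {V : Type*} {G : SimpleGraph V}

namespace ApexCopy

variable {C : ApexCopy bowtie G} {P : Finset V} {e₀ : Sym2 (Fin 6)} {w z : V}

lemma nine_mul_load_le (h : C.IsClosedExcept P e₀) (hw : w ∈ C.core P) :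
    9 * C.load P w ≤ 13 * #(C.extraNbrs P w) ∧
      ((C.extraNbrs P w).Nonempty → 9 * C.load P w + 3 ≤ 13 * #(C.extraNbrs P w)) := by
  rcases (C.extraNbrs P w).eq_empty_or_nonempty with hM | hM
  · simp [hM, load_eq_zero_of_extraNbrs_eq_empty hM hw]
  · have hload := load_le_card_spannedEdges_extraNbrs_add_one h hw
    have hbound := (spannedEdges_bowtie_bounds_of_nonempty _ hM).1
    omega

lemma card_copyNbrs_le : #(C.copyNbrs z) ≤ #(C.coreNbrs P z) := by
  rw [← card_map C.vert]
  exact card_le_card map_copyNbrs_subset_coreNbrs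

lemma copyNbrs_bounds (hz : z ∈ C.outer P) :
    43 + 9 * C.load P z ≤ 26 * #(C.copyNbrs z) ∧
      (#(C.copyNbrs z) ≠ 2 → 43 + 9 * C.load P z + 8 ≤ 26 * #(C.copyNbrs z)) := by
  have hload : C.load P z ≤ #(spannedEdges bowtie (C.copyNbrs z)) :=
    load_le_card_spannedEdges_copyNbrs
  have hpos : 0 < C.load P z := by
    obtain ⟨f, hf, rfl⟩ := exists_apex_eq hz
    exact load_apex_pos hf
  have hbounds := spannedEdges_bowtie_bounds_of_pos (C.copyNbrs z) (hpos.trans_le hload)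
  omega

lemma coreNbrs_bounds (hz : z ∈ C.outer P) :
    43 + 9 * C.load P z ≤ 26 * #(C.coreNbrs P z) ∧
      (#(C.coreNbrs P z) ≠ 2 → 43 + 9 * C.load P z + 8 ≤ 26 * #(C.coreNbrs P z)) := by
  have hcard := card_copyNbrs_le (C := C) (P := P) (z := z)
  have hbounds := copyNbrs_bounds hz
  omega

/-- The excess in `potential_extension_add_slack`, whose summands are nonnegative for the bowtie. -/
noncomputable def slack (C : ApexCopy bowtie G) (P : Finset V) : ℤ :=
  ∑ w ∈ C.core P, (13 * #(C.extraNbrs P w) - 9 * C.load P w : ℤ) +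
    ∑ p ∈ P \ univ.map C.vert, (13 * #(C.extraNbrs P p) : ℤ) +
    ∑ z ∈ C.outer P, (26 * #(C.coreNbrs P z) - 43 - 9 * C.load P z : ℤ) +
    13 * #(G.interedges (C.outer P) (C.outer P))

lemma potential_extension_eq : potential G (C.extension P) = potential G P +
    (43 * (6 - #(C.inside P)) - 35 * #(bowtie.edgeFinset \ (C.inside P).sym2)) - C.slack P := by
  have h := potential_extension_add_slack (C := C) (P := P)
  rw [Fintype.card_fin, newEdges] at h
  rw [slack]
  push_cast at h
  linarith

lemma core_term_nonneg (h : C.IsClosedExcept P e₀) (hw : w ∈ C.core P) :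
    (0 : ℤ) ≤ 13 * #(C.extraNbrs P w) - 9 * C.load P w := by
  have := (nine_mul_load_le h hw).1
  omega

lemma outer_term_nonneg (hz : z ∈ C.outer P) :
    (0 : ℤ) ≤ 26 * #(C.coreNbrs P z) - 43 - 9 * C.load P z := by
  have := (coreNbrs_bounds hz).1
  omega

lemma core_term_add_le_slack (h : C.IsClosedExcept P e₀) (hw : w ∈ C.core P) :
    (13 * #(C.extraNbrs P w) - 9 * C.load P w : ℤ) +
      ∑ p ∈ P \ univ.map C.vert, (13 * #(C.extraNbrs P p) : ℤ) ≤ C.slack P := by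
  have hcore := single_le_sum (fun w hw ↦ core_term_nonneg h hw) hw
  have houter := sum_nonneg fun z hz ↦ outer_term_nonneg (C := C) (P := P) (z := z) hz
  unfold slack
  omega

lemma outer_term_le_slack (h : C.IsClosedExcept P e₀) (hz : z ∈ C.outer P) :
    (26 * #(C.coreNbrs P z) - 43 - 9 * C.load P z : ℤ) ≤ C.slack P := by
  have hcore := sum_nonneg fun w hw ↦ core_term_nonneg (w := w) h hw
  have hextra : (0 : ℤ) ≤ ∑ p ∈ P \ univ.map C.vert, (13 * #(C.extraNbrs P p) : ℤ) :=
    sum_nonneg fun p _ ↦ by positivity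
  have houter := single_le_sum (fun z hz ↦ outer_term_nonneg hz) hz
  unfold slack
  omega

lemma card_interedges_outer_le_slack (h : C.IsClosedExcept P e₀) :
    (13 * #(G.interedges (C.outer P) (C.outer P)) : ℤ) ≤ C.slack P := by
  have hcore := sum_nonneg fun w hw ↦ core_term_nonneg (w := w) h hw
  have hextra : (0 : ℤ) ≤ ∑ p ∈ P \ univ.map C.vert, (13 * #(C.extraNbrs P p) : ℤ) :=
    sum_nonneg fun p _ ↦ by positivity
  have houter := sum_nonneg fun z hz ↦ outer_term_nonneg (C := C) (P := P) (z := z) hz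
  unfold slack
  omega

lemma slack_nonneg (h : C.IsClosedExcept P e₀) : 0 ≤ C.slack P :=
  (by positivity : (0 : ℤ) ≤ _).trans (card_interedges_outer_le_slack h)

lemma extraPairs_eq_empty (h : C.IsClosedExcept P e₀) (hs : C.slack P < 3) :
    C.extraPairs P = ∅ := by
  have hrow {w : V} (hw : w ∈ C.core P) (l : Fin 6) : (w, C.vert l) ∉ C.extraPairs P := by
    intro hl
    have hload := (nine_mul_load_le h hw).2 ⟨l, mem_extraNbrs.2 hl⟩
    have hle := core_term_add_le_slack h hw
    have hextra : (0 : ℤ) ≤ ∑ p ∈ P \ univ.map C.vert, (13 * #(C.extraNbrs P p) : ℤ) :=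
      sum_nonneg fun p _ ↦ by positivity
    omega
  refine eq_empty_of_forall_notMem fun ⟨x, y⟩ hxy ↦ ?_
  obtain ⟨hx, hy, -, -, hP⟩ := mem_extraPairs.1 hxy
  rcases mem_core.1 hy with hyP | ⟨j, rfl⟩
  · rcases mem_core.1 hx with hxP | ⟨i, rfl⟩
    · exact hP ⟨hxP, hyP⟩
    · exact hrow hy i (swap_mem_extraPairs hxy)
  · exact hrow hx j hxy

lemma map_adj_of_slack_lt (h : C.IsClosedExcept P e₀) (hs : C.slack P < 3) {x y : V}
    (hx : x ∈ C.core P) (hy : y ∈ C.core P) (hxy : G.Adj x y) (hP : ¬ (x ∈ P ∧ y ∈ P)) :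
    (bowtie.map C.vert).Adj x y := by
  by_contra hmap
  exact notMem_empty _ (extraPairs_eq_empty h hs ▸ mem_extraPairs.2 ⟨hx, hy, hxy, hmap, hP⟩)

lemma apex_mem_outer (h : C.IsClosedExcept P e₀) (hs : C.slack P < 3) {f : Sym2 (Fin 6)}
    (hf : f ∈ C.newEdges P) : C.apex f ∈ C.outer P := by
  refine Finset.mem_sdiff.2 ⟨apex_mem_extension hf, fun hcore ↦ ?_⟩
  have hM : C.extraNbrs P (C.apex f) = ∅ := by simp [extraNbrs, extraPairs_eq_empty h hs]
  exact (load_apex_pos hf).ne' (load_eq_zero_of_extraNbrs_eq_empty hM hcore)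

lemma coreNbrs_apex (h : C.IsClosedExcept P e₀) (hs : C.slack P < 3) {i j : Fin 6}
    (hf : s(i, j) ∈ C.newEdges P) : C.coreNbrs P (C.apex s(i, j)) = {C.vert i, C.vert j} := by
  have hij : bowtie.Adj i j := (mem_newEdges.1 hf).1
  have houter := apex_mem_outer h hs hf
  have hcard : #(C.coreNbrs P (C.apex s(i, j))) = 2 := by
    by_contra hne
    have hbound := (coreNbrs_bounds houter).2 hne
    have hle := outer_term_le_slack h houter
    omega
  have hsub : {C.vert i, C.vert j} ⊆ C.coreNbrs P (C.apex s(i, j)) := by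
    simp [insert_subset_iff, coreNbrs, vert_mem_core, C.adj_apex hij, adj_apex_right hij]
  refine (eq_of_subset_of_card_le hsub ?_).symm
  rw [hcard, card_pair (C.vert.injective.ne hij.ne)]

lemma not_adj_apex_apex (h : C.IsClosedExcept P e₀) (hs : C.slack P < 3) {f g : Sym2 (Fin 6)}
    (hf : f ∈ C.newEdges P) (hg : g ∈ C.newEdges P) : ¬ G.Adj (C.apex f) (C.apex g) := by
  intro hadj
  have hmem : (C.apex f, C.apex g) ∈ G.interedges (C.outer P) (C.outer P) :=
    (mk_mem_interedges_iff G).2 ⟨apex_mem_outer h hs hf, apex_mem_outer h hs hg, hadj⟩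
  have hpos := card_pos.2 ⟨_, hmem⟩
  have hle := card_interedges_outer_le_slack h
  omega

lemma twentySix_le_slack (hP : C.inside P = ∅) {u v : V} (hu : u ∈ P)
    (hv : v ∈ C.extension P) (hvP : v ∉ P) (huv : G.Adj u v) : 26 ≤ C.slack P := by
  have hvert (i : Fin 6) : C.vert i ∉ P := by simp [← mem_inside, hP]
  have hcl : C.IsClosedExcept P s(0, 1) := fun i _ _ _ _ hi ↦ (hvert i hi).elim
  by_cases hcore : v ∈ C.core P
  · obtain ⟨l, rfl⟩ := (mem_core.1 hcore).resolve_left hvP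
    have huX : u ∉ univ.map C.vert := by
      simp only [Finset.mem_map, mem_univ, true_and, not_exists]
      exact fun i hi ↦ hvert i (hi ▸ hu)
    have hl : l ∈ C.extraNbrs P u := by
      rw [mem_extraNbrs, mem_extraPairs]
      refine ⟨subset_core hu, hcore, huv, fun hmap ↦ huX ?_, fun h ↦ hvP h.2⟩
      obtain ⟨i, -, -, hi, -⟩ := (map_adj ..).1 hmap
      exact Finset.mem_map.2 ⟨i, mem_univ i, hi⟩
    have hbound := (spannedEdges_bowtie_bounds_of_nonempty _ ⟨l, hl⟩).2
    have hload := load_le_card_spannedEdges_extraNbrs hP (subset_core hu)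
    have hle := core_term_add_le_slack hcl (subset_core hu)
    have hsingle := single_le_sum (f := fun p ↦ (13 * #(C.extraNbrs P p) : ℤ))
      (fun p _ ↦ by positivity) (Finset.mem_sdiff.2 ⟨hu, huX⟩)
    omega
  · have houter : v ∈ C.outer P := Finset.mem_sdiff.2 ⟨hv, hcore⟩
    have hcard : #(C.copyNbrs v) + 1 ≤ #(C.coreNbrs P v) := by
      rw [← card_map C.vert, ← card_insert_of_notMem (a := u)]
      · refine card_le_card (insert_subset ?_ map_copyNbrs_subset_coreNbrs)
        simp [coreNbrs, subset_core hu, huv.symm]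
      · simp only [Finset.mem_map, not_exists, not_and]
        exact fun i _ hi ↦ hvert i (hi ▸ hu)
    have hbound := (copyNbrs_bounds houter).1
    have hle := outer_term_le_slack hcl houter
    omega

end ApexCopy

end Bowtie

section Greedy

/-- The edges of `G` that appear before `e`, where `t f` is the time at which `f` appears. -/
def before {V : Type*} (G : SimpleGraph V) (t : Sym2 V → ℕ) (e : Sym2 V) : SimpleGraph V :=
  G.deleteEdges {f | t e ≤ t f}

lemma before_adj {V : Type*} {G : SimpleGraph V} {t : Sym2 V → ℕ} {e : Sym2 V} {x y : V} :
    (before G t e).Adj x y ↔ G.Adj x y ∧ t s(x, y) < t e := by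
  simp [before]

/-- The edge `e` forms a triangle with two edges of `R`. -/
def ClosesTriangle {V : Type*} (R : SimpleGraph V) (e : Sym2 V) : Prop :=
  ∃ c, ∀ v ∈ e, R.Adj c v

/-- The colorings, with red graph `R`, blue graph `B` and appearance times `t`, produced by a
Painter who uses blue exactly when red would close a red triangle and blue would not complete a
blue copy of `F`. -/
structure IsGreedyColoring {α V : Type} (F : SimpleGraph α) (R B : SimpleGraph V) (t : Sym2 V → ℕ) :
    Prop where
  disjoint : Disjoint R B
  injOn : Set.InjOn t R.edgeSet
  not_isCopy : ¬ IsCopy F B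
  closesTriangle : ∀ e ∈ B.edgeSet, ClosesTriangle (before R t e) e
  isCopy : ∀ e ∈ R.edgeSet, ClosesTriangle (before R t e) e →
    IsCopy F (before B t e ⊔ fromEdgeSet {e})

variable {α V : Type*} {F : SimpleGraph α} {R B : SimpleGraph V} {t : Sym2 V → ℕ} {e : Sym2 V}

/-- A witness for why the edge `e` became the last edge of a red triangle: together with older blue
edges it forms a copy of `F`, each blue edge of which was in turn the last edge of a triangle whose
other two edges are red. The third vertices of all these triangles are recorded as apexes. -/
structure Threat (F : SimpleGraph α) (R B : SimpleGraph V) (t : Sym2 V → ℕ) (e : Sym2 V) where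
  vert : α ↪ V
  apex : Sym2 α → V
  base : Sym2 α
  base_mem : base ∈ F.edgeSet
  map_base : base.map vert = e
  mem_red : e ∈ R.edgeSet
  adj_vert {i j : α} : F.Adj i j → s(i, j) ≠ base → (before B t e).Adj (vert i) (vert j)
  adj_apex {i j : α} : F.Adj i j → (before R t e).Adj (apex s(i, j)) (vert i)

lemma IsGreedyColoring.exists_threat {α V : Type} {F : SimpleGraph α} {R B : SimpleGraph V}
    {t : Sym2 V → ℕ} {e : Sym2 V} (h : IsGreedyColoring F R B t) {c : V}
    (he : e ∈ R.edgeSet) (hc : ∀ v ∈ e, (before R t e).Adj c v) :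
    ∃ H : Threat F R B t e, H.apex H.base = c := by
  obtain ⟨τ, hτ⟩ := h.isCopy e he ⟨c, hc⟩
  obtain ⟨b, hb, hbe⟩ : ∃ b ∈ F.edgeSet, b.map τ = e := by
    by_contra! hne
    refine h.not_isCopy ⟨τ, fun i j hij ↦ ?_⟩
    have hadj := hτ i j hij
    rw [sup_adj, fromEdgeSet_adj, before_adj] at hadj
    exact (hadj.resolve_right fun h ↦ hne s(i, j) hij h.1).1
  have hblue {i j : α} (hij : F.Adj i j) (hne : s(i, j) ≠ b) :
      (before B t e).Adj (τ i) (τ j) := by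
    refine (hτ i j hij).resolve_right fun hadj ↦ hne ?_
    exact Sym2.map.injective τ.injective (((fromEdgeSet_adj _).1 hadj).1.trans hbe.symm)
  have hapex (f : Sym2 α) : ∃ a, (f = b → a = c) ∧
      (f ∈ F.edgeSet → ∀ i ∈ f, (before R t e).Adj a (τ i)) := by
    by_cases hf : f = b
    · exact ⟨c, fun _ ↦ rfl, fun _ i hi ↦ hc _ (hbe ▸ hf ▸ Sym2.mem_map.2 ⟨i, hi, rfl⟩)⟩
    by_cases hfF : f ∈ F.edgeSet
    · induction f with | _ i j =>
      have hij := before_adj.1 (hblue hfF hf)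
      obtain ⟨a, ha⟩ := h.closesTriangle s(τ i, τ j) hij.1
      refine ⟨a, fun h ↦ (hf h).elim, fun _ k hk ↦ ?_⟩
      have hak := before_adj.1 (ha (τ k) (Sym2.mem_map.2 ⟨k, hk, rfl⟩ : _ ∈ s(i, j).map τ))
      exact before_adj.2 ⟨hak.1, hak.2.trans hij.2⟩
    · exact ⟨c, fun h ↦ (hf h).elim, fun h ↦ (hfF h).elim⟩
  choose a hab ha using hapex
  exact ⟨⟨τ, a, b, hb, hbe, he, hblue, fun hij ↦ ha _ hij _ (Sym2.mem_mk_left ..)⟩, hab b rfl⟩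

namespace Threat

/-- The vertex `w` lies on the red triangle that `e` forms with the apex of the base edge. -/
def IsOnTriangle (H : Threat F R B t e) (w : V) : Prop := w = H.apex H.base ∨ w ∈ e

variable {G : SimpleGraph V}

/-- A threat, as an apex copy in a graph containing all edges up to the time of `e`. -/
def toApexCopy (H : Threat F R B t e) (hd : Disjoint R B)
    (hG : ∀ ⦃x y⦄, (R ⊔ B).Adj x y → t s(x, y) ≤ t e → G.Adj x y) : ApexCopy F G where
  vert := H.vert
  apex := H.apex
  adj_vert {i j} hij := by
    by_cases hb : s(i, j) = H.base
    · have he : s(H.vert i, H.vert j) = e := (congrArg (Sym2.map H.vert) hb).trans H.map_base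
      have hred : R.Adj (H.vert i) (H.vert j) := by rw [← mem_edgeSet, he]; exact H.mem_red
      exact hG (.inl hred) (congrArg t he).le
    · have hadj := before_adj.1 (H.adj_vert hij hb)
      exact hG (.inr hadj.1) hadj.2.le
  adj_apex hij := by
    have hadj := before_adj.1 (H.adj_apex hij)
    exact hG (.inl hadj.1) hadj.2.le
  not_adj_of_apex_eq {i j k} hij hk hki := by
    have hred := before_adj.1 (hk ▸ H.adj_apex hij)
    by_cases hb : s(k, i) = H.base
    · have he : s(H.vert k, H.vert i) = e := (congrArg (Sym2.map H.vert) hb).trans H.map_base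
      exact (hred.2.trans_eq (congrArg t he.symm)).false
    · exact (hd.le_bot ⟨hred.1, (before_adj.1 (H.adj_vert hki hb)).1⟩ : False)

end Threat

end Greedy

section CherryClosed

/-- No vertex outside `P` has two neighbors in `P`. -/
def IsCherryClosed {V : Type*} (G : SimpleGraph V) (P : Finset V) : Prop :=
  ∀ ⦃x⦄, x ∉ P → ∀ ⦃y z⦄, y ∈ P → z ∈ P → G.Adj x y → G.Adj x z → y = z

lemma exists_potential_insert_le {V : Type*} {G : SimpleGraph V} {P : Finset V}
    (h : ¬ IsCherryClosed G P) : ∃ x ∉ P, potential G (insert x P) ≤ potential G P - 9 := by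
  simp only [IsCherryClosed, not_forall] at h
  obtain ⟨x, hx, y, z, hy, hz, hxy, hxz, hyz⟩ := h
  exact ⟨x, hx, potential_insert_le hx hy hz hyz hxy hxz⟩

lemma exists_isCherryClosed {V : Type*} {G : SimpleGraph V} {U : Finset V}
    (hU : potential G U ≤ 13)
    (hpos : ∀ S : Finset V, S.Nonempty → #S ≤ #U + 2 → 0 < potential G S) :
    ∃ P, U ⊆ P ∧ #P ≤ #U + 1 ∧ IsCherryClosed G P ∧
      (P = U ∨ potential G P ≤ 4) := by
  by_cases hU' : IsCherryClosed G U
  · exact ⟨U, Subset.rfl, by omega, hU', .inl rfl⟩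
  obtain ⟨x, hx, hxU⟩ := exists_potential_insert_le hU'
  have hcard := card_insert_of_notMem hx
  by_cases hP : IsCherryClosed G (insert x U)
  · exact ⟨insert x U, subset_insert x U, hcard.le, hP, .inr (by linarith)⟩
  obtain ⟨y, hy, hyP⟩ := exists_potential_insert_le hP
  have := hpos (insert y (insert x U)) (insert_nonempty _ _)
    (by rw [card_insert_of_notMem hy, hcard])
  linarith

end CherryClosed

section BowtieThreat

variable {V : Type*} {R B G : SimpleGraph V} {t : Sym2 V → ℕ} {e : Sym2 V} {P : Finset V}
  {u v w x : V}

namespace Threat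

lemma exists_base {α : Type*} {F : SimpleGraph α} (H : Threat F R B t e) :
    ∃ i j, H.base = s(i, j) ∧ F.Adj i j ∧ ∀ w, w ∈ e ↔ w = H.vert i ∨ w = H.vert j := by
  obtain ⟨i, j, hb⟩ : ∃ i j, H.base = s(i, j) := Sym2.exists.1 ⟨_, rfl⟩
  have hmap : s(H.vert i, H.vert j) = e := (congrArg (Sym2.map H.vert) hb.symm).trans H.map_base
  exact ⟨i, j, hb, (hb ▸ H.base_mem : s(i, j) ∈ F.edgeSet), fun w ↦
    (iff_of_eq (congrArg (w ∈ ·) hmap.symm)).trans Sym2.mem_iff⟩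

lemma isClosedExcept_toApexCopy {α : Type*} {F : SimpleGraph α} (H : Threat F R B t e)
    {hd : Disjoint R B} {hG} (hP : IsCherryClosed ((R ⊔ B).deleteEdges {e}) P) :
    (H.toApexCopy (G := G) hd hG).IsClosedExcept P H.base := by
  intro i j hij hne ha hi
  by_contra hj
  have hblue := before_adj.1 (H.adj_vert hij hne)
  have hred := before_adj.1 (Sym2.eq_swap ▸ H.adj_apex hij.symm)
  have hapex : H.apex s(i, j) ≠ H.vert i := (H.adj_apex hij).ne
  refine hapex (hP hj ha hi ?_ ?_)
  · exact deleteEdges_adj.2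
      ⟨.inl hred.1.symm, fun h ↦ hred.2.ne (congrArg t (Sym2.eq_swap.trans h))⟩
  · exact deleteEdges_adj.2
      ⟨.inr hblue.1.symm, fun h ↦ hblue.2.ne (congrArg t (Sym2.eq_swap.trans h))⟩

variable (H : Threat bowtie R B t e) {hd : Disjoint R B}
  {hG : ∀ ⦃x y⦄, (R ⊔ B).Adj x y → t s(x, y) ≤ t e → G.Adj x y}

lemma base_mem_newEdges (he : ¬ ∀ x ∈ e, x ∈ P) :
    H.base ∈ (H.toApexCopy hd hG).newEdges P := by
  obtain ⟨i, j, hb, hij, hmem⟩ := H.exists_base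
  rw [hb, ApexCopy.mem_newEdges]
  refine ⟨hij, fun h ↦ he fun x hx ↦ ?_⟩
  rcases (hmem x).1 hx with rfl | rfl
  exacts [h.1, h.2]

lemma mem_core_of_mem (hw : w ∈ e) : w ∈ (H.toApexCopy hd hG).core P := by
  rw [← H.map_base, Sym2.mem_map] at hw
  obtain ⟨i, -, rfl⟩ := hw
  exact (H.toApexCopy hd hG).vert_mem_core i

lemma IsOnTriangle.mem_extension {H : Threat bowtie R B t e} (hw : H.IsOnTriangle w)
    (he : ¬ ∀ x ∈ e, x ∈ P) : w ∈ (H.toApexCopy hd hG).extension P := by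
  rcases hw with rfl | hw
  · exact ApexCopy.apex_mem_extension (H.base_mem_newEdges he)
  · exact ApexCopy.core_subset_extension (H.mem_core_of_mem hw)

lemma mem_of_red_adj {e₀ : Sym2 (Fin 6)}
    (hP : (H.toApexCopy hd hG).IsClosedExcept P e₀) (hs : (H.toApexCopy hd hG).slack P < 3)
    (he : ¬ ∀ x ∈ e, x ∈ P) (hu : H.IsOnTriangle u) (hx : x ∈ (H.toApexCopy hd hG).core P)
    (hux : R.Adj u x) (hGux : G.Adj u x) (hPux : ¬ (u ∈ P ∧ x ∈ P)) : x ∈ e := by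
  have hbase := H.base_mem_newEdges (hd := hd) (hG := hG) he
  rcases hu with rfl | hu
  · obtain ⟨i, j, hb, -, hmem⟩ := H.exists_base
    rw [hb] at hbase hGux
    have hx' : x ∈ (H.toApexCopy hd hG).coreNbrs P (H.apex s(i, j)) := mem_filter.2 ⟨hx, hGux⟩
    rw [show H.apex s(i, j) = (H.toApexCopy hd hG).apex s(i, j) from rfl,
      ApexCopy.coreNbrs_apex hP hs hbase, mem_insert, mem_singleton] at hx'
    exact (hmem x).2 hx'
  · obtain ⟨i, j, hij, rfl, hj⟩ := (map_adj ..).1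
      (ApexCopy.map_adj_of_slack_lt hP hs (H.mem_core_of_mem hu) hx hGux hPux)
    by_cases hb : s(i, j) = H.base
    · rw [← H.map_base, ← hb, ← hj]
      exact Sym2.mem_mk_right _ _
    · exact (hd.le_bot ⟨hux, hj ▸ (before_adj.1 (H.adj_vert hij hb)).1⟩ : False).elim

lemma mem_core_of_blue_adj {e₀ : Sym2 (Fin 6)}
    (hP : (H.toApexCopy hd hG).IsClosedExcept P e₀) (hs : (H.toApexCopy hd hG).slack P < 3)
    (hv : v ∈ (H.toApexCopy hd hG).extension P) (hw : w ∈ (H.toApexCopy hd hG).extension P)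
    (hvw : B.Adj v w) (hGvw : G.Adj v w) : v ∈ (H.toApexCopy hd hG).core P := by
  by_contra hvcore
  obtain ⟨f, hf, rfl⟩ := ApexCopy.exists_apex_eq (Finset.mem_sdiff.2 ⟨hv, hvcore⟩)
  by_cases hwcore : w ∈ (H.toApexCopy hd hG).core P
  · induction f with | _ i j =>
    have hw' : w ∈ (H.toApexCopy hd hG).coreNbrs P ((H.toApexCopy hd hG).apex s(i, j)) :=
      mem_filter.2 ⟨hwcore, hGvw⟩
    have hij := (ApexCopy.mem_newEdges.1 hf).1
    rw [ApexCopy.coreNbrs_apex hP hs hf, mem_insert, mem_singleton] at hw'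
    have hred : R.Adj (H.apex s(i, j)) w := by
      rcases hw' with rfl | rfl
      · exact (before_adj.1 (H.adj_apex hij)).1
      · exact (before_adj.1 (Sym2.eq_swap ▸ H.adj_apex hij.symm)).1
    exact hd.le_bot ⟨hred, hvw⟩
  · obtain ⟨g, hg, rfl⟩ := ApexCopy.exists_apex_eq (Finset.mem_sdiff.2 ⟨hw, hwcore⟩)
    exact ApexCopy.not_adj_apex_apex hP hs hf hg hGvw

lemma twentySix_le_slack (hP : (H.toApexCopy hd hG).inside P = ∅) (hu : u ∈ P)
    (hv : H.IsOnTriangle v) (huv : G.Adj u v) : 26 ≤ (H.toApexCopy hd hG).slack P := by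
  have hvert (i : Fin 6) : H.vert i ∉ P := fun hi ↦
    eq_empty_iff_forall_notMem.1 hP i (ApexCopy.mem_inside.2 hi)
  obtain ⟨i, j, hb, hij, hmem⟩ := H.exists_base
  have he : ¬ ∀ x ∈ e, x ∈ P := fun h ↦ hvert i (h _ ((hmem _).2 (.inl rfl)))
  by_cases hvP : v ∈ P
  · rcases hv with rfl | hv
    · rw [hb] at hvP
      exact ApexCopy.twentySix_le_slack hP hvP
        (ApexCopy.core_subset_extension (ApexCopy.vert_mem_core i)) (hvert i)
        ((H.toApexCopy hd hG).adj_apex hij)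
    · rcases (hmem v).1 hv with rfl | rfl
      exacts [(hvert i hvP).elim, (hvert j hvP).elim]
  · exact ApexCopy.twentySix_le_slack hP hu (hv.mem_extension he) hvP huv

end Threat

end BowtieThreat

section TwoThreats

variable {V : Type*} {R B : SimpleGraph V} {t : Sym2 V → ℕ} {e e' : Sym2 V} {u v x y : V}

lemma ApexCopy.potential_extension_empty {G : SimpleGraph V} (C : ApexCopy bowtie G) :
    potential G (C.extension ∅) = 13 - C.slack ∅ := by
  have hinside : C.inside ∅ = ∅ := by ext; simp [ApexCopy.mem_inside]
  rw [ApexCopy.potential_extension_eq, hinside, sym2_empty, sdiff_empty, card_edgeFinset_bowtie]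
  norm_num [potential]

namespace Threat

variable (H : Threat bowtie R B t e) (H' : Threat bowtie R B t e') (hd : Disjoint R B)

/-- A threat, as an apex copy in the graph of all edges. -/
def fullCopy : ApexCopy bowtie (R ⊔ B) := H.toApexCopy hd fun _ _ h _ ↦ h

/-- A threat, as an apex copy avoiding a later edge `e'`. -/
def copyBefore (hlt : t e < t e') : ApexCopy bowtie ((R ⊔ B).deleteEdges {e'}) :=
  H.toApexCopy hd fun _ _ h ht ↦
    deleteEdges_adj.2 ⟨h, fun heq ↦ (ht.trans_lt hlt).ne (congrArg t heq)⟩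

variable {H H'}

lemma three_le_slack (hlt : t e < t e') {U : Finset V} (hU : (H.copyBefore hd hlt).extension ∅ = U)
    (hclosed : IsCherryClosed ((R ⊔ B).deleteEdges {e'}) U) (he' : ¬ ∀ x ∈ e', x ∈ U)
    (hinside : ∀ i ∈ (H'.fullCopy hd).inside U, ∃ j ∈ (H'.fullCopy hd).inside U, bowtie.Adj i j)
    (huv : R.Adj u v) (hu : H.IsOnTriangle u) (hv : H'.IsOnTriangle v)
    (hdisj : ∀ w, H.IsOnTriangle w → ¬ H'.IsOnTriangle w) :
    3 ≤ (H.copyBefore hd hlt).slack ∅ ∨ 3 ≤ (H'.fullCopy hd).slack U := by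
  by_contra! ⟨hs, hs'⟩
  have hP' := H'.isClosedExcept_toApexCopy (G := R ⊔ B) (hd := hd) (hG := fun _ _ h _ ↦ h) hclosed
  have hP := (H.copyBefore hd hlt).isClosedExcept_empty H.base
  have he : ¬ ∀ x ∈ e, x ∈ (∅ : Finset V) := fun h ↦ notMem_empty _ (h _ e.out_fst_mem)
  have hue' : u ∉ e' := fun h ↦ hdisj u hu (.inr h)
  have hve : v ∉ e := fun h ↦ hdisj v (.inr h) hv
  have huU : u ∈ U := hU ▸ hu.mem_extension he
  by_cases hvU : v ∈ U
  · have hne : v ≠ H'.apex H'.base := fun h ↦ by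
      have houter := (H'.fullCopy hd).apex_mem_outer hP' hs' (H'.base_mem_newEdges he')
      exact (Finset.mem_sdiff.1 houter).2 (ApexCopy.subset_core (h.subst hvU))
    have hve' : v ∈ H'.base.map H'.vert := by
      rw [H'.map_base]
      exact hv.resolve_left hne
    obtain ⟨i, -, rfl⟩ := Sym2.mem_map.1 hve'
    obtain ⟨j, hj, hij⟩ := hinside i (ApexCopy.mem_inside.2 hvU)
    have hjU : H'.vert j ∈ U := ApexCopy.mem_inside.1 hj
    have hb : s(i, j) ≠ H'.base := fun hb ↦ he' fun x hx ↦ by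
      rw [← H'.map_base, ← hb, Sym2.map_mk, Sym2.mem_iff] at hx
      rcases hx with rfl | rfl
      exacts [hvU, hjU]
    have hblue := before_adj.1 (H'.adj_vert hij hb)
    have hcore := H.mem_core_of_blue_adj hP hs (hU ▸ hvU) (hU ▸ hjU) hblue.1
      (deleteEdges_adj.2 ⟨.inr hblue.1, fun h ↦ hblue.2.ne (congrArg t h)⟩)
    refine hve (H.mem_of_red_adj hP hs he hu hcore huv ?_ fun h ↦ notMem_empty _ h.1)
    exact deleteEdges_adj.2 ⟨.inl huv, fun h ↦ hue' (h ▸ Sym2.mem_mk_left _ _)⟩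
  · exact hue' (H'.mem_of_red_adj hP' hs' he' hv (ApexCopy.subset_core huU) huv.symm
      (.inl huv.symm) fun h ↦ hvU h.1)

lemma exists_isCherryClosed_superset (hd : Disjoint R B) (hlt : t e < t e')
    (he' : (R ⊔ B).Adj x y) (hxy : e' = s(x, y))
    (hpos : ∀ S : Finset V, S.Nonempty → #S ≤ 27 → 0 < potential (R ⊔ B) S) :
    ∃ P, (H.copyBefore hd hlt).extension ∅ ⊆ P ∧ #P ≤ 14 ∧
      IsCherryClosed ((R ⊔ B).deleteEdges {e'}) P ∧ (¬ ∀ x ∈ e', x ∈ P) ∧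
      potential (R ⊔ B) P ≤ 13 ∧ (P = (H.copyBefore hd hlt).extension ∅ ∧
        potential (R ⊔ B) P ≤ 13 - (H.copyBefore hd hlt).slack ∅ ∨ potential (R ⊔ B) P ≤ 4) := by
  set C := H.copyBefore hd hlt
  have hanti (S : Finset V) : potential (R ⊔ B) S ≤ potential ((R ⊔ B).deleteEdges {e'}) S :=
    potential_anti (deleteEdges_le _) S
  have hslack : 0 ≤ C.slack ∅ := ApexCopy.slack_nonneg (C.isClosedExcept_empty H.base)
  have hpotU := C.potential_extension_empty
  have hcardU : #(C.extension ∅) ≤ 13 := by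
    have := C.card_extension_le (P := ∅)
    rwa [card_empty, Fintype.card_fin, card_edgeFinset_bowtie] at this
  obtain ⟨P, hUP, hPcard, hclosed, hP⟩ := exists_isCherryClosed (by linarith)
    fun S hS hcard ↦ (hpos S hS (by omega)).trans_le (hanti S)
  have hpotP : potential ((R ⊔ B).deleteEdges {e'}) P ≤ 13 := by
    rcases hP with rfl | hP <;> linarith
  refine ⟨P, hUP, by omega, hclosed, fun hmem ↦ ?_, (hanti P).trans hpotP,
    hP.imp ?_ (hanti P).trans⟩
  · have hx : x ∈ P := hmem x (hxy ▸ Sym2.mem_mk_left x y)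
    have hy : y ∈ P := hmem y (hxy ▸ Sym2.mem_mk_right x y)
    have hle := potential_le_sub_of_adj (deleteEdges_le {e'}) hx hy he'
      (by simp [deleteEdges_adj, hxy])
    linarith [hpos P ⟨x, hx⟩ (by omega)]
  · rintro rfl
    exact ⟨rfl, (hanti _).trans_eq hpotU⟩

theorem exists_potential_nonpos (hd : Disjoint R B) (hlt : t e < t e') (huv : R.Adj u v)
    (hu : H.IsOnTriangle u) (hv : H'.IsOnTriangle v)
    (hdisj : ∀ w, H.IsOnTriangle w → ¬ H'.IsOnTriangle w) :
    ∃ S : Finset V, S.Nonempty ∧ #S ≤ 27 ∧ potential (R ⊔ B) S ≤ 0 := by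
  by_contra! hpos
  obtain ⟨x, y, hxy⟩ : ∃ x y, e' = s(x, y) := Sym2.exists.1 ⟨e', rfl⟩
  obtain ⟨P, hUP, hPcard, hclosed, he', hpotP, hP⟩ := H.exists_isCherryClosed_superset hd hlt
    (.inl (hxy ▸ H'.mem_red : s(x, y) ∈ R.edgeSet)) hxy hpos
  have he : ¬ ∀ w ∈ e, w ∈ (∅ : Finset V) := fun h ↦ notMem_empty _ (h _ e.out_fst_mem)
  have huP : u ∈ P := hUP (hu.mem_extension he)
  set C' := H'.fullCopy hd
  have hslack' : 0 ≤ C'.slack P := ApexCopy.slack_nonneg (H'.isClosedExcept_toApexCopy hclosed)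
  have hcard : #(C'.extension P) ≤ 27 := by
    have := C'.card_extension_le (P := P)
    rw [Fintype.card_fin, card_edgeFinset_bowtie] at this
    omega
  have hpotS := hpos _ ⟨u, ApexCopy.core_subset_extension (ApexCopy.subset_core huP)⟩ hcard
  rw [ApexCopy.potential_extension_eq] at hpotS
  rcases bowtie_attachment_cases (C'.inside P) with hm | hm | hm | ⟨hm, hinside⟩
  · linarith
  · have hslack26 : 26 ≤ C'.slack P := H'.twentySix_le_slack hm huP hv (.inl huv)
    rw [hm, sym2_empty, sdiff_empty, card_edgeFinset_bowtie] at hpotS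
    norm_num at hpotS
    linarith
  · refine he' fun w hw ↦ ?_
    rw [← H'.map_base] at hw
    obtain ⟨i, -, rfl⟩ := Sym2.mem_map.1 hw
    exact ApexCopy.mem_inside.1 (hm ▸ mem_univ i : i ∈ C'.inside P)
  · obtain ⟨hPU, hpotU⟩ := hP.resolve_right fun h ↦ by linarith
    rcases three_le_slack hd hlt hPU.symm hclosed he' hinside huv hu hv hdisj with hs | hs
    all_goals linarith

end Threat

end TwoThreats

section GreedyColoring

variable {V : Type} {R B : SimpleGraph V} {t : Sym2 V → ℕ}

namespace IsGreedyColoring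

lemma exists_threat_of_last {α : Type} {F : SimpleGraph α} (h : IsGreedyColoring F R B t)
    {x y z : V} (hxy : R.Adj x y) (hxz : R.Adj x z) (hyz : R.Adj y z)
    (hlt : t s(x, z) < t s(x, y)) (hlt' : t s(y, z) < t s(x, y)) :
    ∃ e, ∃ H : Threat F R B t e, ∀ w, H.IsOnTriangle w ↔ w = x ∨ w = y ∨ w = z := by
  have hc : ∀ v ∈ s(x, y), (before R t s(x, y)).Adj z v := by
    simp only [Sym2.mem_iff, forall_eq_or_imp, forall_eq, before_adj]
    exact ⟨⟨hxz.symm, Sym2.eq_swap ▸ hlt⟩, ⟨hyz.symm, Sym2.eq_swap ▸ hlt'⟩⟩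
  obtain ⟨H, hH⟩ := h.exists_threat hxy hc
  refine ⟨s(x, y), H, fun w ↦ ?_⟩
  rw [Threat.IsOnTriangle, hH, Sym2.mem_iff]
  tauto

lemma exists_threat_of_triangle {α : Type} {F : SimpleGraph α} (h : IsGreedyColoring F R B t)
    {x y z : V} (hxy : R.Adj x y) (hxz : R.Adj x z) (hyz : R.Adj y z) :
    ∃ e, ∃ H : Threat F R B t e, ∀ w, H.IsOnTriangle w ↔ w = x ∨ w = y ∨ w = z := by
  have hne₁ : t s(x, y) ≠ t s(x, z) := h.injOn.ne hxy hxz (by simp [hyz.ne, hxz.ne])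
  have hne₂ : t s(x, y) ≠ t s(y, z) := h.injOn.ne hxy hyz (by simp [hxy.ne, hxz.ne])
  have hne₃ : t s(x, z) ≠ t s(y, z) := h.injOn.ne hxz hyz (by simp [hxy.ne, hxz.ne])
  have hlast : (t s(x, z) < t s(x, y) ∧ t s(y, z) < t s(x, y)) ∨
      (t s(x, y) < t s(x, z) ∧ t s(z, y) < t s(x, z)) ∨
      (t s(y, x) < t s(y, z) ∧ t s(z, x) < t s(y, z)) := by
    rw [Sym2.eq_swap (a := z), Sym2.eq_swap (a := y) (b := x), Sym2.eq_swap (a := z) (b := x)]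
    omega
  rcases hlast with ⟨h₁, h₂⟩ | ⟨h₁, h₂⟩ | ⟨h₁, h₂⟩
  · exact h.exists_threat_of_last hxy hxz hyz h₁ h₂
  · obtain ⟨e, H, hH⟩ := h.exists_threat_of_last hxz hxy hyz.symm h₁ h₂
    exact ⟨e, H, fun w ↦ (hH w).trans (by tauto)⟩
  · obtain ⟨e, H, hH⟩ := h.exists_threat_of_last hyz hxy.symm hxz.symm h₁ h₂
    exact ⟨e, H, fun w ↦ (hH w).trans (by tauto)⟩

theorem exists_potential_nonpos (h : IsGreedyColoring bowtie R B t) (hR : IsCopy bowtie R) :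
    ∃ S : Finset V, S.Nonempty ∧ #S ≤ 27 ∧ potential (R ⊔ B) S ≤ 0 := by
  obtain ⟨φ, hφ⟩ := hR
  obtain ⟨e, H, hH⟩ := h.exists_threat_of_triangle (hφ 0 1 (by decide)) (hφ 0 2 (by decide))
    (hφ 1 2 (by decide))
  obtain ⟨e', H', hH'⟩ := h.exists_threat_of_triangle (hφ 3 4 (by decide)) (hφ 3 5 (by decide))
    (hφ 4 5 (by decide))
  have hdisj (w : V) (hw : H.IsOnTriangle w) : ¬ H'.IsOnTriangle w := by
    rw [hH']
    rcases (hH w).1 hw with rfl | rfl | rfl <;> simp [φ.injective.eq_iff]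
  have h03 : R.Adj (φ 0) (φ 3) := hφ 0 3 (by decide)
  have h0 : H.IsOnTriangle (φ 0) := (hH _).2 (.inl rfl)
  have h3 : H'.IsOnTriangle (φ 3) := (hH' _).2 (.inl rfl)
  have hne : t e ≠ t e' := fun ht ↦ by
    obtain rfl := h.injOn H.mem_red H'.mem_red ht
    exact hdisj _ (.inr e.out_fst_mem) (.inr e.out_fst_mem)
  rcases hne.lt_or_gt with hlt | hlt
  · exact Threat.exists_potential_nonpos h.disjoint hlt h03 h0 h3 hdisj
  · exact Threat.exists_potential_nonpos h.disjoint hlt h03.symm h3 h0 fun w hw' hw ↦ hdisj w hw hw'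

end IsGreedyColoring

end GreedyColoring

section Game

variable {V : Type} {r : ℕ} {π : PainterStrategy V r}

lemma runPainterAux_append (h : EdgeHistory V r) (l₁ l₂ : List (Sym2 V)) :
    runPainterAux π h (l₁ ++ l₂) = runPainterAux π (runPainterAux π h l₁) l₂ := by
  induction l₁ generalizing h with
  | nil => rfl
  | cons _ _ ih => exact ih _

lemma runPainter_concat (l : List (Sym2 V)) (e : Sym2 V) :
    runPainter π (l ++ [e]) = runPainter π l ++ [(e, π (runPainter π l) e)] :=
  runPainterAux_append [] l [e]

lemma exists_runPainter_append (l₁ l₂ : List (Sym2 V)) :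
    ∃ h, runPainter π (l₁ ++ l₂) = runPainter π l₁ ++ h ∧ h.map Prod.fst = l₂ := by
  induction l₂ using List.reverseRecOn with
  | nil => exact ⟨[], by simp⟩
  | append_singleton l₂ e ih =>
    obtain ⟨h, hh, rfl⟩ := ih
    rw [← List.append_assoc, runPainter_concat, hh]
    exact ⟨_, List.append_assoc .., by simp⟩

lemma map_fst_runPainter (l : List (Sym2 V)) : (runPainter π l).map Prod.fst = l := by
  obtain ⟨h, hh, hl⟩ := exists_runPainter_append (π := π) [] l
  rwa [← List.nil_append l, hh]

lemma exists_color_eq_of_mem_runPainter {l : List (Sym2 V)} {e : Sym2 V} {c : Fin r}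
    (h : (e, c) ∈ runPainter π l) : ∃ l₁ l₂, l = l₁ ++ e :: l₂ ∧ π (runPainter π l₁) e = c := by
  induction l using List.reverseRecOn with
  | nil => simp [runPainter, runPainterAux] at h
  | append_singleton l a ih =>
    rw [runPainter_concat, List.mem_append, List.mem_singleton, Prod.mk.injEq] at h
    rcases h with h | ⟨rfl, rfl⟩
    · obtain ⟨l₁, l₂, rfl, hc⟩ := ih h
      exact ⟨l₁, l₂ ++ [a], by simp, hc⟩
    · exact ⟨l, [], rfl, rfl⟩

lemma colorGraph_adj {h : EdgeHistory V r} {c : Fin r} {x y : V} :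
    (colorGraph h c).Adj x y ↔ (s(x, y), c) ∈ h ∧ x ≠ y :=
  fromEdgeSet_adj _

lemma mem_edgeSet_colorGraph {h : EdgeHistory V r} {c : Fin r} {e : Sym2 V}
    (he : e ∈ (colorGraph h c).edgeSet) : (e, c) ∈ h := by
  induction e with | _ x y => exact (colorGraph_adj.1 he).1

lemma before_colorGraph_runPainter {l₁ l₂ : List (Sym2 V)} {e : Sym2 V}
    (hl : (l₁ ++ e :: l₂).Nodup) (c : Fin r) :
    before (colorGraph (runPainter π (l₁ ++ e :: l₂)) c) (l₁ ++ e :: l₂).idxOf e =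
      colorGraph (runPainter π l₁) c := by
  obtain ⟨h, hh, hfst⟩ := exists_runPainter_append (π := π) l₁ (e :: l₂)
  have he : e ∉ l₁ := fun he ↦ (List.nodup_append.1 hl).2.2 e he e List.mem_cons_self rfl
  have hlt (f : Sym2 V) : (l₁ ++ e :: l₂).idxOf f < (l₁ ++ e :: l₂).idxOf e ↔ f ∈ l₁ := by
    by_cases hf : f ∈ l₁ <;> simp [List.idxOf_append, he, hf, List.idxOf_lt_length_iff]
  ext x y
  rw [before_adj, hlt, colorGraph_adj, colorGraph_adj, hh, List.mem_append]
  have hmem : (s(x, y), c) ∈ runPainter π l₁ → s(x, y) ∈ l₁ := fun hm ↦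
    map_fst_runPainter (π := π) l₁ ▸ List.mem_map_of_mem hm
  have hmem' : (s(x, y), c) ∈ h → s(x, y) ∉ l₁ := fun hm h₁ ↦
    (List.nodup_append.1 hl).2.2 _ h₁ _ (hfst ▸ List.mem_map_of_mem hm) rfl
  tauto

lemma colorGraph_sup_colorGraph {h : EdgeHistory V 2} :
    colorGraph h 0 ⊔ colorGraph h 1 = boardOf (h.map Prod.fst) := by
  ext x y
  simp [colorGraph_adj, boardOf, ← or_and_right, Fin.exists_fin_two]

/-- The strategy that uses color `1` exactly when color `0` would close a triangle of color `0` and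
color `1` would not complete a copy of `F` of color `1`. -/
noncomputable def greedyStrategy {α : Type} (F : SimpleGraph α) : PainterStrategy V 2 := fun h e ↦
  if ClosesTriangle (colorGraph h 0) e ∧ ¬ IsCopy F (colorGraph h 1 ⊔ fromEdgeSet {e}) then 1 else 0

variable {α : Type} {F : SimpleGraph α}

lemma greedyStrategy_eq_one {h : EdgeHistory V 2} {e : Sym2 V} : greedyStrategy F h e = 1 ↔
    ClosesTriangle (colorGraph h 0) e ∧ ¬ IsCopy F (colorGraph h 1 ⊔ fromEdgeSet {e}) := by
  simp [greedyStrategy]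

lemma not_isCopy_greedyStrategy (hF : F ≠ ⊥) (l : List (Sym2 V)) :
    ¬ IsCopy F (colorGraph (runPainter (greedyStrategy F) l) 1) := by
  induction l using List.reverseRecOn with
  | nil =>
    obtain ⟨i, j, hij⟩ := ne_bot_iff_exists_adj.1 hF
    rintro ⟨φ, hφ⟩
    simpa [colorGraph_adj, runPainter, runPainterAux] using hφ i j hij
  | append_singleton l e ih =>
    rw [runPainter_concat]
    by_cases hc : greedyStrategy F (runPainter (greedyStrategy F) l) e = 1
    · convert (greedyStrategy_eq_one.1 hc).2 using 2
      ext x y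
      simp [colorGraph_adj, hc, or_and_right]
    · convert ih using 2
      ext x y
      simp [colorGraph_adj, Ne.symm hc]

lemma isGreedyColoring_greedyStrategy (hF : F ≠ ⊥) {l : List (Sym2 V)} (hl : l.Nodup) :
    IsGreedyColoring F (colorGraph (runPainter (greedyStrategy F) l) 0)
      (colorGraph (runPainter (greedyStrategy F) l) 1) l.idxOf where
  disjoint := by
    rw [← disjoint_edgeSet, Set.disjoint_left]
    intro e h₀ h₁
    have hnodup : ((runPainter (greedyStrategy F) l).map Prod.fst).Nodup := by
      rwa [map_fst_runPainter]
    simpa using List.inj_on_of_nodup_map hnodup (mem_edgeSet_colorGraph h₀)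
      (mem_edgeSet_colorGraph h₁) rfl
  injOn e he f _ := (List.idxOf_inj
    (map_fst_runPainter (π := greedyStrategy F) l ▸
      List.mem_map_of_mem (mem_edgeSet_colorGraph he))).1
  not_isCopy := not_isCopy_greedyStrategy hF l
  closesTriangle e he := by
    obtain ⟨l₁, l₂, rfl, hc⟩ := exists_color_eq_of_mem_runPainter (mem_edgeSet_colorGraph he)
    rw [before_colorGraph_runPainter hl]
    exact (greedyStrategy_eq_one.1 hc).1
  isCopy e he hclose := by
    obtain ⟨l₁, l₂, rfl, hc⟩ := exists_color_eq_of_mem_runPainter (mem_edgeSet_colorGraph he)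
    rw [before_colorGraph_runPainter hl] at hclose ⊢
    by_contra hcopy
    exact zero_ne_one (hc.symm.trans (greedyStrategy_eq_one.2 ⟨hclose, hcopy⟩))

theorem exists_potential_nonpos_of_hasMonoCopy {l : List (Sym2 V)} (hl : l.Nodup)
    (h : HasMonoCopy bowtie (runPainter (greedyStrategy bowtie) l)) :
    ∃ S : Finset V, S.Nonempty ∧ #S ≤ 27 ∧ potential (boardOf l) S ≤ 0 := by
  have hF : bowtie ≠ ⊥ := ne_bot_iff_exists_adj.2 ⟨0, 1, by decide⟩
  have hgreedy := isGreedyColoring_greedyStrategy hF hl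
  have hred : IsCopy bowtie (colorGraph (runPainter (greedyStrategy bowtie) l) 0) := by
    obtain ⟨c, hc⟩ := h
    fin_cases c
    exacts [hc, (hgreedy.not_isCopy hc).elim]
  obtain ⟨S, hS, hcard, hpot⟩ := hgreedy.exists_potential_nonpos hred
  rw [colorGraph_sup_colorGraph, map_fst_runPainter] at hpot
  exact ⟨S, hS, hcard, hpot⟩

end Game

section Embeddings

variable {X : Type*} [Fintype X] {k N : ℕ}

lemma card_filter_trans_eq_mul_card (p : Fin k ↪ Fin N) (e : Fin k ↪ X) :
    #{f : Fin N ↪ X | p.trans f = e} * Fintype.card (Fin k ↪ X) = Fintype.card (Fin N ↪ X) := by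
  have hfiber (e' : Fin k ↪ X) :
      #{f : Fin N ↪ X | p.trans f = e'} = #{f : Fin N ↪ X | p.trans f = e} := by
    obtain ⟨σ, rfl⟩ := Equiv.Perm.exists_smul_eq_embedding e' e
    refine card_equiv (MulAction.toPerm σ) fun f ↦ ?_
    rw [mem_filter_univ, mem_filter_univ]
    exact (MulAction.injective σ).eq_iff.symm
  calc #{f : Fin N ↪ X | p.trans f = e} * Fintype.card (Fin k ↪ X)
      = ∑ e' : Fin k ↪ X, #{f : Fin N ↪ X | p.trans f = e'} := by
        simp only [hfiber, sum_const, card_univ, smul_eq_mul, mul_comm]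
    _ = Fintype.card (Fin N ↪ X) :=
        (card_eq_sum_card_fiberwise fun _ _ ↦ mem_univ _).symm

lemma card_filter_forall_mem_range_mul_descFactorial_le (E : Finset X) :
    #{f : Fin N ↪ X | ∀ x ∈ E, x ∈ Set.range f} * (Fintype.card X).descFactorial #E ≤
      N ^ #E * Fintype.card (Fin N ↪ X) := by
  let e : Fin #E ↪ X := E.equivFin.symm.toEmbedding.trans (.subtype _)
  have hcover : ({f : Fin N ↪ X | ∀ x ∈ E, x ∈ Set.range f} : Finset _) ⊆
      univ.biUnion fun p : Fin #E ↪ Fin N ↦ {f | p.trans f = e} := by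
    intro f hf
    choose g hg using fun i ↦ (mem_filter_univ f).1 hf (e i) (E.equivFin.symm i).2
    have hg_inj : g.Injective := fun i j hij ↦ e.injective (by rw [← hg, ← hg, hij])
    exact mem_biUnion.2 ⟨⟨g, hg_inj⟩, mem_univ _, (mem_filter_univ f).2 (DFunLike.ext _ _ hg)⟩
  have hcard : (Fintype.card X).descFactorial #E = Fintype.card (Fin #E ↪ X) := by
    rw [Fintype.card_embedding_eq, Fintype.card_fin]
  calc _ ≤ (∑ p : Fin #E ↪ Fin N, #{f : Fin N ↪ X | p.trans f = e}) *
        Fintype.card (Fin #E ↪ X) := by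
        rw [hcard]
        exact Nat.mul_le_mul_right _ ((card_le_card hcover).trans card_biUnion_le)
    _ = N.descFactorial #E * Fintype.card (Fin N ↪ X) := by
        rw [sum_mul, sum_congr rfl fun p _ ↦ card_filter_trans_eq_mul_card p e, sum_const,
          card_univ, smul_eq_mul, Fintype.card_embedding_eq (α := Fin #E), Fintype.card_fin,
          Fintype.card_fin]
    _ ≤ N ^ #E * Fintype.card (Fin N ↪ X) :=
        Nat.mul_le_mul_right _ (Nat.descFactorial_le_pow _ _)

end Embeddings

section OnlineProb

variable {n N : ℕ} {P Q : (Fin N → Sym2 (Fin n)) → Prop}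

lemma onlineProb_nonneg : 0 ≤ onlineProb n N P := by
  unfold onlineProb
  positivity

lemma onlineProb_mono (h : ∀ f, ValidSeqFun f → P f → Q f) :
    onlineProb n N P ≤ onlineProb n N Q := by
  unfold onlineProb
  gcongr ((Set.ncard ?_ : ℕ) : ℝ) / _
  · exact Set.toFinite _
  · exact fun f hf ↦ ⟨hf.1, h f hf.1 hf.2⟩

lemma onlineProb_exists_mem_le {ι : Type*} (t : Finset ι)
    (P : ι → (Fin N → Sym2 (Fin n)) → Prop) :
    onlineProb n N (fun f ↦ ∃ i ∈ t, P i f) ≤ ∑ i ∈ t, onlineProb n N (P i) := by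
  unfold onlineProb
  rw [← sum_div]
  gcongr
  have hunion : {f | ValidSeqFun f ∧ ∃ i ∈ t, P i f} = ⋃ i ∈ t, {f | ValidSeqFun f ∧ P i f} := by
    ext f
    simp
  rw [hunion]
  exact_mod_cast t.set_ncard_biUnion_le _

lemma ncard_validSeqFun_eq_card_filter (P : (Fin N → Sym2 (Fin n)) → Prop) :
    {f | ValidSeqFun f ∧ P f}.ncard =
      #{f : Fin N ↪ {e : Sym2 (Fin n) // ¬ e.IsDiag} | P fun i ↦ (f i).1} := by
  have hinj : Function.Injective
      fun (f : Fin N ↪ {e : Sym2 (Fin n) // ¬ e.IsDiag}) i ↦ (f i).1 := fun f g hfg ↦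
    DFunLike.ext _ _ fun i ↦ Subtype.ext (congrFun hfg i)
  rw [← Set.ncard_coe_finset, ← Set.ncard_image_of_injective _ hinj]
  congr 1
  ext f
  rw [coe_filter_univ]
  constructor
  · rintro ⟨⟨hf, hdiag⟩, hP⟩
    exact ⟨⟨fun i ↦ ⟨f i, hdiag i⟩, fun i j hij ↦ hf (congrArg Subtype.val hij)⟩, hP, rfl⟩
  · rintro ⟨g, hg, rfl⟩
    exact ⟨⟨fun i j hij ↦ g.injective (Subtype.ext hij), fun i ↦ (g i).2⟩, hg⟩

lemma onlineProb_eq_card_div_card (P : (Fin N → Sym2 (Fin n)) → Prop) :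
    onlineProb n N P =
      #{f : Fin N ↪ {e : Sym2 (Fin n) // ¬ e.IsDiag} | P fun i ↦ (f i).1} /
        Fintype.card (Fin N ↪ {e : Sym2 (Fin n) // ¬ e.IsDiag}) := by
  have htotal := ncard_validSeqFun_eq_card_filter (n := n) (N := N) fun _ ↦ True
  simp only [and_true, filter_true, card_univ] at htotal
  rw [onlineProb, ncard_validSeqFun_eq_card_filter, htotal]

lemma pow_sq_div_four_le_descFactorial_choose_two {k : ℕ} (hn : 2 * k + 2 ≤ n) :
    ((n : ℝ) ^ 2 / 4) ^ k ≤ (n.choose 2).descFactorial k := by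
  have hn' : (2 : ℝ) * k + 2 ≤ n := by exact_mod_cast hn
  have hbase : (n : ℝ) ^ 2 / 4 ≤ (n.choose 2 + 1 - k : ℕ) := by
    have hsub : (n.choose 2 : ℝ) + 1 ≤ (n.choose 2 + 1 - k : ℕ) + k := by
      exact_mod_cast (le_tsub_add : n.choose 2 + 1 ≤ _)
    rw [Nat.cast_choose_two] at hsub
    nlinarith
  calc ((n : ℝ) ^ 2 / 4) ^ k ≤ ((n.choose 2 + 1 - k : ℕ) : ℝ) ^ k := by gcongr
    _ ≤ (n.choose 2).descFactorial k := by exact_mod_cast Nat.pow_sub_le_descFactorial _ _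

lemma onlineProb_forall_mem_range_le {E : Finset (Sym2 (Fin n))} (hn : 2 * #E + 2 ≤ n) :
    onlineProb n N (fun f ↦ ∀ e ∈ E, e ∈ Set.range f) ≤ (4 * N / n ^ 2) ^ #E := by
  by_cases hE : ∀ e ∈ E, ¬ e.IsDiag
  · lift E to Finset {e : Sym2 (Fin n) // ¬ e.IsDiag} using hE
    rw [card_image_of_injective _ Subtype.val_injective] at hn ⊢
    have hcount := card_filter_forall_mem_range_mul_descFactorial_le (N := N) E
    rw [Sym2.card_subtype_not_diag, Fintype.card_fin] at hcount
    rw [onlineProb_eq_card_div_card]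
    simp only [Finset.mem_image, forall_exists_index, and_imp, forall_apply_eq_imp_iff₂,
      Set.mem_range, Subtype.coe_inj] at hcount ⊢
    set T := Fintype.card (Fin N ↪ {e : Sym2 (Fin n) // ¬ e.IsDiag})
    set A : Finset (Fin N ↪ {e : Sym2 (Fin n) // ¬ e.IsDiag}) := {f | ∀ x ∈ E, ∃ i, f i = x}
    have hn₀ : (0 : ℝ) < n := Nat.cast_pos.2 (by omega)
    refine div_le_of_le_mul₀ (by positivity) (by positivity) ?_
    calc (#A : ℝ) ≤ N ^ #E * T / (n ^ 2 / 4) ^ #E := by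
          rw [le_div_iff₀ (by positivity)]
          calc (#A : ℝ) * (n ^ 2 / 4) ^ #E ≤ #A * (n.choose 2).descFactorial #E := by
                gcongr
                exact pow_sq_div_four_le_descFactorial_choose_two hn
            _ ≤ N ^ #E * T := by exact_mod_cast hcount
      _ = (4 * N / n ^ 2) ^ #E * T := by
          rw [mul_div_right_comm, ← div_pow]
          congr 2
          field_simp
  · push Not at hE
    obtain ⟨e, he, hdiag⟩ := hE
    calc _ ≤ onlineProb n N (fun _ ↦ False) :=
          onlineProb_mono fun f hf hrange ↦ by
            obtain ⟨i, rfl⟩ := hrange e he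
            exact hf.2 i hdiag
      _ ≤ (4 * N / n ^ 2) ^ #E := by
          simp only [onlineProb, and_false, Set.ofPred_false, Set.ncard_empty, Nat.cast_zero,
            zero_div]
          positivity

end OnlineProb

section DenseSets

/-- Among the edges of `f`, at least `k` join vertices of some set of `s` vertices. -/
def HasDenseSet {n N : ℕ} (s k : ℕ) (f : Fin N → Sym2 (Fin n)) : Prop :=
  ∃ S ∈ powersetCard s (univ : Finset (Fin n)), ∃ E ∈ powersetCard k S.sym2,
    ∀ e ∈ E, e ∈ Set.range f

lemma onlineProb_hasDenseSet_le {n N s k : ℕ} (hn : 2 * k + 2 ≤ n) :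
    onlineProb n N (HasDenseSet s k) ≤
      n ^ s * (((s + 1).choose 2).choose k * (4 * N / n ^ 2) ^ k) := by
  have hedges (S : Finset (Fin n)) (hS : S ∈ powersetCard s univ) :
      onlineProb n N (fun f ↦ ∃ E ∈ powersetCard k S.sym2, ∀ e ∈ E, e ∈ Set.range f) ≤
        ((s + 1).choose 2).choose k * (4 * N / n ^ 2) ^ k := by
    refine (onlineProb_exists_mem_le _ _).trans ?_
    have hprob (E : Finset (Sym2 (Fin n))) (hE : E ∈ powersetCard k S.sym2) :
        onlineProb n N (fun f ↦ ∀ e ∈ E, e ∈ Set.range f) ≤ (4 * N / n ^ 2) ^ k := by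
      obtain ⟨-, rfl⟩ := mem_powersetCard.1 hE
      exact onlineProb_forall_mem_range_le hn
    simpa [card_sym2, (mem_powersetCard.1 hS).2] using sum_le_card_nsmul _ _ _ hprob
  have hcount : (#(powersetCard s (univ : Finset (Fin n))) : ℝ) ≤ n ^ s := by
    rw [card_powersetCard, card_fin]
    exact_mod_cast Nat.choose_le_pow n s
  calc onlineProb n N (HasDenseSet s k)
      ≤ ∑ S ∈ powersetCard s (univ : Finset (Fin n)),
          onlineProb n N (fun f ↦ ∃ E ∈ powersetCard k S.sym2, ∀ e ∈ E, e ∈ Set.range f) :=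
        onlineProb_exists_mem_le _ _
    _ ≤ #(powersetCard s (univ : Finset (Fin n))) *
          (((s + 1).choose 2).choose k * (4 * N / n ^ 2) ^ k) := by
        simpa using sum_le_card_nsmul _ _ _ hedges
    _ ≤ _ := by gcongr

theorem tendsto_onlineProb_hasDenseSet {s k : ℕ} (hk : k ≠ 0) {N : ℕ → ℕ}
    (hN : (fun n : ℕ ↦ (N n : ℝ)) =o[atTop] fun n : ℕ ↦ (n : ℝ) ^ (2 - s / k : ℝ)) :
    Tendsto (fun n ↦ onlineProb n (N n) (HasDenseSet s k)) atTop (nhds 0) := by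
  have hlim : Tendsto (fun n : ℕ ↦ ((s + 1).choose 2).choose k * 4 ^ k *
      ((N n : ℝ) / (n : ℝ) ^ (2 - s / k : ℝ)) ^ k) atTop (nhds 0) := by
    simpa [hk] using (hN.tendsto_div_nhds_zero.pow k).const_mul
      ((((s + 1).choose 2).choose k * 4 ^ k : ℕ) : ℝ)
  refine squeeze_zero' (.of_forall fun _ ↦ onlineProb_nonneg) ?_ hlim
  filter_upwards [eventually_ge_atTop (2 * k + 2)] with n hn
  have hn₀ : (0 : ℝ) < n := Nat.cast_pos.2 (by omega)
  have hpow : ((n : ℝ) ^ (2 - s / k : ℝ)) ^ k * n ^ s = (n ^ 2) ^ k := by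
    rw [← Real.rpow_mul_natCast hn₀.le, ← Real.rpow_natCast _ s, ← Real.rpow_add hn₀, ← pow_mul,
      ← Real.rpow_natCast]
    congr 1
    push_cast
    field_simp
    ring
  refine (onlineProb_hasDenseSet_le hn).trans_eq ?_
  rw [div_pow, div_pow, ← hpow, mul_pow]
  field_simp

lemma exists_edges_of_potential_nonpos {V : Type} {l : List (Sym2 V)} {S : Finset V}
    (hS : potential (boardOf l) S ≤ 0) :
    ∃ E ∈ powersetCard ((43 * #S) ⌈/⌉ 26) S.sym2, ∀ e ∈ E, e ∈ l := by
  rw [potential, card_interedges_self] at hS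
  have hle : (43 * #S) ⌈/⌉ 26 ≤ #{e ∈ S.sym2 | e ∈ (boardOf l).edgeSet} :=
    (ceilDiv_le_iff_le_mul (by norm_num)).2 (by omega)
  obtain ⟨E, hE, hcard⟩ := exists_subset_card_eq hle
  refine ⟨E, mem_powersetCard.2 ⟨hE.trans (filter_subset _ _), hcard⟩, fun e he ↦ ?_⟩
  have hboard := (mem_filter.1 (hE he)).2
  rw [boardOf, edgeSet_fromEdgeSet] at hboard
  exact hboard.1

lemma exists_hasDenseSet_of_onlineMonoCopy {n N : ℕ} {f : Fin N → Sym2 (Fin n)}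
    (hf : ValidSeqFun f) (h : OnlineMonoCopy bowtie (greedyStrategy bowtie) f) :
    ∃ s ∈ Icc 1 27, HasDenseSet s ((43 * s) ⌈/⌉ 26) f := by
  obtain ⟨S, hS, hcard, hpot⟩ :=
    exists_potential_nonpos_of_hasMonoCopy (List.nodup_ofFn.2 hf.1) h
  obtain ⟨E, hE, hEl⟩ := exists_edges_of_potential_nonpos hpot
  exact ⟨#S, mem_Icc.2 ⟨hS.card_pos, hcard⟩, S, mem_powersetCard.2 ⟨subset_univ S, rfl⟩, E, hE,
    fun e he ↦ List.mem_ofFn.1 (hEl e he)⟩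

lemma sixty_div_fortyThree_le_two_sub_div_ceilDiv {s : ℕ} (hs : s ≠ 0) :
    (60 / 43 : ℝ) ≤ 2 - s / ((43 * s) ⌈/⌉ 26 : ℕ) := by
  have hceil : (43 * s : ℝ) ≤ 26 * ((43 * s) ⌈/⌉ 26 : ℕ) := by
    exact_mod_cast le_smul_ceilDiv (b := 43 * s) (by norm_num : 0 < 26)
  have hs₀ : (0 : ℝ) < s := by positivity
  rw [le_sub_comm, div_le_iff₀ (by linarith)]
  linarith

lemma isBigO_natCast_rpow_rpow_of_le {a b : ℝ} (hab : a ≤ b) :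
    (fun n : ℕ ↦ (n : ℝ) ^ a) =O[atTop] fun n : ℕ ↦ (n : ℝ) ^ b := by
  refine .of_bound' ?_
  filter_upwards [eventually_ge_atTop 1] with n hn
  simp only [Real.norm_rpow_of_nonneg n.cast_nonneg, Real.norm_natCast]
  gcongr
  exact_mod_cast hn

end DenseSets

end OnlineAvoidance

open OnlineAvoidance

/-- lower bound for the bowtie. There is a sequence of online Painter
strategies with 2 colors such that for every `N : ℕ → ℕ` with `N(n) = o(n^(60/43))`, a.a.s.
the board after `N(n)` steps contains no monochromatic copy of the bowtie graph. -/
theorem statement10 :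
    ∃ π : (n : ℕ) → PainterStrategy (Fin n) 2,
      ∀ N : ℕ → ℕ,
        (fun n : ℕ => (N n : ℝ)) =o[atTop]
          (fun n : ℕ => (n : ℝ) ^ ((60 : ℝ) / 43)) →
        Tendsto (fun n : ℕ => onlineProb n (N n) (OnlineMonoCopy bowtie (π n)))
          atTop (nhds 0) := by
  refine ⟨fun _ ↦ greedyStrategy bowtie, fun N hN ↦ ?_⟩
  have hbound (n : ℕ) : onlineProb n (N n) (OnlineMonoCopy bowtie (greedyStrategy bowtie)) ≤
      ∑ s ∈ Finset.Icc 1 27, onlineProb n (N n) (HasDenseSet s ((43 * s) ⌈/⌉ 26)) :=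
    (onlineProb_mono fun _ ↦ exists_hasDenseSet_of_onlineMonoCopy).trans
      (onlineProb_exists_mem_le _ _)
  have hterm (s : ℕ) (hs : s ∈ Finset.Icc 1 27) :
      Tendsto (fun n ↦ onlineProb n (N n) (HasDenseSet s ((43 * s) ⌈/⌉ 26))) atTop (nhds 0) := by
    have hs₁ := (Finset.mem_Icc.1 hs).1
    have hceil := le_smul_ceilDiv (b := 43 * s) (by norm_num : 0 < 26)
    refine tendsto_onlineProb_hasDenseSet (by rw [smul_eq_mul] at hceil; omega) ?_
    exact hN.trans_isBigO <| isBigO_natCast_rpow_rpow_of_le <|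
      sixty_div_fortyThree_le_two_sub_div_ceilDiv (by omega)
  have hsum := tendsto_finsetSum _ hterm
  rw [Finset.sum_const_zero] at hsum
  exact squeeze_zero (fun _ ↦ onlineProb_nonneg) hbound hsum
end
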